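/- arXiv:0712.2940 — 4 statements merged into one kernel-verified Lean document; each statement's English description precedes it below -/
import Mathlib

section
/- Suppose ν ≥ 1 is an integer. If h : (−ν,∞) → ℝ is twice differentiable with bounded first and second derivatives and satisfies |h(x)| ≤ c·exp(a x) for every x > −ν, for some c > 0 and a < 1/2, then the Gamma Stein equation 2(x+ν) f'(x) − x f(x) = h(x) − E[h(F(ν))], x ∈ (−ν,∞), has a solution f which is bounded on (−ν,∞), differentiable, and such that ‖f‖_∞ ≤ √(2π/ν) ‖h‖_∞ and ‖f'‖_∞ ≤ √(2π/ν) ‖h'‖_∞. -/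
open MeasureTheory ProbabilityTheory Real Set

/-- The law of the centered Gamma random variable `F(ν) = 2G(ν/2) − ν`, where `G(ν/2)` has the
Gamma distribution with shape `ν/2` and rate `1`. -/
noncomputable def centeredGammaLaw (ν : ℝ) : Measure ℝ :=
  (gammaMeasure (ν / 2) 1).map (fun x => 2 * x - ν)

open Filter Topology

theorem le_of_sq_le_sq_aux {a b : ℝ} (h : a ^ 2 ≤ b ^ 2) (hb : 0 ≤ b) : a ≤ b :=
  le_of_abs_le (abs_le_of_sq_le_sq h hb)

theorem cmpL (D D' : ℝ → ℝ) (T : ℝ)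
    (hd : ∀ s, 0 < s → s ≤ T → HasDerivAt D (D' s) s)
    (hn : ∀ s, 0 < s → s ≤ T → 0 ≤ D' s)
    (hl : Tendsto D (𝓝[>] 0) (𝓝 0)) (t : ℝ) (ht : 0 < t) (htT : t ≤ T) : 0 ≤ D t := by
  have mono : MonotoneOn D (Ioc 0 T) := by
    refine monotoneOn_of_hasDerivWithinAt_nonneg (convex_Ioc 0 T) (f' := D')
      (fun s hs => (hd s hs.1 hs.2).continuousAt.continuousWithinAt) ?_ ?_
    · intro s hs
      have hs' := interior_subset hs
      exact (hd s hs'.1 hs'.2).hasDerivWithinAt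
    · intro s hs
      have hs' := interior_subset hs
      exact hn s hs'.1 hs'.2
  refine le_of_tendsto hl ?_
  filter_upwards [Ioo_mem_nhdsGT ht] with s hs
  exact mono ⟨hs.1, hs.2.le.trans htT⟩ ⟨ht, htT⟩ hs.2.le

theorem cmpR (D D' : ℝ → ℝ) (T : ℝ)
    (hd : ∀ s, T ≤ s → HasDerivAt D (D' s) s)
    (hn : ∀ s, T ≤ s → D' s ≤ 0)
    (hl : Tendsto D atTop (𝓝 0)) (t : ℝ) (ht : T ≤ t) : 0 ≤ D t := by
  have mono : AntitoneOn D (Ici T) := by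
    refine antitoneOn_of_hasDerivWithinAt_nonpos (convex_Ici T) (f' := D')
      (fun s hs => (hd s hs).continuousAt.continuousWithinAt) ?_ ?_
    · intro s hs
      have hs' := interior_subset hs
      exact (hd s hs').hasDerivWithinAt
    · intro s hs
      have hs' := interior_subset hs
      exact hn s hs'
  refine le_of_tendsto hl ?_
  filter_upwards [Ici_mem_atTop t] with s hs
  exact mono ht (le_trans ht hs) hs

/-- Abstract data of a chi-square density `p`, distribution function `P` and `q = 2 t p`. -/
structure GD (ν : ℝ) (p q P : ℝ → ℝ) : Prop where
  hν : 0 < ν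
  pp : ∀ t, 0 < t → 0 < p t
  qe : ∀ t, 0 < t → q t = 2 * t * p t
  dq : ∀ t, 0 < t → HasDerivAt q ((ν - t) * p t) t
  dP : ∀ t, 0 < t → HasDerivAt P (p t) t
  P0 : Tendsto P (𝓝[>] 0) (𝓝 0)
  P1 : Tendsto P atTop (𝓝 1)
  q0 : Tendsto q (𝓝[>] 0) (𝓝 0)
  q1 : Tendsto (fun t => t * q t) atTop (𝓝 0)

namespace GD

variable {ν : ℝ} {p q P : ℝ → ℝ}

theorem lim0 (H : GD ν p q P) (Φ : ℝ → ℝ → ℝ → ℝ)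
    (hΦ : ContinuousAt (fun x : ℝ × ℝ × ℝ => Φ x.1 x.2.1 x.2.2) (0, 0, 0))
    (h0 : Φ 0 0 0 = 0) :
    Tendsto (fun t => Φ t (P t) (q t)) (𝓝[>] 0) (𝓝 0) := by
  have h1 : Tendsto (fun t : ℝ => (t, P t, q t)) (𝓝[>] 0) (𝓝 ((0:ℝ), (0:ℝ), (0:ℝ))) := by
    refine Tendsto.prodMk_nhds ?_ (Tendsto.prodMk_nhds H.P0 H.q0)
    exact tendsto_id.mono_left nhdsWithin_le_nhds
  have := hΦ.tendsto.comp h1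
  simp only [h0] at this
  exact this

theorem qpos (H : GD ν p q P) {t : ℝ} (ht : 0 < t) : 0 < q t := by
  rw [H.qe t ht]; have := H.pp t ht; positivity

theorem qinf (H : GD ν p q P) : Tendsto q atTop (𝓝 0) := by
  refine squeeze_zero' ?_ ?_ H.q1
  · filter_upwards [eventually_gt_atTop 0] with t ht using (H.qpos ht).le
  · filter_upwards [eventually_ge_atTop 1] with t ht
    have := H.qpos (lt_of_lt_of_le one_pos ht)
    nlinarith

theorem mqinf (H : GD ν p q P) : Tendsto (fun t => (t - ν) * q t) atTop (𝓝 0) := by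
  have := H.q1.sub (H.qinf.const_mul ν)
  simp only [mul_zero, sub_zero] at this
  refine this.congr fun t => by ring

theorem Qinf (H : GD ν p q P) : Tendsto (fun t => 1 - P t) atTop (𝓝 0) := by
  simpa using H.P1.const_sub 1

theorem dQ (H : GD ν p q P) {t : ℝ} (ht : 0 < t) : HasDerivAt (fun t => 1 - P t) (-p t) t :=
  (H.dP t ht).const_sub 1

theorem Pnn (H : GD ν p q P) {t : ℝ} (ht : 0 < t) : 0 ≤ P t :=
  cmpL P p t (fun s hs _ => H.dP s hs) (fun s hs _ => (H.pp s hs).le) H.P0 t ht le_rfl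

theorem Qnn (H : GD ν p q P) {t : ℝ} (ht : 0 < t) : 0 ≤ 1 - P t :=
  cmpR (fun t => 1 - P t) (fun s => -p s) t (fun s hs => H.dQ (ht.trans_le hs))
    (fun s hs => by have := H.pp s (ht.trans_le hs); linarith) H.Qinf t le_rfl

theorem Ann (H : GD ν p q P) {t : ℝ} (ht : 0 < t) : 0 ≤ q t - (t - ν) * (1 - P t) := by
  refine cmpR (fun s => q s - (t - ν) * (1 - P s)) (fun s => (t - s) * p s) t ?_ ?_ ?_ t le_rfl
  · intro s hs
    have h0 := ht.trans_le hs
    refine ((H.dq s h0).sub ((H.dQ h0).const_mul (t - ν))).congr_deriv ?_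
    ring
  · intro s hs
    have := H.pp s (ht.trans_le hs)
    nlinarith
  · simpa using H.qinf.sub (H.Qinf.const_mul (t - ν))

theorem mQinf (H : GD ν p q P) : Tendsto (fun t => (t - ν) * (1 - P t)) atTop (𝓝 0) := by
  refine squeeze_zero' ?_ ?_ H.qinf
  · filter_upwards [eventually_gt_atTop 0, eventually_gt_atTop ν] with t ht ht'
    exact mul_nonneg (by linarith) (H.Qnn ht)
  · filter_upwards [eventually_gt_atTop 0] with t ht
    have := H.Ann ht
    linarith

theorem mmQinf (H : GD ν p q P) : Tendsto (fun t => (t - ν) ^ 2 * (1 - P t)) atTop (𝓝 0) := by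
  refine squeeze_zero' ?_ ?_ H.mqinf
  · filter_upwards [eventually_gt_atTop 0] with t ht
    exact mul_nonneg (by positivity) (H.Qnn ht)
  · filter_upwards [eventually_gt_atTop 0, eventually_gt_atTop ν] with t ht ht'
    have := H.Ann ht
    nlinarith

theorem dm (t : ℝ) : HasDerivAt (fun t : ℝ => t - ν) 1 t := (hasDerivAt_id t).sub_const ν

theorem dA (H : GD ν p q P) {t : ℝ} (ht : 0 < t) :
    HasDerivAt (fun t => q t - (t - ν) * (1 - P t)) (-(1 - P t)) t := by
  refine ((H.dq t ht).sub ((dm t).mul (H.dQ ht))).congr_deriv ?_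
  ring

theorem dB (H : GD ν p q P) {t : ℝ} (ht : 0 < t) :
    HasDerivAt (fun t => q t + (t - ν) * P t) (P t) t := by
  refine ((H.dq t ht).add ((dm t).mul (H.dP t ht))).congr_deriv ?_
  ring

theorem Ainf (H : GD ν p q P) :
    Tendsto (fun t => q t - (t - ν) * (1 - P t)) atTop (𝓝 0) := by
  simpa using H.qinf.sub H.mQinf

theorem B0 (H : GD ν p q P) :
    Tendsto (fun t => q t + (t - ν) * P t) (𝓝[>] 0) (𝓝 0) :=
  H.lim0 (fun t P q => q + (t - ν) * P) (by fun_prop) (by simp)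

theorem Bnn (H : GD ν p q P) {t : ℝ} (ht : 0 < t) : 0 ≤ q t + (t - ν) * P t :=
  cmpL _ P t (fun _ hs _ => H.dB hs) (fun _ hs _ => H.Pnn hs) H.B0 t ht le_rfl

theorem Ale (H : GD ν p q P) {t : ℝ} (ht : 0 < t) : q t - (t - ν) * (1 - P t) ≤ ν := by
  have := cmpL (fun t => ν - (q t - (t - ν) * (1 - P t))) (fun t => 1 - P t) t
    (fun s hs _ => ((H.dA hs).const_sub ν).congr_deriv (by ring)) (fun s hs _ => H.Qnn hs)
    (H.lim0 (fun t P q => ν - (q - (t - ν) * (1 - P))) (by fun_prop) (by simp)) t ht le_rfl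
  linarith

/-- lower bound for `P`. -/
theorem lowP (H : GD ν p q P) {t : ℝ} (ht : 0 < t) (htν : t ≤ ν) :
    (q t + (t - ν) * P t) * ((t - ν) ^ 2 + 2 * t) ≤ 2 * t * q t := by
  have hpos : ∀ s : ℝ, 0 < s → 0 < (s - ν) ^ 2 + 2 * s := fun s hs => by positivity
  have key : 0 ≤ P t + q t * (t - ν) / ((t - ν) ^ 2 + 2 * t) := by
    refine cmpL (fun s => P s + q s * (s - ν) / ((s - ν) ^ 2 + 2 * s))
      (fun s => (8 * s ^ 2 + 4 * s * (ν - s)) * p s / ((s - ν) ^ 2 + 2 * s) ^ 2) ν ?_ ?_ ?_ t ht htν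
    · intro s hs _
      have := hpos s hs
      refine ((H.dP s hs).add (((H.dq s hs).mul (dm s)).div
        (((dm s).pow 2).add ((hasDerivAt_id s).const_mul 2)) this.ne')).congr_deriv ?_
      simp only [id, Pi.mul_apply, Pi.add_apply, Pi.pow_apply]
      rw [H.qe s hs]
      field_simp
      push_cast
      ring
    · intro s hs hs'
      have := H.pp s hs
      have h2 : 0 ≤ ν - s := by linarith
      positivity
    · refine H.lim0 (fun t P q => P + q * (t - ν) / ((t - ν) ^ 2 + 2 * t)) ?_ (by simp)
      have := H.hν.ne'
      refine ContinuousAt.add (by fun_prop) (ContinuousAt.div (by fun_prop) (by fun_prop) ?_)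
      simpa using this
  have h1 := hpos t ht
  have e : P t + q t * (t - ν) / ((t - ν) ^ 2 + 2 * t)
      = (P t * ((t - ν) ^ 2 + 2 * t) + q t * (t - ν)) / ((t - ν) ^ 2 + 2 * t) := by
    field_simp
  rw [e] at key
  have k2 : 0 ≤ P t * ((t - ν) ^ 2 + 2 * t) + q t * (t - ν) := by
    by_contra hc
    push Not at hc
    exact absurd key (not_le.mpr (div_neg_of_neg_of_pos hc h1))
  nlinarith

/-- lower bound for `1 - P`. -/
theorem lowQ (H : GD ν p q P) {t : ℝ} (ht : ν ≤ t) :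
    (q t - (t - ν) * (1 - P t)) * ((t - ν) ^ 2 + 2 * t) ≤ 2 * t * q t := by
  have hpos : ∀ s : ℝ, 0 < s → 0 < (s - ν) ^ 2 + 2 * s := fun s hs => by positivity
  have t0 := H.hν.trans_le ht
  have key : 0 ≤ (1 - P t) - q t * (t - ν) / ((t - ν) ^ 2 + 2 * t) := by
    refine cmpR (fun s => (1 - P s) - q s * (s - ν) / ((s - ν) ^ 2 + 2 * s))
      (fun s => -((4 * s ^ 2 + 4 * s * ν) * p s / ((s - ν) ^ 2 + 2 * s) ^ 2)) ν ?_ ?_ ?_ t ht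
    · intro s hs
      have hs := H.hν.trans_le hs
      have := hpos s hs
      refine ((H.dQ hs).sub (((H.dq s hs).mul (dm s)).div
        (((dm s).pow 2).add ((hasDerivAt_id s).const_mul 2)) this.ne')).congr_deriv ?_
      simp only [id, Pi.mul_apply, Pi.add_apply, Pi.pow_apply]
      rw [H.qe s hs]
      field_simp
      push_cast
      ring
    · intro s hs
      have hs := H.hν.trans_le hs
      have := H.pp s hs
      have h2 := H.hν
      rw [neg_nonpos]
      positivity
    · have : Tendsto (fun s => q s * (s - ν) / ((s - ν) ^ 2 + 2 * s)) atTop (𝓝 0) := by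
        refine squeeze_zero' ?_ ?_ H.qinf
        · filter_upwards [eventually_ge_atTop ν] with s hs
          have h1 := H.hν.trans_le hs
          have := H.qpos h1
          have h2 : 0 ≤ s - ν := by linarith
          positivity
        · filter_upwards [eventually_ge_atTop ν] with s hs
          have h1 := H.hν.trans_le hs
          have := H.qpos h1
          rw [div_le_iff₀ (hpos s h1)]
          have := H.hν
          apply mul_le_mul_of_nonneg_left _ (H.qpos h1).le
          nlinarith [sq_nonneg (s - ν)]
      simpa using H.Qinf.sub this
  have h1 := hpos t t0
  have k2 : q t * (t - ν) ≤ (1 - P t) * ((t - ν) ^ 2 + 2 * t) := by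
    rw [← div_le_iff₀ h1]
    linarith
  nlinarith

theorem dV (H : GD ν p q P) {t : ℝ} (ht : 0 < t) :
    HasDerivAt (fun t => ((t - ν) ^ 2 + 2 * ν) * P t + ((t - ν) - 2) * q t)
      (2 * (q t + (t - ν) * P t)) t := by
  refine (((((dm t).pow 2).add_const (2 * ν)).mul (H.dP t ht)).add
    (((dm t).sub_const 2).mul (H.dq t ht))).congr_deriv ?_
  simp only [Pi.pow_apply]
  have := H.qe t ht
  push_cast
  linear_combination -this

theorem dW (H : GD ν p q P) {t : ℝ} (ht : 0 < t) :
    HasDerivAt (fun t => ((t - ν) ^ 2 + 2 * ν) * (1 - P t) - ((t - ν) - 2) * q t)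
      (-2 * (q t - (t - ν) * (1 - P t))) t := by
  refine (((((dm t).pow 2).add_const (2 * ν)).mul (H.dQ ht)).sub
    (((dm t).sub_const 2).mul (H.dq t ht))).congr_deriv ?_
  simp only [Pi.pow_apply]
  have := H.qe t ht
  push_cast
  linear_combination this

theorem V0 (H : GD ν p q P) : Tendsto
    (fun t => ((t - ν) ^ 2 + 2 * ν) * P t + ((t - ν) - 2) * q t) (𝓝[>] 0) (𝓝 0) :=
  H.lim0 (fun t P q => ((t - ν) ^ 2 + 2 * ν) * P + ((t - ν) - 2) * q) (by fun_prop) (by simp)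

theorem Winf (H : GD ν p q P) : Tendsto
    (fun t => ((t - ν) ^ 2 + 2 * ν) * (1 - P t) - ((t - ν) - 2) * q t) atTop (𝓝 0) := by
  have := (H.mmQinf.add (H.Qinf.const_mul (2 * ν))).sub (H.mqinf.sub (H.qinf.const_mul 2))
  simp only [mul_zero, add_zero, sub_zero] at this
  refine this.congr fun t => by ring

theorem BsqV (H : GD ν p q P) {t : ℝ} (ht : 0 < t) : (q t + (t - ν) * P t) ^ 2
    ≤ ((t - ν) ^ 2 + 2 * ν) * P t + ((t - ν) - 2) * q t := by
  have := cmpL (fun t => (((t - ν) ^ 2 + 2 * ν) * P t + ((t - ν) - 2) * q t)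
      - (q t + (t - ν) * P t) ^ 2) (fun t => 2 * (q t + (t - ν) * P t) * (1 - P t)) t
    (fun s hs _ => ((H.dV hs).sub ((H.dB hs).pow 2)).congr_deriv (by push_cast; ring))
    (fun s hs _ => by have := H.Bnn hs; have := H.Qnn hs; positivity)
    (by simpa using H.V0.sub (H.B0.pow 2)) t ht le_rfl
  linarith

theorem AsqW (H : GD ν p q P) {t : ℝ} (ht : 0 < t) : (q t - (t - ν) * (1 - P t)) ^ 2
    ≤ ((t - ν) ^ 2 + 2 * ν) * (1 - P t) - ((t - ν) - 2) * q t := by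
  have := cmpR (fun t => (((t - ν) ^ 2 + 2 * ν) * (1 - P t) - ((t - ν) - 2) * q t)
      - (q t - (t - ν) * (1 - P t)) ^ 2)
      (fun t => -(2 * (q t - (t - ν) * (1 - P t)) * P t)) t
    (fun s hs => ((H.dW (ht.trans_le hs)).sub ((H.dA (ht.trans_le hs)).pow 2)).congr_deriv
      (by push_cast; ring))
    (fun s hs => by
      have := H.Ann (ht.trans_le hs); have := H.Pnn (ht.trans_le hs)
      rw [neg_nonpos]; positivity)
    (by simpa using H.Winf.sub (H.Ainf.pow 2)) t le_rfl
  linarith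

theorem Bsq (H : GD ν p q P) {t : ℝ} (ht : 0 < t) :
    (q t + (t - ν) * P t) ^ 2 ≤ (t - ν) ^ 2 + 2 * ν := by
  nlinarith [H.BsqV ht, H.AsqW ht, sq_nonneg (q t - (t - ν) * (1 - P t))]

theorem Asq (H : GD ν p q P) {t : ℝ} (ht : 0 < t) :
    (q t - (t - ν) * (1 - P t)) ^ 2 ≤ (t - ν) ^ 2 + 2 * ν := by
  nlinarith [H.BsqV ht, H.AsqW ht, sq_nonneg (q t + (t - ν) * P t)]

/-- main estimate for the derivative. -/
theorem AB (H : GD ν p q P) (hν : ν = 1 ∨ 2 ≤ ν) {t : ℝ} (ht : 0 < t) :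
    (q t - (t - ν) * (1 - P t)) * (q t + (t - ν) * P t) ≤ t * q t * √(2 * π / ν) := by
  have hν0 := H.hν
  have hA := H.Ann ht
  have hB := H.Bnn ht
  have hA2 := H.Asq ht
  have hB2 := H.Bsq ht
  have hAle := H.Ale ht
  have hq := H.qpos ht
  have hπ := Real.pi_gt_three
  have hr0 : 0 ≤ √(2 * π / ν) := Real.sqrt_nonneg _
  have hr : √(2 * π / ν) ^ 2 = 2 * π / ν := Real.sq_sqrt (by positivity)
  set A := q t - (t - ν) * (1 - P t)
  set B := q t + (t - ν) * P t
  set r := √(2 * π / ν)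
  have hr2 : 6 ≤ r ^ 2 * ν := by
    rw [hr]; field_simp; linarith
  rcases le_total ν t with h | h
  · have h1 := H.lowQ h
    change A * ((t - ν) ^ 2 + 2 * t) ≤ 2 * t * q t at h1
    -- 2 * B ≤ r * ((t-ν)^2 + 2 t)
    have h2 : 2 * B ≤ r * ((t - ν) ^ 2 + 2 * t) := by
      apply le_of_sq_le_sq_aux _ (by positivity)
      have h3 : 4 * ((t - ν) ^ 2 + 2 * ν) ≤ r ^ 2 * ((t - ν) ^ 2 + 2 * ν) ^ 2 := by
        have h4 : 4 ≤ r ^ 2 * ((t - ν) ^ 2 + 2 * ν) := by nlinarith [sq_nonneg (r * (t - ν))]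
        have h5 : 0 ≤ (t - ν) ^ 2 + 2 * ν := by positivity
        nlinarith
      have h6 : ((t - ν) ^ 2 + 2 * ν) ^ 2 ≤ ((t - ν) ^ 2 + 2 * t) ^ 2 := by gcongr
      have h7 := mul_le_mul_of_nonneg_left h6 (sq_nonneg r)
      nlinarith
    have h5 : 0 < (t - ν) ^ 2 + 2 * t := by positivity
    have h8 : A * (2 * B) ≤ A * (r * ((t - ν) ^ 2 + 2 * t)) := mul_le_mul_of_nonneg_left h2 hA
    have h9 := mul_le_mul_of_nonneg_left h1 hr0
    nlinarith
  · have h1 := H.lowP ht h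
    change B * ((t - ν) ^ 2 + 2 * t) ≤ 2 * t * q t at h1
    have h2 : 2 * A ≤ r * ((t - ν) ^ 2 + 2 * t) := by
      rcases hν with rfl | hν
      · have : 2 ≤ r := by nlinarith
        nlinarith [mul_nonneg hr0 (sq_nonneg t)]
      · apply le_of_sq_le_sq_aux _ (by positivity)
        have h3 : 4 * ν * ((t - ν) ^ 2 + 2 * ν) ≤ 6 * ((t - ν) ^ 2 + 2 * t) ^ 2 := by
          obtain ⟨n, rfl⟩ : ∃ n, t = ν - n := ⟨ν - t, by ring⟩
          obtain ⟨w, rfl⟩ : ∃ w, ν = 2 + w / 2 := ⟨2 * (ν - 2), by ring⟩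
          have hw : 0 ≤ w := by linarith
          have hn : 0 ≤ n := by linarith
          have c0 : 0 ≤ 3 * n ^ 2 * (n - 2) ^ 2 + (20 * n ^ 2 - 48 * n + 32) := by
            have : 0 ≤ 20 * n ^ 2 - 48 * n + 32 := by nlinarith [sq_nonneg (n - 1.2)]
            positivity
          have c1 : 0 ≤ w * (5 * n ^ 2 - 12 * n + 16) :=
            mul_nonneg hw (by nlinarith [sq_nonneg (n - 1.2)])
          nlinarith [sq_nonneg w]
        have h4 : 6 * ((t - ν) ^ 2 + 2 * t) ^ 2 ≤ (r ^ 2 * ν) * ((t - ν) ^ 2 + 2 * t) ^ 2 := by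
          gcongr
        have h5 : ν * (2 * A) ^ 2 ≤ ν * (r * ((t - ν) ^ 2 + 2 * t)) ^ 2 := by
          have := mul_le_mul_of_nonneg_left hA2 hν0.le
          nlinarith
        exact le_of_mul_le_mul_left h5 hν0
    have h5 : 0 < (t - ν) ^ 2 + 2 * t := by positivity
    have h8 : B * (2 * A) ≤ B * (r * ((t - ν) ^ 2 + 2 * t)) := mul_le_mul_of_nonneg_left h2 hB
    have h9 := mul_le_mul_of_nonneg_left h1 hr0
    nlinarith

theorem PQsmall (H : GD ν p q P) (hν : ν ≤ 2) {t : ℝ} (ht : 0 < t) :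
    ν * (P t * (1 - P t)) ≤ q t := by
  have hν0 := H.hν
  have e1 : ∀ s : ℝ, HasDerivAt (fun s : ℝ => Real.exp (s / 2)) (Real.exp (s / 2) * (1 / 2)) s :=
    fun s => ((hasDerivAt_id s).div_const 2).exp
  have hP : ν * P t ≤ q t * Real.exp (t / 2) := by
    have := cmpL (fun t => q t * Real.exp (t / 2) - ν * P t)
      (fun s => ν * p s * (Real.exp (s / 2) - 1)) t
      (fun s hs _ => (((H.dq s hs).mul (e1 s)).sub ((H.dP s hs).const_mul ν)).congr_deriv
        (by rw [H.qe s hs]; ring))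
      (fun s hs _ => by
        have := H.pp s hs
        have h1 : 0 ≤ Real.exp (s / 2) - 1 := by
          have := Real.add_one_le_exp (s / 2); linarith
        positivity)
      (H.lim0 (fun t P q => q * Real.exp (t / 2) - ν * P) (by fun_prop) (by simp)) t ht le_rfl
    linarith
  have hQp : ∀ s : ℝ, 0 < s → 1 - P s ≤ 2 * p s := by
    intro s hs
    have := cmpR (fun s => q s / s - (1 - P s)) (fun s => (ν - 2) * p s / s) s
      (fun u hu => by
        have hu := hs.trans_le hu
        refine (((H.dq u hu).div (hasDerivAt_id u) hu.ne').sub (H.dQ hu)).congr_deriv ?_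
        simp only [id]
        rw [H.qe u hu]
        field_simp
        ring)
      (fun u hu => by
        have hu := hs.trans_le hu
        have := H.pp u hu
        apply div_nonpos_of_nonpos_of_nonneg _ hu.le
        nlinarith)
      (by
        have h1 : Tendsto (fun s => q s / s) atTop (𝓝 0) := H.qinf.div_atTop tendsto_id
        simpa using h1.sub H.Qinf) s le_rfl
    rw [H.qe s hs] at this
    field_simp at this
    linarith
  have hQ : (1 - P t) * Real.exp (t / 2) ≤ 1 := by
    have := cmpL (fun t => 1 - (1 - P t) * Real.exp (t / 2))
      (fun s => Real.exp (s / 2) * (2 * p s - (1 - P s)) / 2) t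
      (fun s hs _ => (((H.dQ hs).mul (e1 s)).const_sub 1).congr_deriv (by ring))
      (fun s hs _ => by
        have := hQp s hs
        have h1 : 0 ≤ 2 * p s - (1 - P s) := by linarith
        positivity)
      (H.lim0 (fun t P q => 1 - (1 - P) * Real.exp (t / 2)) (by fun_prop) (by simp)) t ht le_rfl
    linarith
  have h1 := mul_le_mul_of_nonneg_right hP (H.Qnn ht)
  have h2 := mul_le_mul_of_nonneg_left hQ (H.qpos ht).le
  nlinarith

theorem PleL (H : GD ν p q P) (hν : 1 < ν) {t : ℝ} (ht : 0 < t) (htν : t ≤ ν) :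
    √(ν - 1) * P t ≤ q t := by
  set α := √(ν - 1)
  have hα : 0 < α := Real.sqrt_pos.mpr (by linarith)
  have hα2 : α ^ 2 = ν - 1 := Real.sq_sqrt (by linarith)
  have dy : ∀ s : ℝ, HasDerivAt (fun s : ℝ => α - (s - ν) / 2) (-(1 / 2)) s :=
    fun s => ((dm s).div_const 2).const_sub α
  have key := cmpL (fun s => q s / (α - (s - ν) / 2) - P s)
    (fun s => p s * (1 - (ν - s) / 2) ^ 2 / (α - (s - ν) / 2) ^ 2) ν
    (fun s hs hs' => by
      have h0 : 0 < α - (s - ν) / 2 := by linarith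
      refine (((H.dq s hs).div (dy s) h0.ne').sub (H.dP s hs)).congr_deriv ?_
      rw [H.qe s hs, div_sub' (pow_ne_zero 2 h0.ne')]
      congr 1
      linear_combination (-p s) * hα2)
    (fun s hs hs' => by
      have := H.pp s hs
      positivity)
    (by
      refine H.lim0 (fun t P q => q / (α - (t - ν) / 2) - P) ?_ (by simp)
      refine ContinuousAt.sub (ContinuousAt.div (by fun_prop) (by fun_prop) ?_) (by fun_prop)
      simp only
      have : 0 < α - (0 - ν) / 2 := by linarith
      exact this.ne') t ht htν
  have h0 : 0 < α - (t - ν) / 2 := by linarith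
  have h1 : P t * (α - (t - ν) / 2) ≤ q t := by
    rw [← le_div_iff₀ h0]; linarith
  nlinarith [H.Pnn ht]

theorem QleR (H : GD ν p q P) {t : ℝ} (htν : ν ≤ t) :
    √ν * (1 - P t) ≤ q t := by
  have hν0 := H.hν
  set α := √ν
  have hα : 0 < α := Real.sqrt_pos.mpr (by linarith)
  have hα2 : α ^ 2 = ν := Real.sq_sqrt (by linarith)
  have dy : ∀ s : ℝ, HasDerivAt (fun s : ℝ => α + (s - ν) / 2) (1 / 2) s :=
    fun s => ((dm s).div_const 2).const_add α
  have key := cmpR (fun s => q s / (α + (s - ν) / 2) - (1 - P s))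
    (fun s => - (p s * ((s - ν) + (s - ν) ^ 2 / 4) / (α + (s - ν) / 2) ^ 2)) ν
    (fun s hs' => by
      have hs := hν0.trans_le hs'
      have h0 : 0 < α + (s - ν) / 2 := by linarith
      refine (((H.dq s hs).div (dy s) h0.ne').sub (H.dQ hs)).congr_deriv ?_
      rw [H.qe s hs, div_sub' (pow_ne_zero 2 h0.ne'), ← neg_div]
      congr 1
      linear_combination (p s) * hα2)
    (fun s hs' => by
      have hs := hν0.trans_le hs'
      have := H.pp s hs
      have h2 : 0 ≤ s - ν := by linarith
      rw [neg_nonpos]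
      positivity)
    (by
      have h1 : Tendsto (fun s => q s / (α + (s - ν) / 2)) atTop (𝓝 0) := by
        refine H.qinf.div_atTop ?_
        refine tendsto_atTop_add_const_left _ _ (Tendsto.atTop_div_const two_pos ?_)
        exact tendsto_atTop_add_const_right _ _ tendsto_id
      simpa using h1.sub H.Qinf) t htν
  have h0 : 0 < α + (t - ν) / 2 := by linarith
  have h1 : (1 - P t) * (α + (t - ν) / 2) ≤ q t := by
    rw [← le_div_iff₀ h0]; linarith
  nlinarith [H.Qnn (hν0.trans_le htν)]

theorem PQ (H : GD ν p q P) (hν : ν = 1 ∨ ν = 2 ∨ 3 ≤ ν) {t : ℝ} (ht : 0 < t) :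
    2 * (P t * (1 - P t)) ≤ √(2 * π / ν) * q t := by
  have hν0 := H.hν
  have hP := H.Pnn ht
  have hQ := H.Qnn ht
  have hq := H.qpos ht
  have hπ := Real.pi_gt_three
  have hr0 : 0 ≤ √(2 * π / ν) := Real.sqrt_nonneg _
  have hr : √(2 * π / ν) ^ 2 = 2 * π / ν := Real.sq_sqrt (by positivity)
  set r := √(2 * π / ν)
  have hr2 : 6 ≤ r ^ 2 * ν := by
    rw [hr]; field_simp; linarith
  by_cases h3 : 3 ≤ ν
  · rcases le_total ν t with h | h
    · have h1 := H.QleR h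
      have h2 : 2 ≤ r * √ν := by
        apply le_of_sq_le_sq_aux _ (by positivity)
        rw [mul_pow, Real.sq_sqrt hν0.le]; linarith
      have h4 : 2 * (1 - P t) ≤ r * q t := by nlinarith
      nlinarith
    · have h1 := H.PleL (by linarith) ht h
      have h2 : 2 ≤ r * √(ν - 1) := by
        apply le_of_sq_le_sq_aux _ (by positivity)
        rw [mul_pow, Real.sq_sqrt (show (0:ℝ) ≤ ν - 1 by linarith)]
        nlinarith [mul_nonneg (sq_nonneg r) (sub_nonneg.mpr h3)]
      have h4 : 2 * P t ≤ r * q t := by nlinarith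
      nlinarith
  · have h2 : ν ≤ 2 ∧ 1 ≤ ν := by rcases hν with rfl | rfl | h <;> [norm_num; norm_num; exact absurd h h3]
    have h1 := H.PQsmall h2.1 ht
    have h4 : 2 ≤ r * ν := by
      apply le_of_sq_le_sq_aux _ (by positivity)
      nlinarith
    nlinarith [mul_nonneg hP hQ]

end GD

namespace GD

variable {ν : ℝ} {p q P : ℝ → ℝ}

theorem lipBound (k k' : ℝ → ℝ) (dk : ∀ t, 0 < t → HasDerivAt k (k' t) t) (M : ℝ)
    (hM : ∀ t, 0 < t → |k' t| ≤ M) (t : ℝ) (ht : 0 < t) : |k t| ≤ (|k 1| + M) + M * t := by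
  have h1 : ‖k t - k 1‖ ≤ M * ‖t - 1‖ :=
    (convex_Ioi (0:ℝ)).norm_image_sub_le_of_norm_hasDerivWithin_le (f' := k')
      (fun s hs => (dk s hs).hasDerivWithinAt) (fun s hs => hM s hs)
      (mem_Ioi.mpr one_pos) (mem_Ioi.mpr ht)
  have hM0 : 0 ≤ M := (abs_nonneg _).trans (hM 1 one_pos)
  rw [Real.norm_eq_abs, Real.norm_eq_abs] at h1
  have h2 : |t - 1| ≤ t + 1 := abs_le.mpr ⟨by linarith, by linarith⟩
  have h3 : |k t| ≤ |k t - k 1| + |k 1| := by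
    have := abs_add_le (k t - k 1) (k 1)
    simpa using this
  nlinarith

theorem X1 (H : GD ν p q P) (k k' F : ℝ → ℝ) (E : ℝ)
    (dk : ∀ t, 0 < t → HasDerivAt k (k' t) t)
    (dF : ∀ t, 0 < t → HasDerivAt F ((k t - E) * p t) t)
    (F0 : Tendsto F (𝓝[>] 0) (𝓝 0)) (C : ℝ) (hC : ∀ t, 0 < t → |k' t| ≤ C) (t : ℝ) (ht : 0 < t) :
    |(k t - E) * P t - F t| ≤ C * (q t + (t - ν) * P t) := by
  have hKP : Tendsto (fun t => (k t - E) * P t) (𝓝[>] 0) (𝓝 0) := by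
    have hb := lipBound k k' dk C hC
    have h1 := H.lim0 (fun t P q => ((|k 1| + C) + C * t + |E|) * P) (by fun_prop) (by simp)
    refine squeeze_zero_norm' ?_ h1
    filter_upwards [self_mem_nhdsWithin] with s hs
    have hs : 0 < s := hs
    rw [norm_mul, Real.norm_eq_abs, Real.norm_eq_abs, abs_of_nonneg (H.Pnn hs)]
    refine mul_le_mul_of_nonneg_right ?_ (H.Pnn hs)
    have := abs_sub (k s) E
    linarith [hb s hs]
  have hX : ∀ s, 0 < s → HasDerivAt (fun t => (k t - E) * P t - F t) (k' s * P s) s := fun s hs =>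
    ((((dk s hs).sub_const E).mul (H.dP s hs)).sub (dF s hs)).congr_deriv (by ring)
  have hX0 := hKP.sub F0
  rw [sub_zero] at hX0
  have hB0 := H.B0.const_mul C
  rw [mul_zero] at hB0
  have u := cmpL (fun t => C * (q t + (t - ν) * P t) - ((k t - E) * P t - F t))
    (fun s => (C - k' s) * P s) t
    (fun s hs _ => (((H.dB hs).const_mul C).sub (hX s hs)).congr_deriv (by ring))
    (fun s hs _ => mul_nonneg (by linarith [(abs_le.mp (hC s hs)).2]) (H.Pnn hs))
    (by simpa using hB0.sub hX0) t ht le_rfl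
  have l := cmpL (fun t => C * (q t + (t - ν) * P t) + ((k t - E) * P t - F t))
    (fun s => (C + k' s) * P s) t
    (fun s hs _ => (((H.dB hs).const_mul C).add (hX s hs)).congr_deriv (by ring))
    (fun s hs _ => mul_nonneg (by linarith [(abs_le.mp (hC s hs)).1]) (H.Pnn hs))
    (by simpa using hB0.add hX0) t ht le_rfl
  exact abs_le.mpr ⟨by linarith, by linarith⟩

theorem X2 (H : GD ν p q P) (k k' F : ℝ → ℝ) (E : ℝ)
    (dk : ∀ t, 0 < t → HasDerivAt k (k' t) t)
    (dF : ∀ t, 0 < t → HasDerivAt F ((k t - E) * p t) t)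
    (F1 : Tendsto F atTop (𝓝 0)) (C : ℝ) (hC : ∀ t, 0 < t → |k' t| ≤ C) (t : ℝ) (ht : 0 < t) :
    |(k t - E) * (1 - P t) + F t| ≤ C * (q t - (t - ν) * (1 - P t)) := by
  have hKQ : Tendsto (fun t => (k t - E) * (1 - P t)) atTop (𝓝 0) := by
    have hb := lipBound k k' dk C hC
    have h1 := (H.Qinf.const_mul (|k 1| + C + |E| + C * ν)).add (H.mQinf.const_mul C)
    simp only [mul_zero, add_zero] at h1
    refine squeeze_zero_norm' ?_ h1
    filter_upwards [eventually_gt_atTop 0] with s hs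
    rw [norm_mul, Real.norm_eq_abs, Real.norm_eq_abs, abs_of_nonneg (H.Qnn hs)]
    have h2 : |k s - E| ≤ (|k 1| + C) + C * s + |E| := by
      have := abs_sub (k s) E
      linarith [hb s hs]
    have := mul_le_mul_of_nonneg_right h2 (H.Qnn hs)
    linarith
  have hX : ∀ s, 0 < s → HasDerivAt (fun t => (k t - E) * (1 - P t) + F t) (k' s * (1 - P s)) s :=
    fun s hs =>
    ((((dk s hs).sub_const E).mul (H.dQ hs)).add (dF s hs)).congr_deriv (by ring)
  have hX0 := hKQ.add F1
  rw [add_zero] at hX0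
  have hA0 := H.Ainf.const_mul C
  rw [mul_zero] at hA0
  have u := cmpR (fun t => C * (q t - (t - ν) * (1 - P t)) - ((k t - E) * (1 - P t) + F t))
    (fun s => -((C + k' s) * (1 - P s))) t
    (fun s hs => (((H.dA (ht.trans_le hs)).const_mul C).sub (hX s (ht.trans_le hs))).congr_deriv
      (by ring))
    (fun s hs => neg_nonpos.mpr (mul_nonneg (by linarith [(abs_le.mp (hC s (ht.trans_le hs))).1])
      (H.Qnn (ht.trans_le hs))))
    (by simpa using hA0.sub hX0) t le_rfl
  have l := cmpR (fun t => C * (q t - (t - ν) * (1 - P t)) + ((k t - E) * (1 - P t) + F t))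
    (fun s => -((C - k' s) * (1 - P s))) t
    (fun s hs => (((H.dA (ht.trans_le hs)).const_mul C).add (hX s (ht.trans_le hs))).congr_deriv
      (by ring))
    (fun s hs => neg_nonpos.mpr (mul_nonneg (by linarith [(abs_le.mp (hC s (ht.trans_le hs))).2])
      (H.Qnn (ht.trans_le hs))))
    (by simpa using hA0.add hX0) t le_rfl
  exact abs_le.mpr ⟨by linarith, by linarith⟩

/-- bound of the solution in terms of the derivative. -/
theorem Fbound (H : GD ν p q P) (k k' F : ℝ → ℝ) (E : ℝ)
    (dk : ∀ t, 0 < t → HasDerivAt k (k' t) t)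
    (dF : ∀ t, 0 < t → HasDerivAt F ((k t - E) * p t) t)
    (F0 : Tendsto F (𝓝[>] 0) (𝓝 0))
    (F1 : Tendsto F atTop (𝓝 0)) (C : ℝ) (hC : ∀ t, 0 < t → |k' t| ≤ C) (t : ℝ) (ht : 0 < t) :
    |F t| ≤ C * q t := by
  have h1 := H.X1 k k' F E dk dF F0 C hC t ht
  have h2 := H.X2 k k' F E dk dF F1 C hC t ht
  have hP := H.Pnn ht
  have hQ := H.Qnn ht
  have e : F t = P t * ((k t - E) * (1 - P t) + F t) - (1 - P t) * ((k t - E) * P t - F t) := by ring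
  rw [e]
  refine (abs_sub _ _).trans ?_
  rw [abs_mul, abs_mul, abs_of_nonneg hP, abs_of_nonneg hQ]
  have h3 := mul_le_mul_of_nonneg_left h1 hQ
  have h4 := mul_le_mul_of_nonneg_left h2 hP
  linarith

theorem Nbound (H : GD ν p q P) (hν : ν = 1 ∨ 2 ≤ ν) (k k' F : ℝ → ℝ) (E : ℝ)
    (dk : ∀ t, 0 < t → HasDerivAt k (k' t) t)
    (dF : ∀ t, 0 < t → HasDerivAt F ((k t - E) * p t) t)
    (F0 : Tendsto F (𝓝[>] 0) (𝓝 0))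
    (F1 : Tendsto F atTop (𝓝 0)) (C : ℝ) (hC : ∀ t, 0 < t → |k' t| ≤ C) (t : ℝ) (ht : 0 < t) :
    |(k t - E + (t - ν) * (F t / q t)) / (2 * t)| ≤ √(2 * π / ν) * C := by
  have h1 := H.X1 k k' F E dk dF F0 C hC t ht
  have h2 := H.X2 k k' F E dk dF F1 C hC t ht
  have hA := H.Ann ht
  have hB := H.Bnn ht
  have hq := H.qpos ht
  have hAB := H.AB hν ht
  have hC0 : 0 ≤ C := (abs_nonneg _).trans (hC t ht)
  have e : (k t - E + (t - ν) * (F t / q t)) / (2 * t)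
      = (((k t - E) * P t - F t) * (q t - (t - ν) * (1 - P t))
        + ((k t - E) * (1 - P t) + F t) * (q t + (t - ν) * P t)) / (2 * t * q t) := by
    field_simp
    ring
  rw [e, abs_div, abs_of_pos (show 0 < 2 * t * q t by positivity), div_le_iff₀ (by positivity)]
  refine (abs_add_le _ _).trans ?_
  rw [abs_mul, abs_mul, abs_of_nonneg hA, abs_of_nonneg hB]
  have h3 := mul_le_mul_of_nonneg_right h1 hA
  have h4 := mul_le_mul_of_nonneg_right h2 hB
  have h5 := mul_le_mul_of_nonneg_left hAB hC0
  linarith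

theorem Fbound0 (H : GD ν p q P) (hν : ν = 1 ∨ ν = 2 ∨ 3 ≤ ν) (k F : ℝ → ℝ) (E : ℝ)
    (dF : ∀ t, 0 < t → HasDerivAt F ((k t - E) * p t) t)
    (F0 : Tendsto F (𝓝[>] 0) (𝓝 0))
    (F1 : Tendsto F atTop (𝓝 0)) (C : ℝ) (hC : ∀ t, 0 < t → |k t| ≤ C) (t : ℝ) (ht : 0 < t) :
    |F t| ≤ √(2 * π / ν) * C * q t := by
  have hC0 : 0 ≤ C := (abs_nonneg _).trans (hC t ht)
  have hP := H.Pnn ht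
  have hQ := H.Qnn ht
  have hPQ := H.PQ hν ht
  have dG : ∀ s, 0 < s → HasDerivAt (fun t => F t + E * P t) (k s * p s) s := fun s hs =>
    ((dF s hs).add ((H.dP s hs).const_mul E)).congr_deriv (by ring)
  have dJ : ∀ s, 0 < s → HasDerivAt (fun t => E * (1 - P t) - F t) (-(k s * p s)) s := fun s hs =>
    (((H.dQ hs).const_mul E).sub (dF s hs)).congr_deriv (by ring)
  have G0 : Tendsto (fun t => F t + E * P t) (𝓝[>] 0) (𝓝 0) := by
    simpa using F0.add (H.P0.const_mul E)
  have J1 : Tendsto (fun t => E * (1 - P t) - F t) atTop (𝓝 0) := by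
    have := (H.Qinf.const_mul E).sub F1
    rwa [mul_zero, sub_zero] at this
  have CP0 : Tendsto (fun t => C * P t) (𝓝[>] 0) (𝓝 0) := by simpa using H.P0.const_mul C
  have CQ1 : Tendsto (fun t => C * (1 - P t)) atTop (𝓝 0) := by
    have := H.Qinf.const_mul C
    rwa [mul_zero] at this
  have g1 := cmpL (fun t => C * P t - (F t + E * P t)) (fun s => (C - k s) * p s) t
    (fun s hs _ => (((H.dP s hs).const_mul C).sub (dG s hs)).congr_deriv (by ring))
    (fun s hs _ => mul_nonneg (by linarith [(abs_le.mp (hC s hs)).2]) (H.pp s hs).le)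
    (by simpa using CP0.sub G0) t ht le_rfl
  have g2 := cmpL (fun t => C * P t + (F t + E * P t)) (fun s => (C + k s) * p s) t
    (fun s hs _ => (((H.dP s hs).const_mul C).add (dG s hs)).congr_deriv (by ring))
    (fun s hs _ => mul_nonneg (by linarith [(abs_le.mp (hC s hs)).1]) (H.pp s hs).le)
    (by simpa using CP0.add G0) t ht le_rfl
  have j1 := cmpR (fun t => C * (1 - P t) - (E * (1 - P t) - F t)) (fun s => -((C - k s) * p s)) t
    (fun s hs => (((H.dQ (ht.trans_le hs)).const_mul C).sub (dJ s (ht.trans_le hs))).congr_deriv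
      (by ring))
    (fun s hs => neg_nonpos.mpr (mul_nonneg (by linarith [(abs_le.mp (hC s (ht.trans_le hs))).2])
      (H.pp s (ht.trans_le hs)).le))
    (by have := CQ1.sub J1; rwa [sub_zero] at this) t le_rfl
  have j2 := cmpR (fun t => C * (1 - P t) + (E * (1 - P t) - F t)) (fun s => -((C + k s) * p s)) t
    (fun s hs => (((H.dQ (ht.trans_le hs)).const_mul C).add (dJ s (ht.trans_le hs))).congr_deriv
      (by ring))
    (fun s hs => neg_nonpos.mpr (mul_nonneg (by linarith [(abs_le.mp (hC s (ht.trans_le hs))).1])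
      (H.pp s (ht.trans_le hs)).le))
    (by have := CQ1.add J1; rwa [add_zero] at this) t le_rfl
  have h1 : |F t| ≤ 2 * (P t * (1 - P t)) * C := by
    have a1 := mul_nonneg hQ g1
    have a2 := mul_nonneg hQ g2
    have a3 := mul_nonneg hP j1
    have a4 := mul_nonneg hP j2
    refine abs_le.mpr ⟨by linarith, by linarith⟩
  have h2 := mul_le_mul_of_nonneg_right hPQ hC0
  linarith

end GD

/-! concrete density -/

noncomputable def csp (a : ℝ) (t : ℝ) : ℝ := 1 / (2 * Real.Gamma a) * ((t / 2) ^ (a - 1) * Real.exp (-(t / 2)))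

noncomputable def csq (a : ℝ) (t : ℝ) : ℝ := 2 / Real.Gamma a * ((t / 2) ^ a * Real.exp (-(t / 2)))

theorem csq_eq {a : ℝ} (ha : 0 < a) (t : ℝ) (ht : 0 < t) : csq a t = 2 * t * csp a t := by
  have := Real.Gamma_pos_of_pos ha
  unfold csq csp
  rw [Real.rpow_sub_one (by positivity)]
  field_simp

theorem csp_pos {a : ℝ} (ha : 0 < a) (t : ℝ) (ht : 0 < t) : 0 < csp a t := by
  have := Real.Gamma_pos_of_pos ha
  unfold csp
  positivity

theorem csq_deriv {a : ℝ} (ha : 0 < a) (t : ℝ) (ht : 0 < t) :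
    HasDerivAt (csq a) ((2 * a - t) * csp a t) t := by
  have hG := Real.Gamma_pos_of_pos ha
  have h1 : HasDerivAt (fun t : ℝ => t / 2) (1 / 2) t := (hasDerivAt_id t).div_const 2
  have h2 := h1.rpow_const (p := a) (Or.inl (by positivity))
  have h3 := h1.neg.exp
  refine ((h2.mul h3).const_mul (2 / Real.Gamma a)).congr_deriv ?_
  unfold csp
  simp only [Pi.neg_apply]
  rw [Real.rpow_sub_one (by positivity)]
  field_simp
  ring

theorem rpowexp_int {s : ℝ} (hs : 0 < s) :
    IntegrableOn (fun t : ℝ => (t / 2) ^ (s - 1) * Real.exp (-(t / 2))) (Ioi 0) := by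
  have h := Real.GammaIntegral_convergent hs
  have h2 := (integrableOn_Ioi_comp_mul_left_iff
    (fun x : ℝ => Real.exp (-x) * x ^ (s - 1)) 0 (a := 1 / 2) (by norm_num)).mpr (by simpa using h)
  refine h2.congr_fun (fun t _ => ?_) measurableSet_Ioi
  simp only
  rw [mul_comm, show 1 / 2 * t = t / 2 by ring]

theorem csp_int {a : ℝ} (ha : 0 < a) : IntegrableOn (csp a) (Ioi 0) :=
  (rpowexp_int ha).const_mul _

theorem csq_int {a : ℝ} (ha : 0 < a) : IntegrableOn (csq a) (Ioi 0) := by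
  have := (rpowexp_int (s := a + 1) (by linarith)).const_mul (2 / Real.Gamma a)
  unfold csq
  simpa [IntegrableOn] using this

theorem csp_cont {a : ℝ} (t : ℝ) (ht : 0 < t) : ContinuousAt (csp a) t := by
  unfold csp
  refine ContinuousAt.mul (by fun_prop) (ContinuousAt.mul ?_ (by fun_prop))
  exact ContinuousAt.rpow_const (by fun_prop) (Or.inl (by positivity))

theorem csq_zero {a : ℝ} (ha : 0 < a) : Tendsto (csq a) (𝓝[>] 0) (𝓝 0) := by
  have : ContinuousAt (csq a) 0 := by
    unfold csq
    refine ContinuousAt.mul (by fun_prop) (ContinuousAt.mul ?_ (by fun_prop))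
    exact ContinuousAt.rpow_const (by fun_prop) (Or.inr ha.le)
  have h := this.tendsto
  have h0 : csq a 0 = 0 := by simp [csq, Real.zero_rpow ha.ne']
  rw [h0] at h
  exact h.mono_left nhdsWithin_le_nhds

theorem csq_inf {a : ℝ} : Tendsto (fun t => t * csq a t) atTop (𝓝 0) := by
  have h := tendsto_rpow_mul_exp_neg_mul_atTop_nhds_zero (a + 1) 1 one_pos
  have h2 : Tendsto (fun t : ℝ => t / 2) atTop atTop := Tendsto.atTop_div_const two_pos tendsto_id
  have h3 := (h.comp h2).const_mul (4 / Real.Gamma a)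
  rw [mul_zero] at h3
  refine h3.congr' ?_
  filter_upwards [eventually_gt_atTop 0] with t ht
  simp only [Function.comp, csq]
  rw [Real.rpow_add_one (by positivity), neg_one_mul]
  ring

theorem primitive_facts (g : ℝ → ℝ) (hc : ∀ t, 0 < t → ContinuousAt g t)
    (hi : IntegrableOn g (Ioi 0)) :
    (∀ t, 0 < t → HasDerivAt (fun t => ∫ s in (0:ℝ)..t, g s) (g t) t) ∧
    Tendsto (fun t => ∫ s in (0:ℝ)..t, g s) (𝓝[>] 0) (𝓝 0) ∧
    Tendsto (fun t => ∫ s in (0:ℝ)..t, g s) atTop (𝓝 (∫ s in Ioi 0, g s)) := by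
  have hii : ∀ t, 0 < t → IntervalIntegrable g volume 0 t := fun t ht => by
    rw [intervalIntegrable_iff_integrableOn_Ioc_of_le ht.le]
    exact hi.mono_set Ioc_subset_Ioi_self
  refine ⟨fun t ht => ?_, ?_, intervalIntegral_tendsto_integral_Ioi 0 hi tendsto_id⟩
  · refine intervalIntegral.integral_hasDerivAt_right (hii t ht) ?_ (hc t ht)
    exact ContinuousOn.stronglyMeasurableAtFilter_nhdsWithin (s := Ioi 0)
      (fun s hs => (hc s hs).continuousWithinAt) measurableSet_Ioi t |>.filter_mono
        (by rw [isOpen_Ioi.nhdsWithin_eq ht])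
  · have h1 := intervalIntegral.continuousOn_primitive_interval' (hii 1 one_pos) left_mem_uIcc
    have h2 := (h1 0 left_mem_uIcc).tendsto
    simp only [intervalIntegral.integral_same] at h2
    refine h2.mono_left ?_
    rw [uIcc_of_le zero_le_one]
    exact nhdsWithin_le_of_mem (Icc_mem_nhdsGT one_pos)

theorem law_integral {ν : ℝ} (hν : 0 < ν) (g : ℝ → ℝ) :
    ∫ y, g y ∂(centeredGammaLaw ν) = ∫ t in Ioi 0, g (t - ν) * csp (ν / 2) t := by
  have ha : 0 < ν / 2 := by positivity
  have hemb : MeasurableEmbedding (fun x : ℝ => 2 * x - ν) := by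
    have : (fun x : ℝ => 2 * x - ν) =
      (Homeomorph.addRight (-ν)) ∘ (Homeomorph.mulLeft₀ (2:ℝ) two_ne_zero) := by
      ext x; simp [sub_eq_add_neg]
    rw [this]
    exact (Homeomorph.measurableEmbedding _).comp (Homeomorph.measurableEmbedding _)
  unfold centeredGammaLaw gammaMeasure
  rw [hemb.integral_map, integral_withDensity_eq_integral_toReal_smul
    (by unfold gammaPDF; exact (measurable_gammaPDFReal _ _).ennreal_ofReal)
    (ae_of_all _ fun x => by unfold gammaPDF; exact ENNReal.ofReal_lt_top)]
  have h1 : ∀ x : ℝ, (gammaPDF (ν / 2) 1 x).toReal = gammaPDFReal (ν / 2) 1 x := fun x => by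
    unfold gammaPDF
    exact ENNReal.toReal_ofReal (gammaPDFReal_nonneg ha one_pos x)
  simp only [h1]
  have h2 : (fun x : ℝ => gammaPDFReal (ν / 2) 1 x • g (2 * x - ν)) = (Ici (0:ℝ)).indicator
      (fun x => gammaPDFReal (ν / 2) 1 x • g (2 * x - ν)) := by
    ext x
    by_cases hx : 0 ≤ x
    · rw [indicator_of_mem (mem_Ici.mpr hx)]
    · rw [indicator_of_notMem (by simpa using hx)]
      simp [gammaPDFReal, hx]
  rw [h2, integral_indicator measurableSet_Ici, integral_Ici_eq_integral_Ioi]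
  have h3 := integral_comp_mul_left_Ioi' (fun t => g (t - ν) * csp (ν / 2) t) 0 (b := 2) two_pos
  rw [mul_zero, smul_eq_mul, ← integral_const_mul] at h3
  rw [← h3]
  refine setIntegral_congr_fun measurableSet_Ioi fun x hx => ?_
  have hx : 0 < x := hx
  simp only [gammaPDFReal, hx.le, if_true, csp, smul_eq_mul, Real.one_rpow, one_mul]
  rw [mul_div_cancel_left₀ x two_ne_zero]
  have := Real.Gamma_pos_of_pos ha
  field_simp

theorem csp_total {ν : ℝ} (hν : 0 < ν) : ∫ t in Ioi 0, csp (ν / 2) t = 1 := by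
  have h := law_integral hν (fun _ => 1)
  have : IsProbabilityMeasure (centeredGammaLaw ν) := by
    unfold centeredGammaLaw
    have := isProbabilityMeasure_gammaMeasure (a := ν / 2) (r := 1) (by positivity) one_pos
    exact Measure.isProbabilityMeasure_map (by fun_prop)
  simpa using h.symm

theorem csGD {ν : ℝ} (hν : 0 < ν) :
    GD ν (csp (ν / 2)) (csq (ν / 2)) (fun t => ∫ s in (0:ℝ)..t, csp (ν / 2) s) := by
  have ha : 0 < ν / 2 := by positivity
  obtain ⟨h1, h2, h3⟩ := primitive_facts (csp (ν / 2)) csp_cont (csp_int ha)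
  rw [csp_total hν] at h3
  exact
    { hν := hν
      pp := csp_pos ha
      qe := csq_eq ha
      dq := fun t ht => (csq_deriv ha t ht).congr_deriv (by ring)
      dP := h1
      P0 := h2
      P1 := h3
      q0 := csq_zero ha
      q1 := csq_inf }

/-- For an integer `ν ≥ 1`: if `h` is twice differentiable on `(−ν,∞)` with bounded first and
second derivatives and `|h(x)| ≤ c·e^{ax}` there, for some `c > 0` and `a < 1/2`, then the Gamma
Stein equation `2(x+ν) f'(x) − x f(x) = h(x) − E[h(F(ν))]` on `(−ν,∞)` has a solution `f` which
is bounded on `(−ν,∞)`, differentiable, with `‖f‖_∞ ≤ √(2π/ν)·‖h‖_∞` and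
`‖f'‖_∞ ≤ √(2π/ν)·‖h'‖_∞`. -/
theorem chi_square_stein_equation_solution (ν : ℕ) (hν : 1 ≤ ν)
    (h h' h'' : ℝ → ℝ)
    (hd1 : ∀ x : ℝ, -(ν : ℝ) < x → HasDerivAt h (h' x) x)
    (hd2 : ∀ x : ℝ, -(ν : ℝ) < x → HasDerivAt h' (h'' x) x)
    (hd1b : ∃ M, ∀ x : ℝ, -(ν : ℝ) < x → |h' x| ≤ M)
    (hd2b : ∃ M, ∀ x : ℝ, -(ν : ℝ) < x → |h'' x| ≤ M)
    (hgrowth : ∃ c > (0 : ℝ), ∃ a < (1 : ℝ) / 2, ∀ x : ℝ, -(ν : ℝ) < x →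
      |h x| ≤ c * Real.exp (a * x)) :
    ∃ f f' : ℝ → ℝ,
      (∃ M, ∀ x : ℝ, -(ν : ℝ) < x → |f x| ≤ M) ∧
      (∀ x : ℝ, -(ν : ℝ) < x → HasDerivAt f (f' x) x) ∧
      (∀ x : ℝ, -(ν : ℝ) < x →
        2 * (x + ν) * f' x - x * f x = h x - ∫ y, h y ∂(centeredGammaLaw ν)) ∧
      (∀ C : ℝ, (∀ x : ℝ, -(ν : ℝ) < x → |h x| ≤ C) →
        ∀ x : ℝ, -(ν : ℝ) < x → |f x| ≤ Real.sqrt (2 * π / ν) * C) ∧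
      (∀ C : ℝ, (∀ x : ℝ, -(ν : ℝ) < x → |h' x| ≤ C) →
        ∀ x : ℝ, -(ν : ℝ) < x → |f' x| ≤ Real.sqrt (2 * π / ν) * C) := by
  have hν1 : (1:ℝ) ≤ ν := by exact_mod_cast hν
  have hν0 : (0:ℝ) < ν := by linarith
  have ha : (0:ℝ) < (ν:ℝ) / 2 := by positivity
  have cases1 : (ν:ℝ) = 1 ∨ (2:ℝ) ≤ ν := by
    rcases Nat.lt_or_ge ν 2 with h | h
    · left; exact_mod_cast (by omega : ν = 1)
    · right; exact_mod_cast h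
  have cases2 : (ν:ℝ) = 1 ∨ (ν:ℝ) = 2 ∨ (3:ℝ) ≤ ν := by
    rcases Nat.lt_or_ge ν 2 with h | h
    · left; exact_mod_cast (by omega : ν = 1)
    · right
      rcases Nat.lt_or_ge ν 3 with h | h
      · left; exact_mod_cast (by omega : ν = 2)
      · right; exact_mod_cast h
  obtain ⟨M, hM⟩ := hd1b
  have H := csGD hν0
  set p := csp ((ν:ℝ) / 2)
  set q := csq ((ν:ℝ) / 2)
  set E := ∫ y, h y ∂(centeredGammaLaw ν) with hE
  set k : ℝ → ℝ := fun t => h (t - ν) with hk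
  set k' : ℝ → ℝ := fun t => h' (t - ν) with hk'
  have dk : ∀ t, 0 < t → HasDerivAt k (k' t) t := fun t ht => by
    have h1 := hd1 (t - ν) (by linarith)
    exact h1.comp_sub_const t ν
  have kM : ∀ t, 0 < t → |k' t| ≤ M := fun t ht => hM (t - ν) (by linarith)
  have kb := GD.lipBound k k' dk M kM
  have hcont : ∀ t, 0 < t → ContinuousAt (fun t => (k t - E) * p t) t := fun t ht =>
    ((dk t ht).continuousAt.sub continuousAt_const).mul (csp_cont t ht)
  have hpint : IntegrableOn p (Ioi 0) := csp_int ha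
  have hkint : IntegrableOn (fun t => k t * p t) (Ioi 0) := by
    have hb : IntegrableOn (fun t => (|k 1| + M) * p t + M / 2 * q t) (Ioi 0) :=
      (hpint.const_mul _).add ((csq_int ha).const_mul _)
    refine Integrable.mono' hb ?_ ?_
    · refine ContinuousOn.aestronglyMeasurable (fun t ht => ?_) measurableSet_Ioi
      exact ((dk t ht).continuousAt.mul (csp_cont t ht)).continuousWithinAt
    · refine (ae_restrict_iff' measurableSet_Ioi).mpr (ae_of_all _ fun t ht => ?_)
      have ht : 0 < t := ht
      have hp := H.pp t ht
      rw [norm_mul, Real.norm_eq_abs, Real.norm_eq_abs, abs_of_pos hp, H.qe t ht]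
      have := mul_le_mul_of_nonneg_right (kb t ht) hp.le
      linarith
  have hint : IntegrableOn (fun t => (k t - E) * p t) (Ioi 0) := by
    refine (hkint.sub (hpint.const_mul E)).congr_fun (fun t _ => ?_) measurableSet_Ioi
    simp only [Pi.sub_apply]
    ring
  obtain ⟨dF, F0, F1⟩ := primitive_facts _ hcont hint
  have htot : ∫ t in Ioi 0, (k t - E) * p t = 0 := by
    have h1 : ∫ t in Ioi 0, k t * p t = E := (law_integral hν0 h).symm
    have h2 : ∫ t in Ioi 0, p t = 1 := csp_total hν0
    have h3 : ∫ t in Ioi 0, (k t - E) * p t = ∫ t in Ioi 0, (k t * p t - E * p t) := by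
      congr 1; ext t; ring
    rw [h3, integral_sub hkint (hpint.const_mul E), integral_const_mul, h1, h2]
    ring
  rw [htot] at F1
  set F : ℝ → ℝ := fun t => ∫ s in (0:ℝ)..t, (k s - E) * p s with hF
  have df : ∀ t, 0 < t → HasDerivAt (fun t => F t / q t)
      ((k t - E + (t - ν) * (F t / q t)) / (2 * t)) t := fun t ht => by
    have hq := H.qpos ht
    refine ((dF t ht).div (H.dq t ht) hq.ne').congr_deriv ?_
    have hp := H.pp t ht
    rw [H.qe t ht]
    field_simp
    ring
  refine ⟨fun x => F (x + ν) / q (x + ν),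
    fun x => (h x - E + x * (F (x + ν) / q (x + ν))) / (2 * (x + ν)), ⟨M, ?_⟩, ?_, ?_, ?_, ?_⟩
  · intro x hx
    have ht : 0 < x + ν := by linarith
    rw [abs_div, abs_of_pos (H.qpos ht), div_le_iff₀ (H.qpos ht)]
    exact H.Fbound k k' F E dk dF F0 F1 M kM _ ht
  · intro x hx
    have ht : 0 < x + ν := by linarith
    have := (df (x + ν) ht).comp_add_const x ν
    simpa [hk] using this
  · intro x hx
    have ht : 0 < x + ν := by linarith
    rw [mul_div_cancel₀ _ (by positivity)]
    ring
  · intro C hC x hx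
    have ht : 0 < x + ν := by linarith
    rw [abs_div, abs_of_pos (H.qpos ht), div_le_iff₀ (H.qpos ht)]
    exact H.Fbound0 cases2 k F E dF F0 F1 C (fun t ht => hC (t - ν) (by linarith)) _ ht
  · intro C hC x hx
    have ht : 0 < x + ν := by linarith
    have := H.Nbound cases1 k k' F E dk dF F0 F1 C (fun t ht => hC (t - ν) (by linarith)) _ ht
    simpa [hk] using this
end

section
/- Let V = (V₁,…,V_n) be a vector of i.i.d. standard Gaussian random variables and let g : ℝⁿ → ℝ be a smooth function such that g and all its partial derivatives have subexponential growth at infinity, E[g(V)] = 0 and E[g(V)²] = 1, and assume the law of Y := g(V) is absolutely continuous with respect to Lebesgue measure. Then for every Lipschitz function f : ℝ → ℝ (with f' its almost-everywhere derivative), E[Y f(Y)] = E[S(V) f'(Y)], where for v ∈ ℝⁿ, S(v) = ∫₀¹ (1/(2√t)) E[ Σ_{i=1}^n (∂g/∂v_i)(v) (∂g/∂v_i)(√t v + √(1−t) V) ] dt. -/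
open MeasureTheory ProbabilityTheory Real Set

/-- Chatterjee's function `S(v) = ∫₀¹ (1/(2√t)) E[ Σᵢ ∂ᵢg(v) ∂ᵢg(√t v + √(1−t) V) ] dt`. -/
noncomputable def chatterjeeS {Ω : Type*} [MeasurableSpace Ω] (P : Measure Ω)
    {n : ℕ} (V : Ω → (Fin n → ℝ)) (g : (Fin n → ℝ) → ℝ) (v : Fin n → ℝ) : ℝ :=
  ∫ t in Set.Ioc (0 : ℝ) 1, (1 / (2 * Real.sqrt t)) *
    ∫ ω, (∑ i : Fin n, fderiv ℝ g v (Pi.single i 1) *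
      fderiv ℝ g (Real.sqrt t • v + Real.sqrt (1 - t) • V ω) (Pi.single i 1)) ∂P


open Filter Topology

/-- The standard Gaussian measure on `Fin n → ℝ`. -/
noncomputable abbrev stdG (n : ℕ) : Measure (Fin n → ℝ) :=
  Measure.pi (fun _ : Fin n => gaussianReal 0 1)

instance stdG_isGaussian (n : ℕ) : IsGaussian (stdG n) := by
  have h1 : iIndepFun (fun (i : Fin n) (ω : Fin n → ℝ) => ω i) (stdG n) :=
    iIndepFun_pi (X := fun _ x => x) (fun i => aemeasurable_id)
  have h2 : ∀ i : Fin n, HasGaussianLaw (fun ω : Fin n → ℝ => ω i) (stdG n) := by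
    intro i
    constructor
    have := (measurePreserving_eval (fun _ : Fin n => gaussianReal 0 1) i).map_eq
    change IsGaussian (Measure.map (Function.eval i) (stdG n))
    rw [this]
    infer_instance
  have h3 := (h1.hasGaussianLaw h2).isGaussian_map
  simpa using h3

lemma stdG_exp_integrable (n : ℕ) (c : ℝ) :
    Integrable (fun v : Fin n → ℝ => Real.exp (c * ‖v‖)) (stdG n) := by
  have h1 : Integrable (fun v : Fin n → ℝ => ∏ i, (Real.exp (|c| * v i) + Real.exp (-|c| * v i)))
      (stdG n) := by
    refine Integrable.fintype_prod (f := fun _ x => Real.exp (|c| * x) + Real.exp (-|c| * x)) ?_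
    intro i
    exact (integrable_exp_mul_gaussianReal _).add (integrable_exp_mul_gaussianReal _)
  have h1' := h1.add (integrable_const (1:ℝ))
  refine h1'.mono' (by fun_prop) (ae_of_all _ fun v => ?_)
  rw [Real.norm_eq_abs, abs_of_pos (Real.exp_pos _)]
  have hge : ∀ i, 1 ≤ Real.exp (|c| * v i) + Real.exp (-|c| * v i) := by
    intro i
    rcases le_total 0 (|c| * v i) with h | h
    · have := Real.one_le_exp h
      linarith [Real.exp_pos (-|c| * v i)]
    · have : 1 ≤ Real.exp (-|c| * v i) := Real.one_le_exp (by linarith)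
      linarith [Real.exp_pos (|c| * v i)]
  have hprod : (0:ℝ) ≤ ∏ i, (Real.exp (|c| * v i) + Real.exp (-|c| * v i)) :=
    Finset.prod_nonneg fun i _ => by positivity
  change _ ≤ (∏ i, (Real.exp (|c| * v i) + Real.exp (-|c| * v i))) + 1
  rcases isEmpty_or_nonempty (Fin n) with he | hne
  · have : v = 0 := Subsingleton.elim _ _
    subst this
    simp
  obtain ⟨i, hi⟩ : ∃ i, ‖v‖ = ‖v i‖ := by
    obtain ⟨i, hi⟩ := Finite.exists_max (fun i => ‖v i‖)
    exact ⟨i, le_antisymm ((pi_norm_le_iff_of_nonneg (norm_nonneg _)).2 hi) (norm_le_pi_norm v i)⟩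
  have h2 : Real.exp (c * ‖v‖) ≤ Real.exp (|c| * v i) + Real.exp (-|c| * v i) := by
    have h3 : c * ‖v‖ ≤ |c| * |v i| := by
      rw [hi, Real.norm_eq_abs]
      exact mul_le_mul_of_nonneg_right (le_abs_self c) (abs_nonneg _)
    rcases abs_cases (v i) with ⟨h, _⟩ | ⟨h, _⟩
    · rw [h] at h3
      linarith [Real.exp_le_exp.2 h3, Real.exp_pos (-|c| * v i)]
    · rw [h] at h3
      have h3' : c * ‖v‖ ≤ -|c| * v i := by linarith
      linarith [Real.exp_le_exp.2 h3', Real.exp_pos (|c| * v i)]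
  have h4 : Real.exp (|c| * v i) + Real.exp (-|c| * v i) ≤
      ∏ i, (Real.exp (|c| * v i) + Real.exp (-|c| * v i)) := by
    rw [← Finset.mul_prod_erase _ _ (Finset.mem_univ i)]
    refine le_mul_of_one_le_right (by positivity) ?_
    calc (1:ℝ) = ∏ j ∈ Finset.univ.erase i, (1:ℝ) := by simp
      _ ≤ _ := Finset.prod_le_prod (fun j _ => zero_le_one) (fun j _ => hge j)
  linarith

lemma stdG_mean (n : ℕ) : ∫ x, id x ∂(stdG n) = 0 := by
  ext i
  have hint : ∀ i, Integrable (fun x : Fin n → ℝ => id x i) (stdG n) := by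
    intro i
    refine (stdG_exp_integrable n 1).mono' (measurable_pi_apply i).aestronglyMeasurable
      (ae_of_all _ fun v => ?_)
    simp only [id, one_mul]
    exact (norm_le_pi_norm v i).trans ((by linarith [Real.add_one_le_exp ‖v‖]))
  rw [eval_integral hint]
  have h := (measurePreserving_eval (fun _ : Fin n => gaussianReal 0 1) i)
  have h2 : ∫ y, y ∂((stdG n).map (Function.eval i)) = ∫ x : Fin n → ℝ, x i ∂(stdG n) :=
    integral_map (measurable_pi_apply i).aemeasurable (by fun_prop)
  simp only [id, Pi.zero_apply]
  rw [← h2, h.map_eq]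
  simp

lemma stdG_rotation (n : ℕ) (θ : ℝ) :
    MeasurePreserving (fun p : (Fin n → ℝ) × (Fin n → ℝ) =>
      (Real.cos θ • p.1 + Real.sin θ • p.2, -Real.sin θ • p.1 + Real.cos θ • p.2))
      ((stdG n).prod (stdG n)) ((stdG n).prod (stdG n)) := by
  refine ⟨by fun_prop, ?_⟩
  exact IsGaussian.map_rotation_eq_self (stdG_mean n) θ

lemma gauss_shift (u : ℝ) : (gaussianReal 0 1).map (fun x => x + u) =
    (gaussianReal 0 1).withDensity (fun x => ENNReal.ofReal (Real.exp (u * x - u ^ 2 / 2))) := by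
  rw [gaussianReal_map_add_const, zero_add, gaussianReal_of_var_ne_zero _ one_ne_zero,
    gaussianReal_of_var_ne_zero _ one_ne_zero, ← withDensity_mul _ (by fun_prop) (by fun_prop)]
  congr 1
  ext x
  simp only [Pi.mul_apply, gaussianPDF, gaussianPDFReal]
  rw [← ENNReal.ofReal_mul (by positivity), mul_assoc (_⁻¹), ← Real.exp_add]
  congr 3
  simp
  ring

lemma pi_withDensity_aux {n : ℕ} (ρ : Fin n → ℝ → ENNReal) (hρ : ∀ i, Measurable (ρ i))
    [∀ i, SigmaFinite ((gaussianReal 0 1).withDensity (ρ i))] :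
    Measure.pi (fun i => (gaussianReal 0 1).withDensity (ρ i)) =
      (stdG n).withDensity (fun x => ∏ i, ρ i (x i)) := by
  refine Measure.pi_eq fun s hs => ?_
  rw [withDensity_apply _ (.univ_pi hs), ← lintegral_indicator (.univ_pi hs)]
  have h1 : ∀ x : Fin n → ℝ, (Set.univ.pi s).indicator (fun x => ∏ i, ρ i (x i)) x =
      ∏ i, (s i).indicator (ρ i) (x i) := by
    intro x
    by_cases hx : x ∈ Set.univ.pi s
    · rw [Set.indicator_of_mem hx]
      refine Finset.prod_congr rfl fun i _ => ?_
      rw [Set.indicator_of_mem (hx i (Set.mem_univ i))]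
    · rw [Set.indicator_of_notMem hx]
      simp only [Set.mem_pi, Set.mem_univ, forall_const, not_forall] at hx
      obtain ⟨i, hi⟩ := hx
      exact (Finset.prod_eq_zero (Finset.mem_univ i) (Set.indicator_of_notMem hi _)).symm
  simp_rw [h1]
  have hm : ∀ i, Measurable ((s i).indicator (ρ i)) := fun i => (hρ i).indicator (hs i)
  rw [lintegral_prod_eq_prod_lintegral_of_indepFun (μ := stdG n) Finset.univ
    (fun i x => (s i).indicator (ρ i) (x i))
    (iIndepFun_pi (X := fun i x => (s i).indicator (ρ i) x) (fun i => (hm i).aemeasurable))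
    (fun i => (hm i).comp (measurable_pi_apply i))]
  refine Finset.prod_congr rfl fun i _ => ?_
  rw [withDensity_apply _ (hs i), ← lintegral_indicator (hs i)]
  exact (measurePreserving_eval (fun _ : Fin n => gaussianReal 0 1) i).lintegral_comp (hm i)

lemma stdG_shift {n : ℕ} (u : Fin n → ℝ) (H : (Fin n → ℝ) → ℝ) (hH : Continuous H) :
    ∫ x, H (x + u) ∂(stdG n) =
      ∫ x, Real.exp (∑ i, (u i * x i - u i ^ 2 / 2)) * H x ∂(stdG n) := by
  have h0 : (stdG n).map (fun x => x + u) = (stdG n).withDensity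
      (fun x => ∏ i, ENNReal.ofReal (Real.exp (u i * x i - u i ^ 2 / 2))) := by
    have h1 := Measure.pi_map_pi (μ := fun _ : Fin n => gaussianReal 0 1)
      (f := fun i x => x + u i) (fun i => by fun_prop)
    have h2 : ∀ i, SigmaFinite ((gaussianReal 0 1).withDensity
        (fun x => ENNReal.ofReal (Real.exp (u i * x - u i ^ 2 / 2)))) := by
      intro i
      rw [← gauss_shift]; infer_instance
    have h3 := pi_withDensity_aux
      (fun i x => ENNReal.ofReal (Real.exp (u i * x - u i ^ 2 / 2))) (fun i => by fun_prop)
    rw [← h3]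
    simp_rw [← gauss_shift]
    exact h1
  have h4 : ∫ y, H y ∂((stdG n).map (fun x => x + u)) = ∫ x, H (x + u) ∂(stdG n) :=
    integral_map (by fun_prop) hH.aestronglyMeasurable
  rw [← h4, h0, integral_withDensity_eq_integral_toReal_smul (by fun_prop)
    (ae_of_all _ fun x => ENNReal.prod_lt_top fun i _ => ENNReal.ofReal_lt_top)]
  refine integral_congr_ae (ae_of_all _ fun x => ?_)
  simp only [smul_eq_mul]
  rw [ENNReal.toReal_prod, Real.exp_sum]
  congr 1
  exact Finset.prod_congr rfl fun i _ => ENNReal.toReal_ofReal (Real.exp_pos _).le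

lemma stdG_ibp {n : ℕ} (u : Fin n → ℝ) (H D : (Fin n → ℝ) → ℝ) (hH : Continuous H)
    (hD : AEStronglyMeasurable D (stdG n)) (C a : ℝ) (hC : 0 ≤ C) (ha : 0 ≤ a)
    (hb : ∀ x, |H x| ≤ C * Real.exp (a * ‖x‖))
    (hl : ∀ x y, |H x - H y| ≤ C * Real.exp (a * (‖x‖ + ‖y‖)) * ‖x - y‖)
    (hd : ∀ᵐ x ∂(stdG n), HasDerivAt (fun s : ℝ => H (x + s • u)) (D x) 0) :
    ∫ x, (∑ i, u i * x i) * H x ∂(stdG n) = ∫ x, D x ∂(stdG n) := by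
  set L : ℝ := ∑ i, |u i| with hL
  set q : ℝ := ∑ i, u i ^ 2 with hq
  have hL0 : 0 ≤ L := Finset.sum_nonneg fun i _ => abs_nonneg _
  have hq0 : 0 ≤ q := Finset.sum_nonneg fun i _ => sq_nonneg _
  have hell : ∀ x : Fin n → ℝ, |∑ i, u i * x i| ≤ L * ‖x‖ := by
    intro x
    rw [hL, Finset.sum_mul]
    refine (Finset.abs_sum_le_sum_abs _ _).trans (Finset.sum_le_sum fun i _ => ?_)
    rw [abs_mul]
    exact mul_le_mul_of_nonneg_left (norm_le_pi_norm x i) (abs_nonneg _)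
  have hint : Integrable H (stdG n) :=
    ((stdG_exp_integrable n a).const_mul C).mono' hH.aestronglyMeasurable (ae_of_all _ hb)
  have hA : HasDerivAt (fun s : ℝ => ∫ x, H (x + s • u) ∂(stdG n)) (∫ x, D x ∂(stdG n)) 0 := by
    refine (hasDerivAt_integral_of_dominated_loc_of_lip (Metric.ball_mem_nhds (0:ℝ) one_pos)
      (bound := fun x => C * Real.exp (a * (2 * ‖u‖)) * ‖u‖ * Real.exp ((2 * a) * ‖x‖))
      (Eventually.of_forall fun s => ?_) ?_ hD ?_ ?_ hd).2
    · exact (hH.comp (by fun_prop)).aestronglyMeasurable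
    · simpa using hint
    · refine ae_of_all _ fun x => ?_
      refine LipschitzOnWith.of_dist_le_mul fun s hs t ht => ?_
      rw [Real.dist_eq, Real.dist_eq, Real.coe_nnabs]
      rw [mem_ball_zero_iff, Real.norm_eq_abs] at hs ht
      refine (hl _ _).trans ?_
      have e1 : x + s • u - (x + t • u) = (s - t) • u := by rw [sub_smul]; abel
      rw [e1, norm_smul, Real.norm_eq_abs, abs_of_nonneg (a := _ * Real.exp _) (by positivity)]
      have b : ∀ s : ℝ, |s| < 1 → ‖x + s • u‖ ≤ ‖x‖ + ‖u‖ := by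
        intro s hs
        refine (norm_add_le _ _).trans ?_
        rw [norm_smul, Real.norm_eq_abs]
        nlinarith [norm_nonneg u]
      have e2 : Real.exp (a * (‖x + s • u‖ + ‖x + t • u‖)) ≤
          Real.exp (a * (2 * ‖u‖)) * Real.exp ((2 * a) * ‖x‖) := by
        rw [← Real.exp_add]
        refine Real.exp_le_exp.2 ?_
        nlinarith [b s hs, b t ht]
      calc C * Real.exp (a * (‖x + s • u‖ + ‖x + t • u‖)) * (|s - t| * ‖u‖)
          ≤ C * (Real.exp (a * (2 * ‖u‖)) * Real.exp ((2 * a) * ‖x‖)) * (|s - t| * ‖u‖) := by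
            gcongr
        _ = _ := by ring
    · exact (stdG_exp_integrable n (2 * a)).const_mul _
  have hB : HasDerivAt (fun s : ℝ => ∫ x,
      Real.exp (s * (∑ i, u i * x i) - s ^ 2 * q / 2) * H x ∂(stdG n))
      (∫ x, (∑ i, u i * x i) * H x ∂(stdG n)) 0 := by
    have key := (hasDerivAt_integral_of_dominated_loc_of_deriv_le (μ := stdG n)
      (F := fun s x => Real.exp (s * (∑ i, u i * x i) - s ^ 2 * q / 2) * H x)
      (F' := fun s x => Real.exp (s * (∑ i, u i * x i) - s ^ 2 * q / 2) *
        ((∑ i, u i * x i) - s * q) * H x) (Metric.ball_mem_nhds (0:ℝ) one_pos)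
      (bound := fun x => (L + q) * C * Real.exp ((L + 1 + a) * ‖x‖))
      (Eventually.of_forall fun s => ?_) ?_ ?_ ?_ ?_ ?_).2
    · simpa using key
    · exact Continuous.aestronglyMeasurable (by fun_prop)
    · simpa using hint
    · exact Continuous.aestronglyMeasurable (by fun_prop)
    · refine ae_of_all _ fun x s hs => ?_
      rw [mem_ball_zero_iff, Real.norm_eq_abs] at hs
      rw [Real.norm_eq_abs, abs_mul, abs_mul, Real.abs_exp]
      have f1 : Real.exp (s * (∑ i, u i * x i) - s ^ 2 * q / 2) ≤ Real.exp (L * ‖x‖) := by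
        refine Real.exp_le_exp.2 ?_
        have : s * (∑ i, u i * x i) ≤ L * ‖x‖ := by
          refine (le_abs_self _).trans ?_
          rw [abs_mul]
          nlinarith [hell x, abs_nonneg (∑ i, u i * x i), abs_nonneg s]
        nlinarith [sq_nonneg s, mul_nonneg (sq_nonneg s) hq0]
      have f2 : |(∑ i, u i * x i) - s * q| ≤ (L + q) * Real.exp ‖x‖ := by
        have g1 : ‖x‖ ≤ Real.exp ‖x‖ := by linarith [Real.add_one_le_exp ‖x‖]
        have g2 : 1 ≤ Real.exp ‖x‖ := Real.one_le_exp (norm_nonneg _)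
        have g3 : |s * q| ≤ q := by
          rw [abs_mul, abs_of_nonneg hq0]; nlinarith
        have g4 := abs_sub (∑ i, u i * x i) (s * q)
        nlinarith [hell x]
      calc _ ≤ Real.exp (L * ‖x‖) * ((L + q) * Real.exp ‖x‖) * (C * Real.exp (a * ‖x‖)) := by
            gcongr
            exact hb x
        _ = (L + q) * C * (Real.exp (L * ‖x‖) * Real.exp ‖x‖ * Real.exp (a * ‖x‖)) := by ring
        _ = _ := by
            rw [← Real.exp_add, ← Real.exp_add]; congr 2; ring
    · exact (stdG_exp_integrable n _).const_mul _
    · refine ae_of_all _ fun x s _ => ?_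
      have h1 : HasDerivAt (fun s : ℝ => s * (∑ i, u i * x i) - s ^ 2 * q / 2)
          ((∑ i, u i * x i) - s * q) s := by
        have := ((hasDerivAt_id s).mul_const (∑ i, u i * x i)).sub
          ((((hasDerivAt_id s).pow 2).mul_const q).div_const 2)
        refine this.congr_deriv ?_
        simp; ring
      exact h1.exp.mul_const _
  have hAB : (fun s : ℝ => ∫ x, H (x + s • u) ∂(stdG n)) = fun s : ℝ => ∫ x,
      Real.exp (s * (∑ i, u i * x i) - s ^ 2 * q / 2) * H x ∂(stdG n) := by
    funext s
    rw [stdG_shift (s • u) H hH]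
    refine integral_congr_ae (ae_of_all _ fun x => ?_)
    simp only
    congr 2
    rw [Finset.sum_sub_distrib, hq, Finset.mul_sum, Finset.mul_sum, Finset.sum_div]
    simp [mul_pow, mul_assoc]
  rw [hAB] at hA
  exact hB.unique hA

/-- The vector of partial derivatives. -/
noncomputable def gradv {n : ℕ} (g : (Fin n → ℝ) → ℝ) (x : Fin n → ℝ) : Fin n → ℝ :=
  fun i => fderiv ℝ g x (Pi.single i 1)

lemma fderiv_eq_sum {n : ℕ} (g : (Fin n → ℝ) → ℝ) (x u : Fin n → ℝ) :
    fderiv ℝ g x u = ∑ i, gradv g x i * u i := by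
  conv_lhs => rw [pi_eq_sum_univ' u]
  rw [map_sum]
  refine Finset.sum_congr rfl fun i _ => ?_
  rw [map_smul, smul_eq_mul, mul_comm]
  rfl

lemma gradv_continuous {n : ℕ} {g : (Fin n → ℝ) → ℝ} (hg : ContDiff ℝ 1 g) :
    Continuous (gradv g) := by
  refine continuous_pi fun i => ?_
  exact (hg.continuous_fderiv one_ne_zero).clm_apply continuous_const

lemma gradv_norm_le {n : ℕ} (g : (Fin n → ℝ) → ℝ) (x : Fin n → ℝ) :
    ‖gradv g x‖ ≤ ‖fderiv ℝ g x‖ := by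
  refine (pi_norm_le_iff_of_nonneg (norm_nonneg _)).2 fun i => ?_
  refine ((fderiv ℝ g x).le_opNorm _).trans ?_
  simp [Pi.norm_single]

lemma g_lip {n : ℕ} {g : (Fin n → ℝ) → ℝ} (hg : ContDiff ℝ 1 g) {C : ℝ} (hC : 0 ≤ C)
    (hC1 : ∀ x, ‖fderiv ℝ g x‖ ≤ C * Real.exp ‖x‖) (x y : Fin n → ℝ) :
    |g x - g y| ≤ C * Real.exp (‖x‖ + ‖y‖) * ‖x - y‖ := by
  have h := (convex_closedBall (0 : Fin n → ℝ) (‖x‖ + ‖y‖)).norm_image_sub_le_of_norm_fderiv_le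
    (𝕜 := ℝ) (f := g) (C := C * Real.exp (‖x‖ + ‖y‖))
    (fun z _ => (hg.differentiable one_ne_zero) z) (fun z hz => ?_)
    (x := y) (y := x) (by simp) (by simp)
  · exact h
  · rw [mem_closedBall_zero_iff] at hz
    exact (hC1 z).trans (mul_le_mul_of_nonneg_left (Real.exp_le_exp.2 hz) hC)

lemma rot_norm_le {n : ℕ} (θ : ℝ) (z w : Fin n → ℝ) :
    ‖Real.cos θ • z + Real.sin θ • w‖ ≤ ‖z‖ + ‖w‖ := by
  refine (norm_add_le _ _).trans ?_
  rw [norm_smul, norm_smul, Real.norm_eq_abs, Real.norm_eq_abs]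
  nlinarith [norm_nonneg z, norm_nonneg w, Real.abs_cos_le_one θ, Real.abs_sin_le_one θ]

lemma rot_norm_le' {n : ℕ} (θ : ℝ) (z w : Fin n → ℝ) :
    ‖-Real.sin θ • z + Real.cos θ • w‖ ≤ ‖z‖ + ‖w‖ := by
  refine (norm_add_le _ _).trans ?_
  rw [norm_smul, norm_smul, Real.norm_eq_abs, Real.norm_eq_abs, abs_neg]
  nlinarith [norm_nonneg z, norm_nonneg w, Real.abs_cos_le_one θ, Real.abs_sin_le_one θ]

lemma rot_norm_le'' {n : ℕ} (θ : ℝ) (z w : Fin n → ℝ) :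
    ‖Real.cos θ • z - Real.sin θ • w‖ ≤ ‖z‖ + ‖w‖ := by
  refine (norm_sub_le _ _).trans ?_
  rw [norm_smul, norm_smul, Real.norm_eq_abs, Real.norm_eq_abs]
  nlinarith [norm_nonneg z, norm_nonneg w, Real.abs_cos_le_one θ, Real.abs_sin_le_one θ]

lemma prod_integrable {n : ℕ} (h : (Fin n → ℝ) × (Fin n → ℝ) → ℝ) (A a b : ℝ)
    (hm : AEStronglyMeasurable h ((stdG n).prod (stdG n)))
    (hb : ∀ p, |h p| ≤ A * (Real.exp (a * ‖p.1‖) * Real.exp (b * ‖p.2‖))) :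
    Integrable h ((stdG n).prod (stdG n)) :=
  (((stdG_exp_integrable n a).mul_prod (stdG_exp_integrable n b)).const_mul A).mono' hm
    (ae_of_all _ hb)

lemma prod_integrable_theta {n : ℕ} (m : Measure ℝ) [IsFiniteMeasure m]
    (h : ℝ × ((Fin n → ℝ) × (Fin n → ℝ)) → ℝ) (A a b : ℝ)
    (hm : AEStronglyMeasurable h (m.prod ((stdG n).prod (stdG n))))
    (hb : ∀ p, |h p| ≤ A * (Real.exp (a * ‖p.2.1‖) * Real.exp (b * ‖p.2.2‖))) :
    Integrable h (m.prod ((stdG n).prod (stdG n))) := by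
  have h1 : Integrable (fun p : ℝ × ((Fin n → ℝ) × (Fin n → ℝ)) =>
      (A : ℝ) * (Real.exp (a * ‖p.2.1‖) * Real.exp (b * ‖p.2.2‖)))
      (m.prod ((stdG n).prod (stdG n))) :=
    Integrable.mul_prod (f := fun _ : ℝ => A) (integrable_const A)
      ((stdG_exp_integrable n a).mul_prod (stdG_exp_integrable n b))
  exact h1.mono' hm (ae_of_all _ hb)

lemma F_bound {n : ℕ} {g : (Fin n → ℝ) → ℝ} {C : ℝ}
    (hC0 : ∀ x, |g x| ≤ C * Real.exp ‖x‖) {f : ℝ → ℝ} {K : NNReal} (hf : LipschitzWith K f)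
    (x : Fin n → ℝ) : |f (g x)| ≤ (|f 0| + K * C) * Real.exp ‖x‖ := by
  have h1 : |f (g x) - f 0| ≤ K * |g x| := by
    have := hf.dist_le_mul (g x) 0
    simpa [Real.dist_eq] using this
  have h2 : |f (g x)| ≤ |f (g x) - f 0| + |f 0| := by
    have := abs_add_le (f (g x) - f 0) (f 0)
    simpa using this
  have h3 := hC0 x
  have h4 : 1 ≤ Real.exp ‖x‖ := Real.one_le_exp (norm_nonneg _)
  have h5 : (K : ℝ) * |g x| ≤ K * (C * Real.exp ‖x‖) := mul_le_mul_of_nonneg_left h3 K.2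
  nlinarith [abs_nonneg (f 0)]

lemma deriv_bound {f : ℝ → ℝ} {K : NNReal} (hf : LipschitzWith K f) (y : ℝ) :
    |deriv f y| ≤ K := norm_deriv_le_of_lipschitz hf

lemma B_bound {n : ℕ} {g : (Fin n → ℝ) → ℝ} {C : ℝ} (hC : 0 ≤ C)
    (hC1 : ∀ x, ‖fderiv ℝ g x‖ ≤ C * Real.exp ‖x‖) (x y : Fin n → ℝ) :
    |fderiv ℝ g x (gradv g y)| ≤ C ^ 2 * (Real.exp ‖x‖ * Real.exp ‖y‖) := by
  have h1 := (fderiv ℝ g x).le_opNorm (gradv g y)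
  have h2 := (gradv_norm_le g y).trans (hC1 y)
  calc |fderiv ℝ g x (gradv g y)| ≤ ‖fderiv ℝ g x‖ * ‖gradv g y‖ := h1
    _ ≤ (C * Real.exp ‖x‖) * (C * Real.exp ‖y‖) := by
      gcongr
      exact hC1 x
    _ = _ := by ring

/-- Integration by parts at a fixed angle. -/
lemma theta_ibp {n : ℕ} {g : (Fin n → ℝ) → ℝ} (hg : ContDiff ℝ 1 g) {C : ℝ} (hC : 0 ≤ C)
    (hC0 : ∀ x, |g x| ≤ C * Real.exp ‖x‖)
    (hC1 : ∀ x, ‖fderiv ℝ g x‖ ≤ C * Real.exp ‖x‖)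
    {f : ℝ → ℝ} {K : NNReal} (hf : LipschitzWith K f)
    (hae : ∀ᵐ v ∂(stdG n), HasDerivAt f (deriv f (g v)) (g v)) (θ : ℝ) :
    ∫ p, fderiv ℝ g (Real.cos θ • p.1 + Real.sin θ • p.2)
        (-Real.sin θ • p.1 + Real.cos θ • p.2) * f (g p.1) ∂((stdG n).prod (stdG n)) =
    ∫ p, -Real.sin θ * (deriv f (g p.1) *
        fderiv ℝ g p.1 (gradv g (Real.cos θ • p.1 + Real.sin θ • p.2)))
        ∂((stdG n).prod (stdG n)) := by
  have hfd : Continuous (fderiv ℝ g) := hg.continuous_fderiv one_ne_zero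
  have hgc : Continuous g := hg.continuous
  have hgr : Continuous (gradv g) := gradv_continuous hg
  have hfc : Continuous f := hf.continuous
  have hdm : Measurable (deriv f) := measurable_deriv f
  have hcs : Real.cos θ * Real.cos θ + Real.sin θ * Real.sin θ = 1 := by
    nlinarith [Real.cos_sq_add_sin_sq θ]
  set R : (Fin n → ℝ) × (Fin n → ℝ) → (Fin n → ℝ) × (Fin n → ℝ) := fun p =>
      (Real.cos θ • p.1 + Real.sin θ • p.2, -Real.sin θ • p.1 + Real.cos θ • p.2) with hR
  have hRm : MeasurePreserving R ((stdG n).prod (stdG n)) ((stdG n).prod (stdG n)) :=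
    stdG_rotation n θ
  have hback : ∀ p, Real.cos θ • (R p).1 - Real.sin θ • (R p).2 = p.1 := by
    intro p
    ext i
    simp only [hR, Pi.sub_apply, Pi.smul_apply, Pi.add_apply, smul_eq_mul]
    linear_combination (p.1 i) * hcs
  set Φ : (Fin n → ℝ) × (Fin n → ℝ) → ℝ := fun q =>
    fderiv ℝ g q.1 q.2 * f (g (Real.cos θ • q.1 - Real.sin θ • q.2)) with hΦ
  set Ψ : (Fin n → ℝ) × (Fin n → ℝ) → ℝ := fun q =>
    -Real.sin θ * (deriv f (g (Real.cos θ • q.1 - Real.sin θ • q.2)) *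
        fderiv ℝ g (Real.cos θ • q.1 - Real.sin θ • q.2) (gradv g q.1)) with hΨ
  have hΦc : Continuous Φ := by
    refine Continuous.mul ?_ (by fun_prop)
    exact (hfd.comp continuous_fst).clm_apply continuous_snd
  have hΨm : Measurable Ψ := by
    refine Measurable.const_mul (Measurable.mul ?_ ?_) _
    · exact hdm.comp (Continuous.measurable (by fun_prop))
    · refine Continuous.measurable ?_
      exact (hfd.comp (by fun_prop)).clm_apply (hgr.comp continuous_fst)
  have hΦi : Integrable Φ ((stdG n).prod (stdG n)) := by
    refine prod_integrable Φ (C * (|f 0| + K * C)) 2 2 hΦc.aestronglyMeasurable fun q => ?_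
    have h1 : |fderiv ℝ g q.1 q.2| ≤ C * Real.exp ‖q.1‖ * Real.exp ‖q.2‖ := by
      refine ((fderiv ℝ g q.1).le_opNorm q.2).trans ?_
      have : ‖q.2‖ ≤ Real.exp ‖q.2‖ := by linarith [Real.add_one_le_exp ‖q.2‖]
      gcongr
      exact hC1 _
    have h2 : |f (g (Real.cos θ • q.1 - Real.sin θ • q.2))| ≤
        (|f 0| + K * C) * (Real.exp ‖q.1‖ * Real.exp ‖q.2‖) := by
      refine (F_bound hC0 hf _).trans ?_
      rw [← Real.exp_add]
      have := rot_norm_le'' θ q.1 q.2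
      gcongr
    calc |Φ q| = |fderiv ℝ g q.1 q.2| * |f (g (Real.cos θ • q.1 - Real.sin θ • q.2))| :=
          abs_mul _ _
      _ ≤ (C * Real.exp ‖q.1‖ * Real.exp ‖q.2‖) *
          ((|f 0| + K * C) * (Real.exp ‖q.1‖ * Real.exp ‖q.2‖)) := by gcongr
      _ = C * (|f 0| + K * C) * (Real.exp (2 * ‖q.1‖) * Real.exp (2 * ‖q.2‖)) := by
          rw [two_mul, two_mul, Real.exp_add, Real.exp_add]; ring
  have hΨi : Integrable Ψ ((stdG n).prod (stdG n)) := by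
    refine prod_integrable Ψ (K * C ^ 2) 2 1 hΨm.aestronglyMeasurable fun q => ?_
    have h1 := B_bound hC hC1 (Real.cos θ • q.1 - Real.sin θ • q.2) q.1
    have h2 := deriv_bound hf (g (Real.cos θ • q.1 - Real.sin θ • q.2))
    have h3 : Real.exp ‖Real.cos θ • q.1 - Real.sin θ • q.2‖ ≤
        Real.exp ‖q.1‖ * Real.exp ‖q.2‖ := by
      rw [← Real.exp_add]
      exact Real.exp_le_exp.2 (rot_norm_le'' θ q.1 q.2)
    have h4 : |-Real.sin θ| ≤ 1 := by rw [abs_neg]; exact Real.abs_sin_le_one θ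
    calc |Ψ q| = |-Real.sin θ| * (|deriv f (g (Real.cos θ • q.1 - Real.sin θ • q.2))| *
        |fderiv ℝ g (Real.cos θ • q.1 - Real.sin θ • q.2) (gradv g q.1)|) := by
          rw [← abs_mul, ← abs_mul]
      _ ≤ 1 * (K * (C ^ 2 * (Real.exp ‖q.1‖ * Real.exp ‖q.2‖ * Real.exp ‖q.1‖))) := by
          gcongr
          refine h1.trans ?_
          gcongr
      _ = _ := by
          rw [two_mul, one_mul, Real.exp_add]; ring
  have e1 : ∫ p, Φ (R p) ∂((stdG n).prod (stdG n)) = ∫ q, Φ q ∂((stdG n).prod (stdG n)) := by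
    conv_rhs => rw [← hRm.map_eq]
    exact (integral_map hRm.measurable.aemeasurable hΦc.aestronglyMeasurable).symm
  have e2 : ∫ p, Ψ (R p) ∂((stdG n).prod (stdG n)) = ∫ q, Ψ q ∂((stdG n).prod (stdG n)) := by
    conv_rhs => rw [← hRm.map_eq]
    exact (integral_map hRm.measurable.aemeasurable hΨm.aestronglyMeasurable).symm
  have e3 : ∫ q, Φ q ∂((stdG n).prod (stdG n)) = ∫ q, Ψ q ∂((stdG n).prod (stdG n)) := by
    rw [integral_prod _ hΦi, integral_prod _ hΨi]
    have hgood : ∀ᵐ q ∂((stdG n).prod (stdG n)),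
        HasDerivAt f (deriv f (g (Real.cos θ • q.1 - Real.sin θ • q.2)))
          (g (Real.cos θ • q.1 - Real.sin θ • q.2)) := by
      have hq := (measurePreserving_fst (μ := stdG n) (ν := stdG n)).comp (stdG_rotation n (-θ))
      have := hq.quasiMeasurePreserving.ae hae
      refine this.mono fun q hq => ?_
      simpa [sub_eq_add_neg] using hq
    refine integral_congr_ae ?_
    filter_upwards [Measure.ae_ae_of_ae_prod hgood] with z hz
    have hcoef : 0 ≤ (|f 0| + K * C) + K * C := by positivity
    have hib := stdG_ibp (gradv g z) (fun w => f (g (Real.cos θ • z - Real.sin θ • w)))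
      (fun w => Ψ (z, w)) (by fun_prop) (hΨm.comp measurable_prodMk_left).aestronglyMeasurable
      (((|f 0| + K * C) + K * C) * Real.exp (2 * ‖z‖)) 1 (by positivity) zero_le_one ?_ ?_ ?_
    · rw [← hib]
      refine integral_congr_ae (ae_of_all _ fun w => ?_)
      simp only [hΦ]
      rw [fderiv_eq_sum]
    · intro w
      refine (F_bound hC0 hf _).trans ?_
      have h1 : Real.exp ‖Real.cos θ • z - Real.sin θ • w‖ ≤
          Real.exp (2 * ‖z‖) * Real.exp (1 * ‖w‖) := by
        rw [← Real.exp_add]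
        refine Real.exp_le_exp.2 ?_
        linarith [rot_norm_le'' θ z w, norm_nonneg z]
      rw [mul_assoc]
      have : (0:ℝ) ≤ K * C := by positivity
      gcongr
      linarith
    · intro w w'
      have h0 : |f (g (Real.cos θ • z - Real.sin θ • w)) -
          f (g (Real.cos θ • z - Real.sin θ • w'))| ≤
          K * |g (Real.cos θ • z - Real.sin θ • w) - g (Real.cos θ • z - Real.sin θ • w')| := by
        have := hf.dist_le_mul (g (Real.cos θ • z - Real.sin θ • w))
          (g (Real.cos θ • z - Real.sin θ • w'))
        simpa [Real.dist_eq] using this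
      have h1 := g_lip hg hC hC1 (Real.cos θ • z - Real.sin θ • w)
        (Real.cos θ • z - Real.sin θ • w')
      have h2 : ‖(Real.cos θ • z - Real.sin θ • w) - (Real.cos θ • z - Real.sin θ • w')‖ ≤
          ‖w - w'‖ := by
        have : (Real.cos θ • z - Real.sin θ • w) - (Real.cos θ • z - Real.sin θ • w') =
          -(Real.sin θ • (w - w')) := by rw [smul_sub]; abel
        rw [this, norm_neg, norm_smul, Real.norm_eq_abs]
        exact mul_le_of_le_one_left (norm_nonneg _) (Real.abs_sin_le_one θ)
      have h3 : Real.exp (‖Real.cos θ • z - Real.sin θ • w‖ +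
          ‖Real.cos θ • z - Real.sin θ • w'‖) ≤
          Real.exp (2 * ‖z‖) * Real.exp (1 * (‖w‖ + ‖w'‖)) := by
        rw [← Real.exp_add]
        refine Real.exp_le_exp.2 ?_
        linarith [rot_norm_le'' θ z w, rot_norm_le'' θ z w']
      refine h0.trans ?_
      calc _ ≤ K * (C * (Real.exp (2 * ‖z‖) * Real.exp (1 * (‖w‖ + ‖w'‖))) * ‖w - w'‖) := by
            refine mul_le_mul_of_nonneg_left (h1.trans ?_) K.2
            gcongr
        _ = (K * C) * (Real.exp (2 * ‖z‖) * Real.exp (1 * (‖w‖ + ‖w'‖)) * ‖w - w'‖) := by ring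
        _ ≤ (|f 0| + K * C + K * C) *
            (Real.exp (2 * ‖z‖) * Real.exp (1 * (‖w‖ + ‖w'‖)) * ‖w - w'‖) := by
            refine mul_le_mul_of_nonneg_right ?_ (by positivity)
            have : (0:ℝ) ≤ K * C := by positivity
            linarith [abs_nonneg (f 0)]
        _ = _ := by ring
    · filter_upwards [hz] with w hw
      have hlin : HasDerivAt (fun s : ℝ => Real.cos θ • z - Real.sin θ • (w + s • gradv g z))
          (-(Real.sin θ • gradv g z)) 0 := by
        have h1 : HasDerivAt (fun s : ℝ => s • gradv g z) (gradv g z) 0 := by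
          simpa using (hasDerivAt_id (0:ℝ)).smul_const (gradv g z)
        have h2 := ((h1.const_add w).const_smul (Real.sin θ)).const_sub (Real.cos θ • z)
        exact h2
      have hgd : HasDerivAt (fun s : ℝ =>
          g (Real.cos θ • z - Real.sin θ • (w + s • gradv g z)))
          (fderiv ℝ g (Real.cos θ • z - Real.sin θ • w) (-(Real.sin θ • gradv g z))) 0 := by
        refine HasFDerivAt.comp_hasDerivAt_of_eq (0:ℝ) ?_ hlin
          (y := Real.cos θ • z - Real.sin θ • w) (by simp)
        exact ((hg.differentiable one_ne_zero) _).hasFDerivAt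
      have hfg := HasDerivAt.comp_of_eq (0:ℝ) hw hgd (by simp)
      refine hfg.congr_deriv ?_
      simp only [hΨ, map_neg, map_smul, smul_eq_mul]
      ring
  calc _ = ∫ p, Φ (R p) ∂((stdG n).prod (stdG n)) := by
        refine integral_congr_ae (ae_of_all _ fun p => ?_)
        simp only [hΦ]
        rw [hback]
    _ = ∫ p, Ψ (R p) ∂((stdG n).prod (stdG n)) := by rw [e1, e3, e2]
    _ = _ := by
        refine integral_congr_ae (ae_of_all _ fun p => ?_)
        simp only [hΨ]
        rw [hback]

lemma S_eq {Ω : Type*} [MeasurableSpace Ω] (P : Measure Ω)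
    {n : ℕ} (V : Ω → (Fin n → ℝ)) (hV : Measurable V)
    (hlaw : P.map V = stdG n) {g : (Fin n → ℝ) → ℝ} (hg : ContDiff ℝ 1 g) (v : Fin n → ℝ) :
    chatterjeeS P V g v = ∫ θ in Set.Ioc 0 (π / 2), ∫ w, Real.sin θ *
      fderiv ℝ g v (gradv g (Real.cos θ • v + Real.sin θ • w)) ∂(stdG n) := by
  have hgr : Continuous (gradv g) := gradv_continuous hg
  unfold chatterjeeS
  have himg : (fun θ : ℝ => Real.cos θ ^ 2) '' Set.Ioo 0 (π / 2) = Set.Ioo 0 1 := by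
    ext t
    constructor
    · rintro ⟨θ, ⟨h0, h1⟩, rfl⟩
      have hc : 0 < Real.cos θ := Real.cos_pos_of_mem_Ioo ⟨by linarith, h1⟩
      have hs : 0 < Real.sin θ := Real.sin_pos_of_pos_of_lt_pi h0 (by linarith [Real.pi_pos])
      exact ⟨by positivity, by nlinarith [Real.cos_sq_add_sin_sq θ]⟩
    · rintro ⟨h0, h1⟩
      have hs1 : √t < 1 := by
        rw [Real.sqrt_lt' one_pos]; simpa using h1
      have hs0 : 0 < √t := Real.sqrt_pos.2 h0
      refine ⟨Real.arccos (√t), ⟨Real.arccos_pos.2 hs1, Real.arccos_lt_pi_div_two.2 hs0⟩, ?_⟩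
      simp only
      rw [Real.cos_arccos (by linarith) hs1.le, Real.sq_sqrt h0.le]
  have hinj : Set.InjOn (fun θ : ℝ => Real.cos θ ^ 2) (Set.Ioo 0 (π / 2)) := by
    intro a ha b hb hab
    have hca : 0 < Real.cos a := Real.cos_pos_of_mem_Ioo ⟨by linarith [ha.1, Real.pi_pos], ha.2⟩
    have hcb : 0 < Real.cos b := Real.cos_pos_of_mem_Ioo ⟨by linarith [hb.1, Real.pi_pos], hb.2⟩
    have : Real.cos a = Real.cos b := (pow_left_inj₀ hca.le hcb.le two_ne_zero).1 hab
    exact Real.injOn_cos ⟨ha.1.le, by linarith [ha.2, Real.pi_pos]⟩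
      ⟨hb.1.le, by linarith [hb.2, Real.pi_pos]⟩ this
  have hder : ∀ θ ∈ Set.Ioo 0 (π / 2), HasDerivWithinAt (fun θ : ℝ => Real.cos θ ^ 2)
      (2 * Real.cos θ * (-Real.sin θ)) (Set.Ioo 0 (π / 2)) θ := by
    intro θ _
    have := (Real.hasDerivAt_cos θ).pow 2
    refine (this.congr_deriv ?_).hasDerivWithinAt
    simp
  rw [integral_Ioc_eq_integral_Ioo, ← himg,
    integral_image_eq_integral_abs_deriv_smul measurableSet_Ioo hder hinj,
    integral_Ioc_eq_integral_Ioo]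
  refine setIntegral_congr_fun measurableSet_Ioo fun θ hθ => ?_
  have hc : 0 < Real.cos θ := Real.cos_pos_of_mem_Ioo ⟨by linarith [hθ.1, Real.pi_pos], hθ.2⟩
  have hs : 0 < Real.sin θ :=
    Real.sin_pos_of_pos_of_lt_pi hθ.1 (by linarith [hθ.2, Real.pi_pos])
  have h1 : √(Real.cos θ ^ 2) = Real.cos θ := Real.sqrt_sq hc.le
  have h2 : √(1 - Real.cos θ ^ 2) = Real.sin θ := by
    rw [← Real.sin_sq]; exact Real.sqrt_sq hs.le
  simp only [h1, h2, smul_eq_mul]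
  rw [integral_const_mul]
  have h3 : ∫ w, fderiv ℝ g v (gradv g (Real.cos θ • v + Real.sin θ • w)) ∂(stdG n) =
      ∫ ω, (∑ i : Fin n, fderiv ℝ g v (Pi.single i 1) *
      fderiv ℝ g (Real.cos θ • v + Real.sin θ • V ω) (Pi.single i 1)) ∂P := by
    rw [← hlaw, integral_map hV.aemeasurable (Continuous.aestronglyMeasurable (by fun_prop))]
    refine integral_congr_ae (ae_of_all _ fun ω => ?_)
    simp only
    rw [fderiv_eq_sum]
    rfl
  rw [h3, abs_mul, abs_neg, abs_of_pos hs, abs_of_pos (by positivity), ← mul_assoc]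
  congr 1
  field_simp

set_option maxHeartbeats 1000000 in
lemma main_aux {n : ℕ} {g : (Fin n → ℝ) → ℝ} (hg : ContDiff ℝ 1 g) {C : ℝ} (hC : 0 ≤ C)
    (hC0 : ∀ x, |g x| ≤ C * Real.exp ‖x‖)
    (hC1 : ∀ x, ‖fderiv ℝ g x‖ ≤ C * Real.exp ‖x‖)
    (hmean : ∫ v, g v ∂(stdG n) = 0)
    {f : ℝ → ℝ} {K : NNReal} (hf : LipschitzWith K f)
    (hae : ∀ᵐ v ∂(stdG n), HasDerivAt f (deriv f (g v)) (g v)) :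
    ∫ v, g v * f (g v) ∂(stdG n) =
      ∫ v, (∫ θ in Set.Ioc 0 (π / 2), ∫ w, Real.sin θ *
      fderiv ℝ g v (gradv g (Real.cos θ • v + Real.sin θ • w)) ∂(stdG n)) *
        deriv f (g v) ∂(stdG n) := by
  have hfd : Continuous (fderiv ℝ g) := hg.continuous_fderiv one_ne_zero
  have hgc : Continuous g := hg.continuous
  have hgr : Continuous (gradv g) := gradv_continuous hg
  have hfc : Continuous f := hf.continuous
  have hdm : Measurable (deriv f) := measurable_deriv f
  have hpi : (0:ℝ) ≤ π / 2 := by positivity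
  set m : Measure ℝ := volume.restrict (Set.Ioc 0 (π / 2)) with hm
  set ν := (stdG n).prod (stdG n) with hν
  set A : ℝ → (Fin n → ℝ) × (Fin n → ℝ) → ℝ := fun θ p =>
    fderiv ℝ g (Real.cos θ • p.1 + Real.sin θ • p.2)
        (-Real.sin θ • p.1 + Real.cos θ • p.2) * f (g p.1) with hA
  set B : ℝ → (Fin n → ℝ) × (Fin n → ℝ) → ℝ := fun θ p =>
    -Real.sin θ * (deriv f (g p.1) *
        fderiv ℝ g p.1 (gradv g (Real.cos θ • p.1 + Real.sin θ • p.2))) with hB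
  have hAc : Continuous (Function.uncurry A) := by
    refine Continuous.mul ?_ (by fun_prop)
    exact (hfd.comp (by fun_prop)).clm_apply (by fun_prop)
  have hBm : Measurable (Function.uncurry B) := by
    refine Measurable.mul (by fun_prop) (Measurable.mul ?_ ?_)
    · exact hdm.comp (Continuous.measurable (by fun_prop))
    · refine Continuous.measurable ?_
      exact (hfd.comp (by fun_prop)).clm_apply (by fun_prop)
  have hAi : Integrable (Function.uncurry A) (m.prod ν) := by
    refine prod_integrable_theta m _ (C * (|f 0| + K * C)) 3 2 hAc.aestronglyMeasurable ?_
    rintro ⟨θ, p⟩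
    have h1 : |(fderiv ℝ g (Real.cos θ • p.1 + Real.sin θ • p.2)
        (-Real.sin θ • p.1 + Real.cos θ • p.2) : ℝ)| ≤
        C * Real.exp (‖p.1‖ + ‖p.2‖) * Real.exp (‖p.1‖ + ‖p.2‖) := by
      refine ((fderiv ℝ g (Real.cos θ • p.1 + Real.sin θ • p.2)).le_opNorm _).trans ?_
      have i1 : ‖fderiv ℝ g (Real.cos θ • p.1 + Real.sin θ • p.2)‖ ≤
          C * Real.exp (‖p.1‖ + ‖p.2‖) := by
        refine (hC1 _).trans ?_
        have := rot_norm_le θ p.1 p.2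
        gcongr
      have i2 : ‖-Real.sin θ • p.1 + Real.cos θ • p.2‖ ≤ Real.exp (‖p.1‖ + ‖p.2‖) := by
        linarith [rot_norm_le' θ p.1 p.2, Real.add_one_le_exp (‖p.1‖ + ‖p.2‖)]
      gcongr
    have h2 := F_bound hC0 hf p.1
    have h0 : Function.uncurry A (θ, p) = (fderiv ℝ g (Real.cos θ • p.1 + Real.sin θ • p.2)
        (-Real.sin θ • p.1 + Real.cos θ • p.2)) * (f (g p.1)) := rfl
    rw [h0, abs_mul]
    calc _ ≤ (C * Real.exp (‖p.1‖ + ‖p.2‖) * Real.exp (‖p.1‖ + ‖p.2‖)) *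
          ((|f 0| + K * C) * Real.exp ‖p.1‖) := by gcongr
      _ = C * (|f 0| + K * C) *
          (Real.exp (‖p.1‖ + ‖p.2‖) * Real.exp (‖p.1‖ + ‖p.2‖) * Real.exp ‖p.1‖) := by ring
      _ = C * (|f 0| + K * C) * (Real.exp (3 * ‖p.1‖) * Real.exp (2 * ‖p.2‖)) := by
          rw [← Real.exp_add, ← Real.exp_add, ← Real.exp_add]; congr 2; ring
  have hBb : ∀ θ (p : (Fin n → ℝ) × (Fin n → ℝ)),
      |Real.sin θ * fderiv ℝ g p.1 (gradv g (Real.cos θ • p.1 + Real.sin θ • p.2))| ≤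
      C ^ 2 * (Real.exp (2 * ‖p.1‖) * Real.exp (1 * ‖p.2‖)) := by
    intro θ p
    have h1 := B_bound hC hC1 p.1 (Real.cos θ • p.1 + Real.sin θ • p.2)
    have h3 : Real.exp ‖Real.cos θ • p.1 + Real.sin θ • p.2‖ ≤
        Real.exp ‖p.1‖ * Real.exp ‖p.2‖ := by
      rw [← Real.exp_add]
      exact Real.exp_le_exp.2 (rot_norm_le θ p.1 p.2)
    rw [abs_mul]
    calc _ ≤ 1 * (C ^ 2 * (Real.exp ‖p.1‖ * (Real.exp ‖p.1‖ * Real.exp ‖p.2‖))) := by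
          gcongr
          · exact Real.abs_sin_le_one θ
          · refine h1.trans ?_
            gcongr
      _ = _ := by
          rw [two_mul, one_mul, one_mul, Real.exp_add]; ring
  have hBi : Integrable (Function.uncurry B) (m.prod ν) := by
    refine prod_integrable_theta m _ (K * C ^ 2) 2 1 hBm.aestronglyMeasurable ?_
    rintro ⟨θ, p⟩
    have h2 := deriv_bound hf (g p.1)
    have h5 : Function.uncurry B (θ, p) = -(deriv f (g p.1) * (Real.sin θ *
        fderiv ℝ g p.1 (gradv g (Real.cos θ • p.1 + Real.sin θ • p.2)))) := by
      simp only [hB, Function.uncurry]; ring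
    rw [h5, abs_neg, abs_mul, mul_assoc]
    gcongr
    exact hBb θ p
  have hgi : Integrable g (stdG n) :=
    ((stdG_exp_integrable n 1).const_mul C).mono' hgc.aestronglyMeasurable
      (ae_of_all _ fun x => by simpa using hC0 x)
  have hFi : Integrable (fun v => f (g v)) (stdG n) :=
    ((stdG_exp_integrable n 1).const_mul (|f 0| + K * C)).mono'
      (hfc.comp hgc).aestronglyMeasurable
      (ae_of_all _ fun x => by simpa using F_bound hC0 hf x)
  have hgFi : Integrable (fun v => g v * f (g v)) (stdG n) := by
    refine ((stdG_exp_integrable n 2).const_mul (C * (|f 0| + K * C))).mono'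
      (hgc.mul (hfc.comp hgc)).aestronglyMeasurable (ae_of_all _ fun x => ?_)
    rw [norm_mul]
    calc ‖g x‖ * ‖f (g x)‖ ≤ (C * Real.exp ‖x‖) * ((|f 0| + K * C) * Real.exp ‖x‖) := by
          gcongr
          · exact hC0 x
          · exact F_bound hC0 hf x
      _ = _ := by rw [two_mul, Real.exp_add]; ring
  -- pointwise fundamental theorem of calculus
  have hftc : ∀ p : (Fin n → ℝ) × (Fin n → ℝ),
      ∫ θ, A θ p ∂m = g p.2 * f (g p.1) - g p.1 * f (g p.1) := by
    intro p
    rw [hm, ← intervalIntegral.integral_of_le hpi]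
    have hd : ∀ θ : ℝ, HasDerivAt (fun θ : ℝ =>
        g (Real.cos θ • p.1 + Real.sin θ • p.2) * f (g p.1)) (A θ p) θ := by
      intro θ
      have h1 : HasDerivAt (fun θ : ℝ => Real.cos θ • p.1 + Real.sin θ • p.2)
          (-Real.sin θ • p.1 + Real.cos θ • p.2) θ :=
        ((Real.hasDerivAt_cos θ).smul_const p.1).add ((Real.hasDerivAt_sin θ).smul_const p.2)
      have h2 := ((hg.differentiable one_ne_zero)
        (Real.cos θ • p.1 + Real.sin θ • p.2)).hasFDerivAt.comp_hasDerivAt θ h1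
      exact h2.mul_const _
    have hpair : Continuous (fun θ : ℝ => ((θ, p) : ℝ × ((Fin n → ℝ) × (Fin n → ℝ)))) := by
      fun_prop
    have hcA0 := hAc.comp hpair
    have hcA : Continuous (fun θ => A θ p) := hcA0
    rw [intervalIntegral.integral_eq_sub_of_hasDerivAt (fun θ _ => hd θ)
      (hcA.intervalIntegrable _ _)]
    simp
  have s1 : ∫ v, g v * f (g v) ∂(stdG n) = -∫ p, ∫ θ, A θ p ∂m ∂ν := by
    simp_rw [hftc]
    have i1 : Integrable (fun p : (Fin n → ℝ) × (Fin n → ℝ) => g p.2 * f (g p.1)) ν := by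
      have := hFi.mul_prod hgi
      simpa only [mul_comm] using this
    have i2 : Integrable (fun p : (Fin n → ℝ) × (Fin n → ℝ) => g p.1 * f (g p.1)) ν :=
      hgFi.comp_fst (stdG n)
    rw [integral_sub i1 i2]
    have j1 : ∫ p, g p.2 * f (g p.1) ∂ν = 0 := by
      have := integral_prod_mul (μ := stdG n) (ν := stdG n) (fun v => f (g v)) g
      rw [hmean, mul_zero] at this
      rw [← this]
      refine integral_congr_ae (ae_of_all _ fun p => mul_comm _ _)
    have j2 : ∫ p, g p.1 * f (g p.1) ∂ν = ∫ v, g v * f (g v) ∂(stdG n) := by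
      have := integral_fun_fst (μ := stdG n) (ν := stdG n) (fun v => g v * f (g v))
      rw [this]; simp
    rw [j1, j2]; ring
  have s2 : ∫ p, ∫ θ, A θ p ∂m ∂ν = ∫ p, ∫ θ, B θ p ∂m ∂ν := by
    rw [← integral_integral_swap hAi, ← integral_integral_swap hBi]
    refine integral_congr_ae (ae_of_all _ fun θ => ?_)
    exact theta_ibp hg hC hC0 hC1 hf hae θ
  have s3 : ∫ p, ∫ θ, B θ p ∂m ∂ν = ∫ v, ∫ w, ∫ θ, B θ (v, w) ∂m ∂(stdG n) ∂(stdG n) :=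
    integral_prod _ hBi.integral_prod_right
  rw [s1, s2, s3, ← integral_neg]
  refine integral_congr_ae (ae_of_all _ fun v => ?_)
  simp only
  have hswap : Integrable (Function.uncurry fun (w : Fin n → ℝ) (θ : ℝ) => Real.sin θ *
      fderiv ℝ g v (gradv g (Real.cos θ • v + Real.sin θ • w))) ((stdG n).prod m) := by
    have h1 : Integrable (fun q : (Fin n → ℝ) × ℝ =>
        Real.exp (1 * ‖q.1‖) * (C ^ 2 * Real.exp (2 * ‖v‖))) ((stdG n).prod m) :=
      Integrable.mul_prod (f := fun w : Fin n → ℝ => Real.exp (1 * ‖w‖))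
        (g := fun _ : ℝ => C ^ 2 * Real.exp (2 * ‖v‖))
        (stdG_exp_integrable n 1) (integrable_const _)
    refine h1.mono' (Continuous.aestronglyMeasurable ?_) (ae_of_all _ fun q => ?_)
    · refine Continuous.mul (by fun_prop) ?_
      exact (fderiv ℝ g v).continuous.comp (hgr.comp (by fun_prop))
    · refine (hBb q.2 (v, q.1)).trans (le_of_eq ?_)
      ring
  have h6 : ∀ w, ∫ θ, B θ (v, w) ∂m = -(deriv f (g v)) * ∫ θ, Real.sin θ *
      fderiv ℝ g v (gradv g (Real.cos θ • v + Real.sin θ • w)) ∂m := by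
    intro w
    rw [← integral_const_mul]
    refine integral_congr_ae (ae_of_all _ fun θ => ?_)
    simp only [hB]; ring
  simp_rw [h6]
  rw [integral_const_mul, integral_integral_swap hswap]
  ring

/-- Chatterjee's identity: for `Y = g(V)` with `V` a standard Gaussian vector, `g` smooth with
subexponential growth of `g` and all its derivatives, `E[g(V)] = 0`, `E[g(V)²] = 1`, and the
law of `Y` absolutely continuous, one has `E[Y f(Y)] = E[S(V) f'(Y)]` for every Lipschitz `f`
with a.e. derivative `f'`. -/
theorem chatterjee_identity
    {Ω : Type*} [MeasurableSpace Ω] (P : Measure Ω) [IsProbabilityMeasure P]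
    {n : ℕ} (V : Ω → (Fin n → ℝ)) (hV : Measurable V)
    (hlaw : P.map V = Measure.pi (fun _ : Fin n => gaussianReal 0 1))
    (g : (Fin n → ℝ) → ℝ) (hg : ContDiff ℝ (⊤ : ℕ∞) g)
    (hgrowth : ∀ k : ℕ, ∀ ε > (0 : ℝ), ∃ c : ℝ, ∀ x,
      ‖iteratedFDeriv ℝ k g x‖ ≤ c * Real.exp (ε * ‖x‖))
    (hmean : ∫ ω, g (V ω) ∂P = 0)
    (hvar : ∫ ω, (g (V ω)) ^ 2 ∂P = 1)
    (habs : P.map (fun ω => g (V ω)) ≪ (volume : Measure ℝ))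
    (f f' : ℝ → ℝ) (K : NNReal) (hf : LipschitzWith K f)
    (hf' : ∀ᵐ x ∂(volume : Measure ℝ), HasDerivAt f (f' x) x) :
    ∫ ω, g (V ω) * f (g (V ω)) ∂P
      = ∫ ω, chatterjeeS P V g (V ω) * f' (g (V ω)) ∂P := by
  have hlaw' : P.map V = stdG n := hlaw
  have hg1 : ContDiff ℝ 1 g := hg.of_le (by exact_mod_cast le_top)
  have hgc : Continuous g := hg1.continuous
  have hdm : Measurable (deriv f) := measurable_deriv f
  obtain ⟨c0, hc0⟩ := hgrowth 0 1 one_pos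
  obtain ⟨c1, hc1⟩ := hgrowth 1 1 one_pos
  have hC0 : ∀ x, |g x| ≤ (|c0| + |c1|) * Real.exp ‖x‖ := by
    intro x
    have h := hc0 x
    rw [norm_iteratedFDeriv_zero, one_mul] at h
    refine h.trans (mul_le_mul_of_nonneg_right ?_ (Real.exp_pos _).le)
    linarith [le_abs_self c0, abs_nonneg c1]
  have hC1 : ∀ x, ‖fderiv ℝ g x‖ ≤ (|c0| + |c1|) * Real.exp ‖x‖ := by
    intro x
    have h := hc1 x
    rw [norm_iteratedFDeriv_one, one_mul] at h
    refine h.trans (mul_le_mul_of_nonneg_right ?_ (Real.exp_pos _).le)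
    linarith [le_abs_self c1, abs_nonneg c0]
  have hC : 0 ≤ |c0| + |c1| := by positivity
  have hgV : Measurable (fun ω => g (V ω)) := hgc.measurable.comp hV
  have haeP : ∀ᵐ ω ∂P, HasDerivAt f (f' (g (V ω))) (g (V ω)) :=
    ae_of_ae_map hgV.aemeasurable (habs.ae_le hf')
  have hset : MeasurableSet {v : Fin n → ℝ | DifferentiableAt ℝ f (g v)} :=
    hgc.measurable (measurableSet_of_differentiableAt ℝ f)
  have hae : ∀ᵐ v ∂(stdG n), HasDerivAt f (deriv f (g v)) (g v) := by
    rw [← hlaw']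
    have h1 : ∀ᵐ v ∂(P.map V), DifferentiableAt ℝ f (g v) :=
      (ae_map_iff hV.aemeasurable hset).2 (haeP.mono fun ω h => h.differentiableAt)
    exact h1.mono fun v h => h.hasDerivAt
  have hmean' : ∫ v, g v ∂(stdG n) = 0 := by
    rw [← hlaw', integral_map hV.aemeasurable hgc.aestronglyMeasurable]
    exact hmean
  have hmain := main_aux hg1 hC hC0 hC1 hmean' hf hae
  have hleft : ∫ ω, g (V ω) * f (g (V ω)) ∂P = ∫ v, g v * f (g v) ∂(stdG n) := by
    rw [← hlaw']
    exact (integral_map hV.aemeasurable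
      (hgc.mul (hf.continuous.comp hgc)).aestronglyMeasurable).symm
  have hinner : StronglyMeasurable (fun v : Fin n → ℝ => ∫ θ in Set.Ioc 0 (π / 2),
      ∫ w, Real.sin θ *
      fderiv ℝ g v (gradv g (Real.cos θ • v + Real.sin θ • w)) ∂(stdG n)) := by
    have hc : Continuous (fun q : ((Fin n → ℝ) × ℝ) × (Fin n → ℝ) => Real.sin q.1.2 *
        fderiv ℝ g q.1.1 (gradv g (Real.cos q.1.2 • q.1.1 + Real.sin q.1.2 • q.2))) := by
      refine Continuous.mul (by fun_prop) ?_
      exact ((hg1.continuous_fderiv one_ne_zero).comp (by fun_prop)).clm_apply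
        ((gradv_continuous hg1).comp (by fun_prop))
    exact (hc.stronglyMeasurable.integral_prod_right (ν := stdG n)).integral_prod_right
  have hmap := integral_map (μ := P) hV.aemeasurable
    (hinner.mul (hdm.comp hgc.measurable).stronglyMeasurable).aestronglyMeasurable
  rw [hlaw'] at hmap
  rw [hleft, hmain]
  refine hmap.trans ?_
  refine integral_congr_ae ?_
  filter_upwards [haeP] with ω hω
  rw [S_eq P V hV hlaw' hg1, ← hω.deriv]
  rfl
end

section
/- Let V = (V₁,…,V_n) be a vector of i.i.d. standard Gaussian random variables and let g : ℝⁿ → ℝ be a smooth function such that g and all its partial derivatives have subexponential growth at infinity, E[g(V)] = 0 and E[g(V)²] = 1, and assume the law of Y := g(V) is absolutely continuous with respect to Lebesgue measure. Then, with Z a standard Gaussian random variable, for every Borel set B ⊂ ℝ one has |P(Y ∈ B) − P(Z ∈ B)| ≤ 2 (E[(S(V) − 1)²])^{1/2}. -/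
open MeasureTheory ProbabilityTheory Real Set

namespace ChatTV

/-- standard Gaussian measure on `Fin n → ℝ` -/
noncomputable abbrev gam (n : ℕ) : Measure (Fin n → ℝ) :=
  Measure.pi (fun _ : Fin n => gaussianReal 0 1)

/-- its density -/
noncomputable def rho (n : ℕ) (x : Fin n → ℝ) : ℝ := ∏ i, gaussianPDFReal 0 1 (x i)

lemma rho_nonneg (n : ℕ) (x : Fin n → ℝ) : 0 ≤ rho n x :=
  Finset.prod_nonneg fun _ _ => gaussianPDFReal_nonneg _ _ _

lemma rho_meas (n : ℕ) : Measurable (rho n) := by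
  unfold rho
  exact Finset.measurable_prod _ fun i _ =>
    (measurable_gaussianPDFReal 0 1).comp (measurable_pi_apply i)

lemma gam_eq (n : ℕ) : gam n = (volume : Measure (Fin n → ℝ)).withDensity
    (fun x => ENNReal.ofReal (rho n x)) := by
  refine Measure.pi_eq (fun s hs => ?_)
  rw [withDensity_apply _ (MeasurableSet.univ_pi hs), volume_pi, Measure.restrict_pi_pi]
  have hIntg : ∀ i, Integrable (gaussianPDFReal 0 1) ((volume : Measure ℝ).restrict (s i)) :=
    fun i => (integrable_gaussianPDFReal 0 1).restrict
  rw [← ofReal_integral_eq_lintegral_ofReal]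
  · unfold rho
    rw [integral_fintype_prod_eq_prod (fun _ => gaussianPDFReal 0 1),
      ENNReal.ofReal_prod_of_nonneg]
    · refine Finset.prod_congr rfl fun i _ => ?_
      rw [gaussianReal_apply_eq_integral _ (by simp)]
    · intro i _
      exact integral_nonneg fun _ => gaussianPDFReal_nonneg _ _ _
  · exact Integrable.fintype_prod hIntg
  · exact Filter.Eventually.of_forall (rho_nonneg n)

lemma integral_gam (n : ℕ) (F : (Fin n → ℝ) → ℝ) :
    ∫ x, F x ∂(gam n) = ∫ x, rho n x * F x := by
  rw [gam_eq, integral_withDensity_eq_integral_toReal_smul (rho_meas n).ennreal_ofReal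
    (Filter.Eventually.of_forall fun _ => ENNReal.ofReal_lt_top)]
  simp [ENNReal.toReal_ofReal (rho_nonneg n _)]

lemma integrable_gam (n : ℕ) (F : (Fin n → ℝ) → ℝ) (h : Integrable F (gam n)) :
    Integrable (fun x => rho n x * F x) := by
  rw [gam_eq, integrable_withDensity_iff_integrable_smul' (rho_meas n).ennreal_ofReal
    (Filter.Eventually.of_forall fun _ => ENNReal.ofReal_lt_top)] at h
  simpa [ENNReal.toReal_ofReal (rho_nonneg n _)] using h

lemma integrable_exp (n : ℕ) (a : ℝ) : Integrable (fun x => exp (a * ‖x‖)) (gam n) := by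
  have h1 : Integrable (fun x : ℝ => exp (|a| * |x|)) (gaussianReal 0 1) :=
    integrable_exp_mul_abs (X := fun x => x) (integrable_exp_mul_gaussianReal _)
      (integrable_exp_mul_gaussianReal _)
  have h2 : Integrable (fun x : Fin n → ℝ => ∏ i, exp (|a| * |x i|)) (gam n) :=
    Integrable.fintype_prod (fun _ => h1)
  refine h2.mono' (by fun_prop) (Filter.Eventually.of_forall fun x => ?_)
  rw [Real.norm_of_nonneg (exp_pos _).le, ← Real.exp_sum, ← Finset.mul_sum]
  refine exp_le_exp.2 ((mul_le_mul_of_nonneg_right (le_abs_self a) (norm_nonneg _)).trans ?_)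
  refine mul_le_mul_of_nonneg_left ?_ (abs_nonneg a)
  rw [pi_norm_le_iff_of_nonneg (Finset.sum_nonneg fun _ _ => abs_nonneg _)]
  intro i
  exact Finset.single_le_sum (f := fun i => |x i|) (fun _ _ => abs_nonneg _) (Finset.mem_univ i)

lemma integrable_of_bound {n : ℕ} {F : (Fin n → ℝ) → ℝ} (hF : Measurable F) (C a : ℝ)
    (h : ∀ x, |F x| ≤ C * exp (a * ‖x‖)) : Integrable F (gam n) :=
  ((integrable_exp n a).const_mul C).mono' hF.aestronglyMeasurable
    (Filter.Eventually.of_forall h)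

lemma rho_eq (n : ℕ) (x : Fin n → ℝ) :
    rho n x = ((√(2 * π))⁻¹) ^ n * exp (- ∑ i, x i ^ 2 / 2) := by
  simp [rho, gaussianPDFReal, Finset.prod_mul_distrib, ← Real.exp_sum, neg_div]

lemma rho_hasFDeriv (n : ℕ) (x : Fin n → ℝ) : DifferentiableAt ℝ (rho n) x := by
  have : rho n = fun x => ((√(2 * π))⁻¹) ^ n * exp (- ∑ i, x i ^ 2 / 2) := funext (rho_eq n)
  rw [this]
  fun_prop

lemma rho_fderiv (n : ℕ) (x : Fin n → ℝ) (i : Fin n) :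
    fderiv ℝ (rho n) x (Pi.single i 1) = - (x i) * rho n x := by
  have h := (rho_hasFDeriv n x).hasFDerivAt.hasLineDerivAt (Pi.single i 1)
  refine h.unique ?_
  have : rho n = fun x => ((√(2 * π))⁻¹) ^ n * exp (- ∑ i, x i ^ 2 / 2) := funext (rho_eq n)
  unfold HasLineDerivAt
  rw [this]
  have key : HasDerivAt (fun t : ℝ => - ∑ j, (x + t • (Pi.single i 1 : Fin n → ℝ)) j ^ 2 / 2)
      (- ∑ j, (x j * (Pi.single i 1 : Fin n → ℝ) j)) 0 := by
    refine HasDerivAt.neg (HasDerivAt.fun_sum fun j _ => ?_)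
    have h1 : HasDerivAt (fun t : ℝ => x j + t * (Pi.single i 1 : Fin n → ℝ) j)
        ((Pi.single i 1 : Fin n → ℝ) j) 0 := by
      simpa using ((hasDerivAt_id (0:ℝ)).mul_const ((Pi.single i 1 : Fin n → ℝ) j)).const_add (x j)
    have h2 := (h1.pow 2).div_const 2
    simp only [Pi.add_apply, Pi.smul_apply, smul_eq_mul]
    refine h2.congr_deriv ?_
    norm_num
    ring
  have := (key.exp).const_mul (((√(2 * π))⁻¹) ^ n)
  refine this.congr_deriv ?_
  simp [Pi.single_apply]
  ring

/-- Gaussian integration by parts. -/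
lemma stein_ibp {n : ℕ} (F : (Fin n → ℝ) → ℝ) (hF : Differentiable ℝ F) (i : Fin n) (C a : ℝ)
    (h0 : ∀ x, |F x| ≤ C * exp (a * ‖x‖))
    (h1 : ∀ x, |fderiv ℝ F x (Pi.single i 1)| ≤ C * exp (a * ‖x‖)) :
    ∫ x, x i * F x ∂(gam n) = ∫ x, fderiv ℝ F x (Pi.single i 1) ∂(gam n) := by
  have hFm : Measurable F := hF.continuous.measurable
  have i0 := integrable_gam n _ (integrable_of_bound hFm C a h0)
  have i1 := integrable_gam n _
    (integrable_of_bound (measurable_fderiv_apply_const ℝ F (Pi.single i 1)) C a h1)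
  have i2 := integrable_gam n (fun x => x i * F x)
    (integrable_of_bound (by fun_prop) C (a + 1) (fun x => by
      rw [abs_mul, add_mul, one_mul, exp_add]
      have e1 : |x i| ≤ exp ‖x‖ :=
        (norm_le_pi_norm x i).trans ((le_add_of_nonneg_right zero_le_one).trans (add_one_le_exp _))
      calc |x i| * |F x| ≤ exp ‖x‖ * (C * exp (a * ‖x‖)) :=
            mul_le_mul e1 (h0 x) (abs_nonneg _) (exp_pos _).le
        _ = _ := by ring))
  rw [integral_gam, integral_gam]
  have := integral_mul_fderiv_eq_neg_fderiv_mul_of_integrable (μ := volume) (f := rho n) (g := F)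
    (v := (Pi.single i 1 : Fin n → ℝ)) (by
      simp_rw [rho_fderiv]
      convert i2.neg using 2 with x
      simp; ring) i1 i0 (fun x _ => rho_hasFDeriv n x) (fun x _ => hF x)
  rw [this, ← integral_neg]
  congr with x
  rw [rho_fderiv]; ring


lemma tendsto_p_atTop : Filter.Tendsto (fun y : ℝ => exp (-(1/2) * y ^ 2)) Filter.atTop (nhds 0) := by
  refine tendsto_exp_atBot.comp ?_
  exact Filter.Tendsto.const_mul_atTop_of_neg (by norm_num) (Filter.tendsto_pow_atTop two_ne_zero)

lemma tendsto_p_atBot : Filter.Tendsto (fun y : ℝ => exp (-(1/2) * y ^ 2)) Filter.atBot (nhds 0) := by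
  have := tendsto_p_atTop.comp Filter.tendsto_neg_atBot_atTop
  simpa [Function.comp_def] using this

lemma hasDeriv_p (y : ℝ) : HasDerivAt (fun y : ℝ => exp (-(1/2) * y ^ 2))
    (-y * exp (-(1/2) * y ^ 2)) y := by
  have h := (((hasDerivAt_id y).pow 2).const_mul (-(1/2) : ℝ)).exp
  refine h.congr_deriv ?_
  simp; ring

lemma integrable_yp : Integrable (fun y : ℝ => -y * exp (-(1/2) * y ^ 2)) := by
  have := (integrable_mul_exp_neg_mul_sq (b := 1/2) (by norm_num)).neg
  refine this.congr (Filter.Eventually.of_forall fun y => ?_)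
  simp

lemma stein_solution (h : ℝ → ℝ) (hc : Continuous h) (h0 : ∀ x, 0 ≤ h x) (h1 : ∀ x, h x ≤ 1) :
    ∃ f : ℝ → ℝ, ∀ x,
      HasDerivAt f (x * f x + (h x - ∫ y, h y ∂(gaussianReal 0 1))) x ∧
      |x * f x + (h x - ∫ y, h y ∂(gaussianReal 0 1))| ≤ 2 := by
  set m := ∫ y, h y ∂(gaussianReal 0 1) with hm
  have hhi : Integrable h (gaussianReal 0 1) :=
    (integrable_const (1:ℝ)).mono' hc.aestronglyMeasurable
      (Filter.Eventually.of_forall fun x => by rw [Real.norm_of_nonneg (h0 x)]; exact h1 x)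
  have hm0 : 0 ≤ m := integral_nonneg h0
  have hm1 : m ≤ 1 := by
    have := integral_mono hhi (integrable_const (1:ℝ)) h1
    simpa using this
  have hk : ∀ x, |h x - m| ≤ 1 := fun x => abs_le.2 ⟨by linarith [h0 x], by linarith [h1 x]⟩
  set p : ℝ → ℝ := fun y => exp (-(1/2) * y ^ 2) with hp
  have pint : Integrable p := integrable_exp_neg_mul_sq (by norm_num)
  have ppos : ∀ y, 0 < p y := fun y => exp_pos _
  set q : ℝ → ℝ := fun y => (h y - m) * p y with hq
  have qc : Continuous q := by fun_prop
  have qle : ∀ y, |q y| ≤ p y := fun y => by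
    rw [hq]; simp only [abs_mul, abs_of_pos (ppos y)]
    exact mul_le_of_le_one_left (ppos y).le (hk y)
  have qint : Integrable q := pint.mono' qc.aestronglyMeasurable (Filter.Eventually.of_forall qle)
  have q0 : ∫ y, q y = 0 := by
    have e1 : ∫ y, (h y - m) ∂(gaussianReal 0 1) = 0 := by
      rw [integral_sub hhi (integrable_const _)]; simp [hm]
    rw [integral_gaussianReal_eq_integral_smul one_ne_zero] at e1
    have e2 : (fun x => gaussianPDFReal 0 1 x • (h x - m)) = fun x => (√(2 * π))⁻¹ * q x := by
      funext x
      have : p x = exp (-x ^ 2 / 2) := by rw [hp]; ring_nf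
      simp only [hq, this, gaussianPDFReal, smul_eq_mul, NNReal.coe_one, mul_one, sub_zero]
      ring
    rw [e2, integral_const_mul] at e1
    have : (√(2 * π))⁻¹ ≠ 0 := by positivity
    exact (mul_eq_zero.1 e1).resolve_left this
  set F : ℝ → ℝ := fun x => ∫ y in Iic x, q y with hF
  have FD : ∀ x, HasDerivAt F (q x) x := by
    intro x
    have e : F = fun x => F 0 + ∫ y in (0:ℝ)..x, q y := by
      funext x
      rw [← intervalIntegral.integral_Iic_sub_Iic qint.integrableOn qint.integrableOn]
      simp [hF]
    rw [e]
    exact (intervalIntegral.integral_hasDerivAt_right (qint.intervalIntegrable)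
      qc.aestronglyMeasurable.stronglyMeasurableAtFilter qc.continuousAt).const_add _
  have Fbd : ∀ x, |x * F x| ≤ p x := by
    intro x
    rcases le_total x 0 with hx | hx
    · have e1 : ∫ y in Iic x, -y * p y = p x := by
        have := integral_Iic_of_hasDerivAt_of_tendsto' (a := x) (fun y _ => hasDeriv_p y)
          integrable_yp.integrableOn tendsto_p_atBot
        simpa [hp] using this
      rw [← e1, hF]
      simp only
      rw [← integral_const_mul]
      refine (abs_integral_le_integral_abs).trans ?_
      refine setIntegral_mono_on (qint.const_mul x).abs.integrableOn integrable_yp.integrableOn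
        measurableSet_Iic (fun y hy => ?_)
      rw [abs_mul, abs_of_nonpos hx]
      exact mul_le_mul (neg_le_neg hy) (qle y) (abs_nonneg _) (by have : y ≤ x := hy; linarith)
    · have e0 : F x = - ∫ y in Ioi x, q y := by
        have := intervalIntegral.integral_Iic_add_Ioi (b := x) (f := q) (μ := volume)
          qint.integrableOn qint.integrableOn
        rw [q0] at this
        simp only [hF]; linarith
      have e1 : ∫ y in Ioi x, y * p y = p x := by
        have := integral_Ioi_of_hasDerivAt_of_tendsto' (a := x) (fun y _ => hasDeriv_p y)
          integrable_yp.integrableOn tendsto_p_atTop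
        simp only [neg_mul, integral_neg, zero_sub, neg_inj] at this
        simpa [hp] using this
      rw [e0, mul_neg, abs_neg, ← integral_const_mul, ← e1]
      refine (abs_integral_le_integral_abs).trans ?_
      refine setIntegral_mono_on (qint.const_mul x).abs.integrableOn ?_
        measurableSet_Ioi (fun y hy => ?_)
      · have := integrable_yp.neg
        simp only [neg_mul] at this
        refine (this.congr (Filter.Eventually.of_forall fun y => ?_)).integrableOn
        simp [hp]
      · rw [abs_mul, abs_of_nonneg hx]
        exact mul_le_mul (le_of_lt hy) (qle y) (abs_nonneg _) (by have : x < y := hy; linarith)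
  refine ⟨fun x => (p x)⁻¹ * F x, fun x => ⟨?_, ?_⟩⟩
  · have h2 := ((hasDeriv_p x).inv (ppos x).ne').mul (FD x)
    refine h2.congr_deriv ?_
    have := (ppos x).ne'
    simp only [hq, Pi.inv_apply]
    change - (-x * p x) / p x ^ 2 * F x + (p x)⁻¹ * ((h x - m) * p x) = _
    field_simp
  · have e : |x * ((p x)⁻¹ * F x)| ≤ 1 := by
      have : x * ((p x)⁻¹ * F x) = (p x)⁻¹ * (x * F x) := by ring
      rw [this, abs_mul, abs_of_pos (inv_pos.2 (ppos x))]
      rw [inv_mul_le_iff₀ (ppos x), mul_one]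
      exact Fbd x
    exact (abs_add_le _ _).trans (by linarith [hk x])


lemma integrable_prod_of_bound {n : ℕ} {H : (Fin n → ℝ) × (Fin n → ℝ) → ℝ} (hH : Measurable H)
    (K a : ℝ) (h : ∀ v w, |H (v, w)| ≤ K * exp (a * (‖v‖ + ‖w‖))) :
    Integrable H ((gam n).prod (gam n)) := by
  refine (((integrable_exp n a).mul_prod (integrable_exp n a)).const_mul K).mono'
    hH.aestronglyMeasurable (Filter.Eventually.of_forall fun z => ?_)
  refine (h z.1 z.2).trans (le_of_eq ?_)
  rw [mul_add, exp_add]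

lemma norm_U_le {n : ℕ} {α β : ℝ} (hα0 : 0 ≤ α) (hα1 : α ≤ 1) (hβ0 : 0 ≤ β) (hβ1 : β ≤ 1)
    (v w : Fin n → ℝ) : ‖α • v + β • w‖ ≤ ‖v‖ + ‖w‖ := by
  refine (norm_add_le _ _).trans ?_
  rw [norm_smul, norm_smul, Real.norm_of_nonneg hα0, Real.norm_of_nonneg hβ0]
  exact add_le_add (mul_le_of_le_one_left (norm_nonneg _) hα1)
    (mul_le_of_le_one_left (norm_nonneg _) hβ1)

lemma coord_le {n : ℕ} (x : Fin n → ℝ) (i : Fin n) : |x i| ≤ exp ‖x‖ :=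
  (norm_le_pi_norm x i).trans ((le_add_of_nonneg_right zero_le_one).trans (add_one_le_exp _))

lemma mul_bound {a b A B : ℝ} (ha : |a| ≤ A) (hb : |b| ≤ B) : |a * b| ≤ A * B := by
  rw [abs_mul]
  exact mul_le_mul ha hb (abs_nonneg _) ((abs_nonneg _).trans ha)

section pieces
variable {n : ℕ} (ψ D : (Fin n → ℝ) → ℝ) (hψ : ContDiff ℝ 1 ψ) (hD : ContDiff ℝ 1 D) (C : ℝ)
  (i : Fin n)
  (b1 : ∀ x, |ψ x| ≤ C * exp ‖x‖) (b2 : ∀ x, |fderiv ℝ ψ x (Pi.single i 1)| ≤ C * exp (2 * ‖x‖))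
  (b3 : ∀ x, |D x| ≤ C * exp ‖x‖) (b4 : ∀ x, |fderiv ℝ D x (Pi.single i 1)| ≤ C * exp ‖x‖)
  (α β : ℝ) (hα0 : 0 ≤ α) (hα1 : α ≤ 1) (hβ0 : 0 ≤ β) (hβ1 : β ≤ 1)

include b1 b2 b3 b4 hα0 hα1 hβ0 hβ1

lemma bounds_all (v w : Fin n → ℝ) :
    |ψ v * D (α • v + β • w)| ≤ C ^ 2 * exp (3 * (‖v‖ + ‖w‖)) ∧
    |fderiv ℝ ψ v (Pi.single i 1) * D (α • v + β • w)| ≤ C ^ 2 * exp (3 * (‖v‖ + ‖w‖)) ∧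
    |ψ v * fderiv ℝ D (α • v + β • w) (Pi.single i 1)| ≤ C ^ 2 * exp (3 * (‖v‖ + ‖w‖)) := by
  have hU := norm_U_le hα0 hα1 hβ0 hβ1 v w
  have hv := norm_nonneg v
  have hw := norm_nonneg w
  refine ⟨?_, ?_, ?_⟩
  · refine (mul_bound (b1 v) (b3 _)).trans ?_
    rw [mul_mul_mul_comm, ← exp_add, ← sq]
    exact mul_le_mul_of_nonneg_left (exp_le_exp.2 (by linarith)) (sq_nonneg C)
  · refine (mul_bound (b2 v) (b3 _)).trans ?_
    rw [mul_mul_mul_comm, ← exp_add, ← sq]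
    exact mul_le_mul_of_nonneg_left (exp_le_exp.2 (by linarith)) (sq_nonneg C)
  · refine (mul_bound (b1 v) (b4 _)).trans ?_
    rw [mul_mul_mul_comm, ← exp_add, ← sq]
    exact mul_le_mul_of_nonneg_left (exp_le_exp.2 (by linarith)) (sq_nonneg C)

include hψ hD

lemma int_all :
    Integrable (fun z : (Fin n → ℝ) × (Fin n → ℝ) =>
      fderiv ℝ ψ z.1 (Pi.single i 1) * D (α • z.1 + β • z.2)) ((gam n).prod (gam n)) ∧
    Integrable (fun z : (Fin n → ℝ) × (Fin n → ℝ) =>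
      ψ z.1 * fderiv ℝ D (α • z.1 + β • z.2) (Pi.single i 1)) ((gam n).prod (gam n)) ∧
    Integrable (fun z : (Fin n → ℝ) × (Fin n → ℝ) =>
      z.1 i * (ψ z.1 * D (α • z.1 + β • z.2))) ((gam n).prod (gam n)) ∧
    Integrable (fun z : (Fin n → ℝ) × (Fin n → ℝ) =>
      z.2 i * (ψ z.1 * D (α • z.1 + β • z.2))) ((gam n).prod (gam n)) := by
  have hb := bounds_all ψ D C i b1 b2 b3 b4 α β hα0 hα1 hβ0 hβ1
  have c1 := hψ.continuous
  have c2 := hD.continuous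
  have c3 : Continuous (fun x => fderiv ℝ ψ x (Pi.single i 1)) :=
    (hψ.continuous_fderiv one_ne_zero).clm_apply continuous_const
  have c4 : Continuous (fun x => fderiv ℝ D x (Pi.single i 1)) :=
    (hD.continuous_fderiv one_ne_zero).clm_apply continuous_const
  have cU : Continuous (fun z : (Fin n → ℝ) × (Fin n → ℝ) => α • z.1 + β • z.2) := by fun_prop
  refine ⟨?_, ?_, ?_, ?_⟩
  · exact integrable_prod_of_bound ((c3.comp continuous_fst).mul (c2.comp cU)).measurable _ _
      (fun v w => (hb v w).2.1)
  · exact integrable_prod_of_bound ((c1.comp continuous_fst).mul (c4.comp cU)).measurable _ _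
      (fun v w => (hb v w).2.2)
  · refine integrable_prod_of_bound (K := C ^ 2) (a := 4) (((continuous_apply i).comp
      continuous_fst).mul ((c1.comp continuous_fst).mul (c2.comp cU))).measurable (fun v w => ?_)
    refine (mul_bound (coord_le v i) (hb v w).1).trans ?_
    rw [mul_left_comm, ← exp_add]
    exact mul_le_mul_of_nonneg_left (exp_le_exp.2 (by linarith [norm_nonneg w])) (sq_nonneg C)
  · refine integrable_prod_of_bound (K := C ^ 2) (a := 4) (((continuous_apply i).comp
      continuous_snd).mul ((c1.comp continuous_fst).mul (c2.comp cU))).measurable (fun v w => ?_)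
    refine (mul_bound (coord_le w i) (hb v w).1).trans ?_
    rw [mul_left_comm, ← exp_add]
    exact mul_le_mul_of_nonneg_left (exp_le_exp.2 (by linarith [norm_nonneg v])) (sq_nonneg C)

lemma ibp_fst :
    ∫ z, z.1 i * (ψ z.1 * D (α • z.1 + β • z.2)) ∂((gam n).prod (gam n)) =
    ∫ z, fderiv ℝ ψ z.1 (Pi.single i 1) * D (α • z.1 + β • z.2) ∂((gam n).prod (gam n)) +
    α * ∫ z, ψ z.1 * fderiv ℝ D (α • z.1 + β • z.2) (Pi.single i 1) ∂((gam n).prod (gam n)) := by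
  have hb := bounds_all ψ D C i b1 b2 b3 b4 α β hα0 hα1 hβ0 hβ1
  obtain ⟨i1, i2, i3, i4⟩ := int_all ψ D hψ hD C i b1 b2 b3 b4 α β hα0 hα1 hβ0 hβ1
  rw [← integral_const_mul, ← integral_add i1 (i2.const_mul α), integral_prod_symm _ i3]
  refine Eq.trans ?_ (integral_prod_symm _ (i1.add (i2.const_mul α))).symm
  congr 1
  funext w
  have dF : ∀ v, HasFDerivAt (fun v => ψ v * D (α • v + β • w))
      (ψ v • ((fderiv ℝ D (α • v + β • w)).comp (α • ContinuousLinearMap.id ℝ (Fin n → ℝ)))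
        + D (α • v + β • w) • fderiv ℝ ψ v) v := by
    intro v
    have d1 := (hψ.differentiable one_ne_zero v).hasFDerivAt
    have d2 := (hD.differentiable one_ne_zero (α • v + β • w)).hasFDerivAt
    have d3 : HasFDerivAt (fun v : Fin n → ℝ => α • v + β • w)
        (α • ContinuousLinearMap.id ℝ (Fin n → ℝ)) v :=
      ((hasFDerivAt_id v).const_smul α).add_const _
    exact d1.mul (d2.comp v d3)
  have dE : ∀ v, fderiv ℝ (fun v => ψ v * D (α • v + β • w)) v (Pi.single i 1) =
      fderiv ℝ ψ v (Pi.single i 1) * D (α • v + β • w) +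
      α * (ψ v * fderiv ℝ D (α • v + β • w) (Pi.single i 1)) := by
    intro v
    rw [(dF v).fderiv]
    simp
    ring
  rw [stein_ibp (fun v => ψ v * D (α • v + β • w)) (fun v => (dF v).differentiableAt) i
    (2 * C ^ 2 * exp (3 * ‖w‖)) 3]
  · exact integral_congr_ae (Filter.Eventually.of_forall dE)
  · intro v
    refine (hb v w).1.trans ?_
    rw [mul_assoc, ← exp_add, mul_assoc, ← mul_add, add_comm ‖w‖]
    have : 0 ≤ C ^ 2 * exp (3 * (‖v‖ + ‖w‖)) := by positivity
    linarith
  · intro v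
    rw [dE]
    refine (abs_add_le _ _).trans ?_
    have e1 : |α * (ψ v * fderiv ℝ D (α • v + β • w) (Pi.single i 1))|
        ≤ C ^ 2 * exp (3 * (‖v‖ + ‖w‖)) := by
      have := mul_bound (a := α) (A := 1) (by rwa [abs_of_nonneg hα0]) (hb v w).2.2
      rwa [one_mul] at this
    rw [mul_assoc, ← exp_add, mul_assoc, ← mul_add, add_comm ‖w‖]
    linarith [(hb v w).2.1]

lemma ibp_snd :
    ∫ z, z.2 i * (ψ z.1 * D (α • z.1 + β • z.2)) ∂((gam n).prod (gam n)) =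
    β * ∫ z, ψ z.1 * fderiv ℝ D (α • z.1 + β • z.2) (Pi.single i 1) ∂((gam n).prod (gam n)) := by
  have hb := bounds_all ψ D C i b1 b2 b3 b4 α β hα0 hα1 hβ0 hβ1
  obtain ⟨i1, i2, i3, i4⟩ := int_all ψ D hψ hD C i b1 b2 b3 b4 α β hα0 hα1 hβ0 hβ1
  rw [← integral_const_mul, integral_prod _ i4, integral_prod _ (i2.const_mul β)]
  congr 1
  funext v
  have dF : ∀ w, HasFDerivAt (fun w => ψ v * D (α • v + β • w))
      (ψ v • ((fderiv ℝ D (α • v + β • w)).comp (β • ContinuousLinearMap.id ℝ (Fin n → ℝ)))) w := by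
    intro w
    have d2 := (hD.differentiable one_ne_zero (α • v + β • w)).hasFDerivAt
    have d3 : HasFDerivAt (fun w : Fin n → ℝ => α • v + β • w)
        (β • ContinuousLinearMap.id ℝ (Fin n → ℝ)) w :=
      ((hasFDerivAt_id w).const_smul β).const_add _
    exact (d2.comp w d3).const_mul _
  have dE : ∀ w, fderiv ℝ (fun w => ψ v * D (α • v + β • w)) w (Pi.single i 1) =
      β * (ψ v * fderiv ℝ D (α • v + β • w) (Pi.single i 1)) := by
    intro w
    rw [(dF w).fderiv]
    simp
    ring
  rw [stein_ibp (fun w => ψ v * D (α • v + β • w)) (fun w => (dF w).differentiableAt) i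
    (C ^ 2 * exp (3 * ‖v‖)) 3]
  · exact integral_congr_ae (Filter.Eventually.of_forall dE)
  · intro w
    refine (hb v w).1.trans ?_
    rw [mul_assoc, ← exp_add, ← mul_add]
  · intro w
    rw [dE, mul_assoc, ← exp_add, ← mul_add]
    have := mul_bound (a := β) (A := 1) (by rwa [abs_of_nonneg hβ0]) (hb v w).2.2
    rwa [one_mul] at this

end pieces


/-- the singular weight -/
noncomputable def kap (t : ℝ) : ℝ := 1 / (2 * √t) + 1 / (2 * √(1 - t))

lemma kap_int1 : IntervalIntegrable (fun t : ℝ => 1 / (2 * √t)) volume 0 1 := by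
  have h := (intervalIntegral.intervalIntegrable_rpow' (a := 0) (b := 1) (r := -(1/2))
    (by norm_num)).const_mul (1/2)
  refine h.congr (fun t ht => ?_)
  rw [uIoc_of_le zero_le_one] at ht
  change 1 / 2 * t ^ (-(1 / 2) : ℝ) = 1 / (2 * √t)
  rw [Real.rpow_neg ht.1.le, ← Real.sqrt_eq_rpow]
  field_simp

lemma kap_int2 : IntervalIntegrable (fun t : ℝ => 1 / (2 * √(1 - t))) volume 0 1 := by
  have := (kap_int1.comp_sub_left 1).symm
  simpa using this

lemma kap_int : IntegrableOn kap (Ioc 0 1) := by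
  rw [← intervalIntegrable_iff_integrableOn_Ioc_of_le zero_le_one]
  exact kap_int1.add kap_int2

lemma sqrt_bounds {t : ℝ} (ht : t ∈ Ioc (0:ℝ) 1) :
    0 ≤ √t ∧ √t ≤ 1 ∧ 0 ≤ √(1 - t) ∧ √(1 - t) ≤ 1 := by
  refine ⟨sqrt_nonneg _, ?_, sqrt_nonneg _, ?_⟩
  · exact Real.sqrt_le_one.2 ht.2
  · exact Real.sqrt_le_one.2 (by linarith [ht.1])

section main
variable {n : ℕ} (g : (Fin n → ℝ) → ℝ) (hg : ContDiff ℝ 2 g) (C : ℝ)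
  (g0 : ∀ x, |g x| ≤ C * exp ‖x‖) (g1 : ∀ x, ‖fderiv ℝ g x‖ ≤ C * exp ‖x‖)

/-- derivative of the interpolation -/
noncomputable def LL (t : ℝ) (v w : Fin n → ℝ) : ℝ :=
  fderiv ℝ g (√t • v + √(1 - t) • w) ((1 / (2 * √t)) • v - (1 / (2 * √(1 - t))) • w)

include hg in
lemma LL_meas : Measurable (fun q : ℝ × ((Fin n → ℝ) × (Fin n → ℝ)) => LL g q.1 q.2.1 q.2.2) := by
  have c := (hg.continuous_fderiv two_ne_zero)
  have cc : Continuous (fun r : (Fin n → ℝ) × (Fin n → ℝ) => fderiv ℝ g r.1 r.2) := by fun_prop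
  have m1 : Measurable (fun q : ℝ × ((Fin n → ℝ) × (Fin n → ℝ)) =>
      (√q.1 • q.2.1 + √(1 - q.1) • q.2.2,
        (1 / (2 * √q.1)) • q.2.1 - (1 / (2 * √(1 - q.1))) • q.2.2)) := by fun_prop
  exact cc.measurable.comp m1

include g1 in
lemma LL_bound {t : ℝ} (ht : t ∈ Ioc (0:ℝ) 1) (v w : Fin n → ℝ) :
    |LL g t v w| ≤ kap t * (C * exp (2 * (‖v‖ + ‖w‖))) := by
  obtain ⟨h1, h2, h3, h4⟩ := sqrt_bounds ht
  have hU := norm_U_le h1 h2 h3 h4 v w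
  have C0 : 0 ≤ C := by
    have := (norm_nonneg _).trans (g1 0)
    simpa using this
  have hv := norm_nonneg v
  have hw := norm_nonneg w
  refine ((fderiv ℝ g _).le_opNorm _).trans ?_
  have e1 : ‖fderiv ℝ g (√t • v + √(1 - t) • w)‖ ≤ C * exp (‖v‖ + ‖w‖) :=
    (g1 _).trans (mul_le_mul_of_nonneg_left (exp_le_exp.2 hU) C0)
  have k1 : 0 ≤ 1 / (2 * √t) := by positivity
  have k2 : 0 ≤ 1 / (2 * √(1 - t)) := by positivity
  have e2 : ‖(1 / (2 * √t)) • v - (1 / (2 * √(1 - t))) • w‖ ≤ kap t * exp (‖v‖ + ‖w‖) := by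
    refine (norm_sub_le _ _).trans ?_
    rw [norm_smul, norm_smul, Real.norm_of_nonneg k1, Real.norm_of_nonneg k2, kap, add_mul]
    have := add_one_le_exp (‖v‖ + ‖w‖)
    exact add_le_add (mul_le_mul_of_nonneg_left (by linarith) k1)
      (mul_le_mul_of_nonneg_left (by linarith) k2)
  refine (mul_le_mul e1 e2 (norm_nonneg _) (by positivity)).trans (le_of_eq ?_)
  rw [two_mul, exp_add (‖v‖ + ‖w‖)]; ring

include hg g1 in
lemma LL_ftc (v w : Fin n → ℝ) : ∫ t in Ioc (0:ℝ) 1, LL g t v w = g v - g w := by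
  have hIntg : IntegrableOn (fun t => LL g t v w) (Ioc 0 1) := by
    refine (kap_int.mul_const (C * exp (2 * (‖v‖ + ‖w‖)))).mono' ?_ ?_
    · exact ((LL_meas g hg).comp (measurable_id.prodMk (measurable_const (a := (v, w))))).aestronglyMeasurable
    · exact (ae_restrict_iff' measurableSet_Ioc).2
        (Filter.Eventually.of_forall fun t ht => LL_bound g C g1 ht v w)
  have hc := hg.continuous
  have := intervalIntegral.integral_eq_sub_of_hasDerivAt_of_le (a := 0) (b := 1) zero_le_one
    (f := fun t : ℝ => g (√t • v + √(1 - t) • w)) (f' := fun t => LL g t v w)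
    (Continuous.continuousOn (by fun_prop)) (fun t ht => by
      have d := (hg.differentiable two_ne_zero (√t • v + √(1 - t) • w)).hasFDerivAt
      have d1 : HasDerivAt (fun t : ℝ => √t) (1 / (2 * √t)) t := Real.hasDerivAt_sqrt ht.1.ne'
      have d2 : HasDerivAt (fun t : ℝ => √(1 - t)) (-(1 / (2 * √(1 - t)))) t := by
        have := ((hasDerivAt_id t).const_sub 1).sqrt (by simp; linarith [ht.2])
        refine this.congr_deriv ?_
        simp [neg_div]
      have d3 := (d1.smul_const v).add (d2.smul_const w)
      refine (d.comp_hasDerivAt t d3).congr_deriv ?_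
      simp only [LL, neg_smul, sub_eq_add_neg])
    ((intervalIntegrable_iff_integrableOn_Ioc_of_le zero_le_one).2 hIntg)
  rw [intervalIntegral.integral_of_le zero_le_one] at this
  rw [this]
  simp

lemma LL_expand (t : ℝ) (v w : Fin n → ℝ) : LL g t v w = ∑ i, (
    (1 / (2 * √t)) * (v i * fderiv ℝ g (√t • v + √(1 - t) • w) (Pi.single i 1))
    - (1 / (2 * √(1 - t))) * (w i * fderiv ℝ g (√t • v + √(1 - t) • w) (Pi.single i 1))) := by
  unfold LL
  have e : ∀ (A : (Fin n → ℝ) →L[ℝ] ℝ) (x : Fin n → ℝ), A x = ∑ i, x i * A (Pi.single i 1) := by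
    intro A x
    conv_lhs => rw [pi_eq_sum_univ' x]
    simp
  rw [e]
  refine Finset.sum_congr rfl fun i _ => ?_
  simp
  ring

variable (ψ : (Fin n → ℝ) → ℝ) (hψ : ContDiff ℝ 1 ψ)
  (g2 : ∀ x, ‖fderiv ℝ (fderiv ℝ g) x‖ ≤ C * exp ‖x‖)
  (b1 : ∀ x, |ψ x| ≤ C * exp ‖x‖) (b2 : ∀ x, ‖fderiv ℝ ψ x‖ ≤ C * exp (2 * ‖x‖))

include hg hψ g1 g2 b1 b2

lemma inner_ibp {t : ℝ} (ht : t ∈ Ioo (0:ℝ) 1) :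
    ∫ z, ψ z.1 * LL g t z.1 z.2 ∂((gam n).prod (gam n)) =
    ∫ v, (1 / (2 * √t)) * ∫ w, ∑ i, fderiv ℝ ψ v (Pi.single i 1) *
      fderiv ℝ g (√t • v + √(1 - t) • w) (Pi.single i 1) ∂(gam n) ∂(gam n) := by
  have ht' : t ∈ Ioc (0:ℝ) 1 := ⟨ht.1, ht.2.le⟩
  obtain ⟨h1, h2, h3, h4⟩ := sqrt_bounds ht'
  have sp : 0 < √t := Real.sqrt_pos.2 ht.1
  have sq : 0 < √(1 - t) := Real.sqrt_pos.2 (by linarith [ht.2])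
  have ns : ∀ i : Fin n, ‖(Pi.single i 1 : Fin n → ℝ)‖ = 1 := fun i => by
    rw [Pi.norm_single, norm_one]
  have ap : ∀ (A : (Fin n → ℝ) →L[ℝ] ℝ) (i : Fin n), |A (Pi.single i 1)| ≤ ‖A‖ := fun A i => by
    have := A.le_opNorm (Pi.single i 1)
    rwa [ns, mul_one] at this
  have hD : ∀ i : Fin n, ContDiff ℝ 1 (fun x => fderiv ℝ g x (Pi.single i 1)) := fun i =>
    (hg.fderiv_right (m := 1) (by norm_num)).clm_apply contDiff_const
  have b2' : ∀ (i : Fin n) x, |fderiv ℝ ψ x (Pi.single i 1)| ≤ C * exp (2 * ‖x‖) :=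
    fun i x => (ap _ i).trans (b2 x)
  have b3' : ∀ (i : Fin n) x, |fderiv ℝ g x (Pi.single i 1)| ≤ C * exp ‖x‖ :=
    fun i x => (ap _ i).trans (g1 x)
  have b4' : ∀ (i : Fin n) x, |fderiv ℝ (fun x => fderiv ℝ g x (Pi.single i 1)) x (Pi.single i 1)|
      ≤ C * exp ‖x‖ := fun i x => by
    have hd : DifferentiableAt ℝ (fderiv ℝ g) x :=
      (hg.fderiv_right (m := 1) (by norm_num)).differentiable one_ne_zero x
    have : fderiv ℝ (fun x => fderiv ℝ g x (Pi.single i 1)) x (Pi.single i 1) =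
        fderiv ℝ (fderiv ℝ g) x (Pi.single i 1) (Pi.single i 1) := by
      rw [fderiv_clm_apply hd (differentiableAt_const _)]
      simp
    rw [this]
    refine (ap _ i).trans (le_trans ?_ (g2 x))
    have := (fderiv ℝ (fderiv ℝ g) x).le_opNorm (Pi.single i 1)
    rwa [ns, mul_one] at this
  have IA := fun i => int_all ψ (fun x => fderiv ℝ g x (Pi.single i 1)) hψ (hD i) C i b1 (b2' i)
    (b3' i) (b4' i) (√t) (√(1 - t)) h1 h2 h3 h4
  have IF := fun i => ibp_fst ψ (fun x => fderiv ℝ g x (Pi.single i 1)) hψ (hD i) C i b1 (b2' i)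
    (b3' i) (b4' i) (√t) (√(1 - t)) h1 h2 h3 h4
  have IS := fun i => ibp_snd ψ (fun x => fderiv ℝ g x (Pi.single i 1)) hψ (hD i) C i b1 (b2' i)
    (b3' i) (b4' i) (√t) (√(1 - t)) h1 h2 h3 h4
  have E1 : ∀ z : (Fin n → ℝ) × (Fin n → ℝ), ψ z.1 * LL g t z.1 z.2 = ∑ i, (
      (1 / (2 * √t)) * (z.1 i * (ψ z.1 * fderiv ℝ g (√t • z.1 + √(1 - t) • z.2) (Pi.single i 1)))
      - (1 / (2 * √(1 - t))) *
        (z.2 i * (ψ z.1 * fderiv ℝ g (√t • z.1 + √(1 - t) • z.2) (Pi.single i 1)))) := by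
    intro z
    rw [LL_expand, Finset.mul_sum]
    refine Finset.sum_congr rfl fun i _ => ?_
    ring
  simp_rw [E1]
  refine (integral_finsetSum _ (fun i _ =>
    ((IA i).2.2.1.const_mul _).sub ((IA i).2.2.2.const_mul _))).trans ?_
  have E2 : ∀ i, ∫ z : (Fin n → ℝ) × (Fin n → ℝ), (
      (1 / (2 * √t)) * (z.1 i * (ψ z.1 * fderiv ℝ g (√t • z.1 + √(1 - t) • z.2) (Pi.single i 1)))
      - (1 / (2 * √(1 - t))) *
        (z.2 i * (ψ z.1 * fderiv ℝ g (√t • z.1 + √(1 - t) • z.2) (Pi.single i 1))))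
        ∂((gam n).prod (gam n)) =
      (1 / (2 * √t)) * ∫ z, fderiv ℝ ψ z.1 (Pi.single i 1) *
        fderiv ℝ g (√t • z.1 + √(1 - t) • z.2) (Pi.single i 1) ∂((gam n).prod (gam n)) := by
    intro i
    rw [integral_sub ((IA i).2.2.1.const_mul _) ((IA i).2.2.2.const_mul _), integral_const_mul,
      integral_const_mul, IF i, IS i]
    field_simp
    ring
  refine (Finset.sum_congr rfl fun i _ => E2 i).trans ?_
  rw [← Finset.mul_sum, ← integral_finsetSum _ (fun i _ => (IA i).1), integral_const_mul]
  congr 1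
  exact integral_prod _ (integrable_finsetSum _ (fun i _ => (IA i).1))

include g0 in
lemma key_identity :
    ∫ v, ψ v * (g v - ∫ w, g w ∂(gam n)) ∂(gam n) =
    ∫ t in Ioc (0:ℝ) 1, ∫ v, (1 / (2 * √t)) * ∫ w, ∑ i, fderiv ℝ ψ v (Pi.single i 1) *
      fderiv ℝ g (√t • v + √(1 - t) • w) (Pi.single i 1) ∂(gam n) ∂(gam n) := by
  have C0 : 0 ≤ C := by
    have := (norm_nonneg _).trans (g1 0)
    simpa using this
  have gm := hg.continuous.measurable
  have pm := hψ.continuous.measurable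
  have gi : Integrable g (gam n) := integrable_of_bound gm C 1 (by simpa using g0)
  have i1 : Integrable (fun z : (Fin n → ℝ) × (Fin n → ℝ) => ψ z.1 * (g z.1 - g z.2))
      ((gam n).prod (gam n)) := by
    refine integrable_prod_of_bound (by fun_prop) (C * (2 * C)) 2 (fun v w => ?_)
    have hv := norm_nonneg v
    have hw := norm_nonneg w
    have e1 : |ψ v| ≤ C * exp (‖v‖ + ‖w‖) :=
      (b1 v).trans (mul_le_mul_of_nonneg_left (exp_le_exp.2 (by linarith)) C0)
    have e2 : |g v| ≤ C * exp (‖v‖ + ‖w‖) :=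
      (g0 v).trans (mul_le_mul_of_nonneg_left (exp_le_exp.2 (by linarith)) C0)
    have e3 : |g w| ≤ C * exp (‖v‖ + ‖w‖) :=
      (g0 w).trans (mul_le_mul_of_nonneg_left (exp_le_exp.2 (by linarith)) C0)
    have e4 : |g v - g w| ≤ 2 * C * exp (‖v‖ + ‖w‖) := (abs_sub _ _).trans (by linarith)
    refine (mul_bound e1 e4).trans (le_of_eq ?_)
    rw [two_mul (‖v‖ + ‖w‖), exp_add (‖v‖ + ‖w‖)]; ring
  have i2 : Integrable (Function.uncurry fun (z : (Fin n → ℝ) × (Fin n → ℝ)) (t : ℝ) =>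
      ψ z.1 * LL g t z.1 z.2) (((gam n).prod (gam n)).prod (volume.restrict (Ioc (0:ℝ) 1))) := by
    have J : Integrable (fun z : (Fin n → ℝ) × (Fin n → ℝ) =>
        C * C * exp (3 * (‖z.1‖ + ‖z.2‖))) ((gam n).prod (gam n)) :=
      integrable_prod_of_bound (by fun_prop) (C * C) 3 (fun v w => by
        rw [abs_of_nonneg (by positivity)])
    refine (J.mul_prod kap_int).mono' ?_ ?_
    · have : Measurable (fun q : ((Fin n → ℝ) × (Fin n → ℝ)) × ℝ =>
          ψ q.1.1 * LL g q.2 q.1.1 q.1.2) :=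
        (pm.comp (measurable_fst.comp measurable_fst)).mul ((LL_meas g hg).comp measurable_swap)
      exact this.aestronglyMeasurable
    · have : ∀ᵐ q ∂(((gam n).prod (gam n)).prod (volume.restrict (Ioc (0:ℝ) 1))),
          q.2 ∈ Ioc (0:ℝ) 1 :=
        Measure.quasiMeasurePreserving_snd.ae (ae_restrict_mem measurableSet_Ioc)
      filter_upwards [this] with q hq
      have e := mul_bound (b1 q.1.1) (LL_bound g C g1 hq q.1.1 q.1.2)
      refine e.trans ?_
      have k0 : 0 ≤ kap q.2 := by unfold kap; positivity
      have : exp ‖q.1.1‖ * exp (2 * (‖q.1.1‖ + ‖q.1.2‖)) ≤ exp (3 * (‖q.1.1‖ + ‖q.1.2‖)) := by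
        rw [← exp_add]
        exact exp_le_exp.2 (by linarith [norm_nonneg q.1.2])
      calc C * exp ‖q.1.1‖ * (kap q.2 * (C * exp (2 * (‖q.1.1‖ + ‖q.1.2‖))))
          = (C * C * kap q.2) * (exp ‖q.1.1‖ * exp (2 * (‖q.1.1‖ + ‖q.1.2‖))) := by ring
        _ ≤ (C * C * kap q.2) * exp (3 * (‖q.1.1‖ + ‖q.1.2‖)) :=
            mul_le_mul_of_nonneg_left this (by positivity)
        _ = _ := by ring
  calc ∫ v, ψ v * (g v - ∫ w, g w ∂(gam n)) ∂(gam n)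
      = ∫ v, ∫ w, ψ v * (g v - g w) ∂(gam n) ∂(gam n) := by
        congr with v
        rw [integral_const_mul, integral_sub (integrable_const _) gi]
        simp
    _ = ∫ z, ψ z.1 * (g z.1 - g z.2) ∂((gam n).prod (gam n)) := (integral_prod _ i1).symm
    _ = ∫ z, (∫ t in Ioc (0:ℝ) 1, ψ z.1 * LL g t z.1 z.2) ∂((gam n).prod (gam n)) := by
        congr with z
        rw [integral_const_mul, LL_ftc g hg C g1]
    _ = ∫ t in Ioc (0:ℝ) 1, ∫ z, ψ z.1 * LL g t z.1 z.2 ∂((gam n).prod (gam n)) :=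
        integral_integral_swap i2
    _ = _ := by
        rw [← restrict_Ioo_eq_restrict_Ioc]
        exact setIntegral_congr_fun measurableSet_Ioo
          (fun t ht => inner_ibp g hg C g1 ψ hψ g2 b1 b2 ht)

end main

section final
variable {n : ℕ} (g : (Fin n → ℝ) → ℝ)

/-- inner part of Chatterjee's function -/
noncomputable def G1 (t : ℝ) (v : Fin n → ℝ) : ℝ :=
  (1 / (2 * √t)) * ∫ w, ∑ i, fderiv ℝ g v (Pi.single i 1) *
      fderiv ℝ g (√t • v + √(1 - t) • w) (Pi.single i 1) ∂(gam n)

/-- Chatterjee's function w.r.t. the Gaussian measure -/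
noncomputable def S1 (v : Fin n → ℝ) : ℝ := ∫ t in Ioc (0:ℝ) 1, G1 g t v

lemma abs_mean_le {α : Type*} [MeasurableSpace α] (μ : Measure α) [IsProbabilityMeasure μ]
    (X : α → ℝ) (h1 : Integrable X μ) (h2 : Integrable (fun a => X a ^ 2) μ) :
    ∫ a, |X a| ∂μ ≤ √(∫ a, X a ^ 2 ∂μ) := by
  apply Real.le_sqrt_of_sq_le
  set c := ∫ a, |X a| ∂μ with hc
  have e : 0 ≤ ∫ a, (|X a| - c) ^ 2 ∂μ := integral_nonneg fun a => sq_nonneg _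
  have e2 : ∫ a, (|X a| - c) ^ 2 ∂μ = ∫ a, X a ^ 2 ∂μ - 2 * c * c + c ^ 2 := by
    have : ∀ a, (|X a| - c) ^ 2 = X a ^ 2 - 2 * c * |X a| + c ^ 2 := fun a => by
      rw [← sq_abs (X a)]; ring
    simp_rw [this]
    have i1 : Integrable (fun a => 2 * c * |X a|) μ := h1.abs.const_mul _
    rw [integral_add (f := fun a => X a ^ 2 - 2 * c * |X a|) (h2.sub i1) (integrable_const _),
      integral_sub h2 i1, integral_const_mul]
    simp [← hc]
  nlinarith

variable (hg : ContDiff ℝ 2 g) (C : ℝ)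
  (g0 : ∀ x, |g x| ≤ C * exp ‖x‖) (g1 : ∀ x, ‖fderiv ℝ g x‖ ≤ C * exp ‖x‖)

include hg in
lemma G1_sm : StronglyMeasurable (fun q : ℝ × (Fin n → ℝ) => G1 g q.1 q.2) := by
  have c := (hg.continuous_fderiv two_ne_zero)
  have c2 : ∀ i : Fin n, Measurable (fun x => fderiv ℝ g x (Pi.single i 1)) := fun i =>
    (c.clm_apply continuous_const).measurable
  unfold G1
  refine StronglyMeasurable.mul (Measurable.stronglyMeasurable (by fun_prop)) ?_
  refine StronglyMeasurable.integral_prod_right (f := fun (q : ℝ × (Fin n → ℝ)) (w : Fin n → ℝ) =>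
    ∑ i, fderiv ℝ g q.2 (Pi.single i 1) *
      fderiv ℝ g (√q.1 • q.2 + √(1 - q.1) • w) (Pi.single i 1)) ?_
  refine Measurable.stronglyMeasurable ?_
  refine Finset.measurable_sum _ fun i _ => ?_
  refine ((c2 i).comp (by fun_prop)).mul ((c2 i).comp ?_)
  fun_prop

include g1 in
lemma G1_bound : ∃ K : ℝ, 0 ≤ K ∧ ∀ t ∈ Ioc (0:ℝ) 1, ∀ v,
    |G1 g t v| ≤ kap t * (K * exp (2 * ‖v‖)) := by
  have C0 : 0 ≤ C := by
    have := (norm_nonneg _).trans (g1 0)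
    simpa using this
  refine ⟨n * C ^ 2 * ∫ w, exp (1 * ‖w‖) ∂(gam n), ?_, ?_⟩
  · have : 0 ≤ ∫ w, exp (1 * ‖w‖) ∂(gam n) := integral_nonneg fun _ => (exp_pos _).le
    positivity
  intro t ht v
  obtain ⟨h1, h2, h3, h4⟩ := sqrt_bounds ht
  have ap : ∀ (A : (Fin n → ℝ) →L[ℝ] ℝ) (i : Fin n), |A (Pi.single i 1)| ≤ ‖A‖ := fun A i => by
    have := A.le_opNorm (Pi.single i 1)
    rwa [Pi.norm_single, norm_one, mul_one] at this
  unfold G1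
  refine mul_bound ?_ ?_
  · rw [abs_of_nonneg (by positivity), kap]
    have : 0 ≤ 1 / (2 * √(1 - t)) := by positivity
    linarith
  · have hi : Integrable (fun w : Fin n → ℝ => n * C ^ 2 * exp (2 * ‖v‖) * exp (1 * ‖w‖)) (gam n) :=
      (integrable_exp n 1).const_mul _
    rw [← Real.norm_eq_abs]
    refine (norm_integral_le_of_norm_le hi (Filter.Eventually.of_forall fun w => ?_)).trans ?_
    · rw [Real.norm_eq_abs]
      refine (Finset.abs_sum_le_sum_abs _ _).trans ?_
      have hU := norm_U_le h1 h2 h3 h4 v w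
      have : ∀ i ∈ (Finset.univ : Finset (Fin n)), |fderiv ℝ g v (Pi.single i 1) *
          fderiv ℝ g (√t • v + √(1 - t) • w) (Pi.single i 1)|
          ≤ C ^ 2 * exp (2 * ‖v‖) * exp (1 * ‖w‖) := by
        intro i _
        refine (mul_bound ((ap _ i).trans (g1 _)) ((ap _ i).trans (g1 _))).trans ?_
        rw [mul_mul_mul_comm, ← exp_add, ← sq, mul_assoc, ← exp_add]
        exact mul_le_mul_of_nonneg_left (exp_le_exp.2 (by linarith)) (sq_nonneg C)
      refine (Finset.sum_le_sum this).trans (le_of_eq ?_)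
      simp
      ring
    · rw [integral_const_mul]
      refine le_of_eq ?_
      ring

include hg in
lemma S1_sm : StronglyMeasurable (S1 g) := by
  unfold S1
  exact StronglyMeasurable.integral_prod_left (f := fun (t : ℝ) (v : Fin n → ℝ) => G1 g t v)
    (G1_sm g hg)

include g1 in
lemma S1_bound : ∃ K : ℝ, 0 ≤ K ∧ ∀ v, |S1 g v| ≤ K * exp (2 * ‖v‖) := by
  obtain ⟨K, K0, hK⟩ := G1_bound g C g1
  refine ⟨(∫ t in Ioc (0:ℝ) 1, kap t) * K, ?_, fun v => ?_⟩
  · refine mul_nonneg (integral_nonneg fun t => ?_) K0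
    simp only [kap, Pi.zero_apply]
    positivity
  unfold S1
  have hi := kap_int.mul_const (K * exp (2 * ‖v‖))
  rw [← Real.norm_eq_abs]
  refine (norm_integral_le_of_norm_le hi ?_).trans ?_
  · filter_upwards [ae_restrict_mem measurableSet_Ioc] with t ht
    exact hK t ht v
  · rw [integral_mul_const]
    refine le_of_eq ?_
    ring

include hg g0 g1 in
lemma cont_bound (g2 : ∀ x, ‖fderiv ℝ (fderiv ℝ g) x‖ ≤ C * exp ‖x‖)
    (hmean : ∫ v, g v ∂(gam n) = 0)
    (h : ℝ → ℝ) (hc : Continuous h) (h0 : ∀ x, 0 ≤ h x) (h1 : ∀ x, h x ≤ 1) :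
    |∫ v, h (g v) ∂(gam n) - ∫ y, h y ∂(gaussianReal 0 1)|
      ≤ 2 * √(∫ v, (S1 g v - 1) ^ 2 ∂(gam n)) := by
  have C0 : 0 ≤ C := by
    have := (norm_nonneg _).trans (g1 0)
    simpa using this
  obtain ⟨f, hf⟩ := stein_solution h hc h0 h1
  set m := ∫ y, h y ∂(gaussianReal 0 1) with hm
  set f' : ℝ → ℝ := fun x => x * f x + (h x - m) with hf'
  have fd : ∀ x, HasDerivAt f (f' x) x := fun x => (hf x).1
  have f'b : ∀ x, |f' x| ≤ 2 := fun x => (hf x).2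
  have fdiff : Differentiable ℝ f := fun x => (fd x).differentiableAt
  have fcont := fdiff.continuous
  have f'cont : Continuous f' := by fun_prop
  have fC : ContDiff ℝ 1 f := by
    rw [contDiff_one_iff_deriv]
    refine ⟨fdiff, ?_⟩
    have : deriv f = f' := funext fun x => (fd x).deriv
    rwa [this]
  have fb : ∀ x, |f x| ≤ |f 0| + 2 * |x| := by
    intro x
    have := Convex.norm_image_sub_le_of_norm_hasDerivWithin_le (f := f) (f' := f') (C := 2)
      (s := univ) (x := 0) (y := x) (fun y _ => (fd y).hasDerivWithinAt) (fun y _ => f'b y)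
      convex_univ (mem_univ _) (mem_univ _)
    rw [sub_zero, Real.norm_eq_abs, Real.norm_eq_abs] at this
    have e := abs_add_le (f x - f 0) (f 0)
    rw [sub_add_cancel] at e
    linarith
  set C' := |f 0| + 2 * C with hC'
  have CC : C ≤ C' := by have := abs_nonneg (f 0); linarith
  have ex1 : ∀ x : Fin n → ℝ, 1 ≤ exp ‖x‖ := fun x => Real.one_le_exp (norm_nonneg _)
  have up : ∀ x : Fin n → ℝ, C * exp ‖x‖ ≤ C' * exp ‖x‖ :=
    fun x => mul_le_mul_of_nonneg_right CC (exp_pos _).le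
  set ψ : (Fin n → ℝ) → ℝ := fun v => f (g v) with hψdef
  have hψ : ContDiff ℝ 1 ψ := fC.comp (hg.of_le (by norm_num))
  have dψ : ∀ v, fderiv ℝ ψ v = f' (g v) • fderiv ℝ g v := fun v =>
    ((fd (g v)).comp_hasFDerivAt v (hg.differentiable two_ne_zero v).hasFDerivAt).fderiv
  have b1 : ∀ x, |ψ x| ≤ C' * exp ‖x‖ := fun x => by
    refine (fb (g x)).trans ?_
    have e1 := g0 x
    have e2 := mul_le_mul_of_nonneg_left (ex1 x) (abs_nonneg (f 0))
    rw [hC', add_mul]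
    linarith
  have b2 : ∀ x, ‖fderiv ℝ ψ x‖ ≤ C' * exp (2 * ‖x‖) := fun x => by
    rw [dψ, norm_smul]
    have e1 : ‖f' (g x)‖ * ‖fderiv ℝ g x‖ ≤ 2 * (C * exp ‖x‖) :=
      mul_le_mul (f'b _) (g1 x) (norm_nonneg _) zero_le_two
    refine e1.trans ?_
    rw [← mul_assoc]
    have e3 : exp ‖x‖ ≤ exp (2 * ‖x‖) := exp_le_exp.2 (by linarith [norm_nonneg x])
    exact mul_le_mul (by have := abs_nonneg (f 0); linarith) e3 (exp_pos _).le
      (by positivity)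
  have key := key_identity g hg C' (fun x => (g0 x).trans (up x)) (fun x => (g1 x).trans (up x))
    ψ hψ (fun x => (g2 x).trans (up x)) b1 b2
  rw [hmean] at key
  simp only [sub_zero] at key
  have eq1 : ∀ t v, (1 / (2 * √t)) * ∫ w, ∑ i, fderiv ℝ ψ v (Pi.single i 1) *
      fderiv ℝ g (√t • v + √(1 - t) • w) (Pi.single i 1) ∂(gam n) = f' (g v) * G1 g t v := by
    intro t v
    unfold G1
    have e : ∫ w, ∑ i, fderiv ℝ ψ v (Pi.single i 1) *
        fderiv ℝ g (√t • v + √(1 - t) • w) (Pi.single i 1) ∂(gam n) =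
        f' (g v) * ∫ w, ∑ i, fderiv ℝ g v (Pi.single i 1) *
        fderiv ℝ g (√t • v + √(1 - t) • w) (Pi.single i 1) ∂(gam n) := by
      rw [← integral_const_mul (f' (g v))]
      congr 1
      funext w
      rw [Finset.mul_sum]
      refine Finset.sum_congr rfl fun i _ => ?_
      rw [dψ]
      simp [mul_assoc]
    rw [e, mul_left_comm]
  simp_rw [eq1] at key
  have gm := hg.continuous.measurable
  obtain ⟨K, K0, hK⟩ := G1_bound g C g1
  have isw : Integrable (Function.uncurry fun (t : ℝ) (v : Fin n → ℝ) => f' (g v) * G1 g t v)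
      ((volume.restrict (Ioc (0:ℝ) 1)).prod (gam n)) := by
    refine ((Integrable.mul_prod (L := ℝ) kap_int ((integrable_exp n 2).const_mul (2 * K)))).mono'
      ?_ ?_
    · have : StronglyMeasurable (fun q : ℝ × (Fin n → ℝ) => f' (g q.2) * G1 g q.1 q.2) :=
        ((f'cont.measurable.comp gm).comp measurable_snd).stronglyMeasurable.mul (G1_sm g hg)
      exact this.aestronglyMeasurable
    · have : ∀ᵐ q ∂((volume.restrict (Ioc (0:ℝ) 1)).prod (gam n)), q.1 ∈ Ioc (0:ℝ) 1 :=
        Measure.quasiMeasurePreserving_fst.ae (ae_restrict_mem measurableSet_Ioc)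
      filter_upwards [this] with q hq
      refine (mul_bound (f'b _) (hK q.1 hq q.2)).trans (le_of_eq ?_)
      ring
  rw [integral_integral_swap isw] at key
  have eq2 : ∀ v, ∫ t in Ioc (0:ℝ) 1, f' (g v) * G1 g t v = f' (g v) * S1 g v := fun v => by
    rw [integral_const_mul]; rfl
  simp_rw [eq2] at key
  obtain ⟨K2, K20, hK2⟩ := S1_bound g C g1
  have Sm := (S1_sm g hg).measurable
  have ex2 : ∀ x : Fin n → ℝ, 1 ≤ exp (2 * ‖x‖) := fun x =>
    Real.one_le_exp (by positivity)
  have Xb : ∀ v, |S1 g v - 1| ≤ (K2 + 1) * exp (2 * ‖v‖) := fun v => by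
    refine (abs_sub _ _).trans ?_
    rw [abs_one, add_mul, one_mul]
    exact add_le_add (hK2 v) (ex2 v)
  have iX : Integrable (fun v => S1 g v - 1) (gam n) :=
    integrable_of_bound (Sm.sub_const 1) _ _ Xb
  have iX2 : Integrable (fun v => (S1 g v - 1) ^ 2) (gam n) := by
    refine integrable_of_bound ((Sm.sub_const 1).pow_const 2) ((K2 + 1) ^ 2) 4 (fun v => ?_)
    rw [sq]
    refine (mul_bound (Xb v) (Xb v)).trans (le_of_eq ?_)
    rw [mul_mul_mul_comm, ← exp_add, ← sq]
    congr 2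
    ring
  have if' : Integrable (fun v => f' (g v)) (gam n) :=
    (integrable_const (2:ℝ)).mono' (f'cont.measurable.comp gm).aestronglyMeasurable
      (Filter.Eventually.of_forall fun v => f'b _)
  have ihg : Integrable (fun v => h (g v)) (gam n) :=
    (integrable_const (1:ℝ)).mono' (hc.measurable.comp gm).aestronglyMeasurable
      (Filter.Eventually.of_forall fun v => by
        rw [Real.norm_of_nonneg (h0 _)]; exact h1 _)
  have ifS : Integrable (fun v => f' (g v) * (S1 g v - 1)) (gam n) := by
    refine (iX.abs.const_mul 2).mono'
      ((f'cont.measurable.comp gm).mul (Sm.sub_const 1)).aestronglyMeasurable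
      (Filter.Eventually.of_forall fun v => ?_)
    exact mul_bound (f'b _) le_rfl
  have ifg : Integrable (fun v => ψ v * g v) (gam n) := by
    refine integrable_of_bound (hψ.continuous.measurable.mul gm) (C' * C) 2 (fun v => ?_)
    refine (mul_bound (b1 v) (g0 v)).trans (le_of_eq ?_)
    rw [mul_mul_mul_comm, ← exp_add, ← two_mul]
  have fin : ∫ v, h (g v) ∂(gam n) - m = - ∫ v, f' (g v) * (S1 g v - 1) ∂(gam n) := by
    have e1 : ∀ v, f' (g v) * (S1 g v - 1) = f' (g v) * S1 g v - f' (g v) := fun v => by ring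
    have ifS' : Integrable (fun v => f' (g v) * S1 g v) (gam n) := by
      refine (ifS.add if').congr (Filter.Eventually.of_forall fun v => ?_)
      simp only [Pi.add_apply]; ring
    simp_rw [e1]
    rw [integral_sub ifS' if', ← key]
    have e2 : ∀ v, f' (g v) = ψ v * g v + (h (g v) - m) := fun v => by
      simp only [hf', hψdef]; ring
    simp_rw [e2]
    have i5 : Integrable (fun v => h (g v) - m) (gam n) := ihg.sub (integrable_const m)
    rw [integral_add ifg i5, integral_sub ihg (integrable_const m)]
    simp
  rw [fin, abs_neg]
  calc |∫ v, f' (g v) * (S1 g v - 1) ∂(gam n)|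
      ≤ ∫ v, 2 * |S1 g v - 1| ∂(gam n) :=
        by
          rw [← Real.norm_eq_abs]
          exact norm_integral_le_of_norm_le (iX.abs.const_mul 2) (Filter.Eventually.of_forall fun v => mul_bound (f'b _) le_rfl)
    _ = 2 * ∫ v, |S1 g v - 1| ∂(gam n) := integral_const_mul _ _
    _ ≤ _ := mul_le_mul_of_nonneg_left (abs_mean_le _ _ iX iX2) zero_le_two

end final

/-- From continuous test functions to Borel sets. -/
lemma borel_bound (μ ν : Measure ℝ) [IsProbabilityMeasure μ] [IsProbabilityMeasure ν] (b : ℝ)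
    (hb : ∀ h : ℝ → ℝ, Continuous h → (∀ x, 0 ≤ h x) → (∀ x, h x ≤ 1) →
      |∫ x, h x ∂μ - ∫ x, h x ∂ν| ≤ b) (B : Set ℝ) (hB : MeasurableSet B) :
    |μ.real B - ν.real B| ≤ b := by
  have hclosed : ∀ F : Set ℝ, IsClosed F → |μ.real F - ν.real F| ≤ b := by
    intro F hF
    have dpos : ∀ k : ℕ, (0:ℝ) < 1 / ((k:ℝ) + 1) := fun k => by positivity
    have dlim : Filter.Tendsto (fun k : ℕ => 1 / ((k:ℝ) + 1)) Filter.atTop (nhds 0) :=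
      tendsto_one_div_add_atTop_nhds_zero_nat
    have hl := thickenedIndicator_tendsto_indicator_closure dpos dlim F
    rw [hF.closure_eq, tendsto_pi_nhds] at hl
    have L : ∀ (ρ : Measure ℝ) [IsProbabilityMeasure ρ], Filter.Tendsto
        (fun k : ℕ => ∫ x, ((thickenedIndicator (dpos k) F x : NNReal) : ℝ) ∂ρ) Filter.atTop
        (nhds (ρ.real F)) := by
      intro ρ _
      rw [← integral_indicator_one hF.measurableSet]
      refine tendsto_integral_of_dominated_convergence (fun _ => (1:ℝ)) ?_ (integrable_const _) ?_ ?_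
      · intro k
        exact (NNReal.continuous_coe.comp (thickenedIndicator (dpos k) F).continuous).aestronglyMeasurable
      · intro k
        refine Filter.Eventually.of_forall fun x => ?_
        rw [Real.norm_of_nonneg (NNReal.coe_nonneg _)]
        exact_mod_cast thickenedIndicator_le_one (dpos k) F x
      · refine Filter.Eventually.of_forall fun x => ?_
        have := (NNReal.continuous_coe.tendsto _).comp (hl x)
        have e : F.indicator (1 : ℝ → ℝ) x =
            ((F.indicator (fun _ => (1:NNReal)) x : NNReal) : ℝ) := by
          by_cases hx : x ∈ F <;> simp [hx]
        rw [e]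
        exact this
    refine le_of_tendsto ((L μ).sub (L ν)).abs (Filter.Eventually.of_forall fun k => ?_)
    refine hb _ (NNReal.continuous_coe.comp (thickenedIndicator (dpos k) F).continuous)
      (fun x => NNReal.coe_nonneg _) (fun x => ?_)
    exact_mod_cast thickenedIndicator_le_one (dpos k) F x
  refine le_of_forall_pos_le_add fun ε hε => ?_
  obtain ⟨F, hFB, hF, hlt⟩ := hB.exists_isClosed_sdiff_lt (μ := μ + ν) (measure_ne_top _ _)
    (ε := ENNReal.ofReal ε) (by simpa using hε)
  have hr : (μ + ν).real (B \ F) < ε := by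
    rw [Measure.real]
    exact (ENNReal.toReal_lt_of_lt_ofReal hlt)
  rw [measureReal_add_apply] at hr
  have e1 := measureReal_sdiff (μ := μ) hFB hF.measurableSet
  have e2 := measureReal_sdiff (μ := ν) hFB hF.measurableSet
  have p1 := measureReal_nonneg (μ := μ) (s := B \ F)
  have p2 := measureReal_nonneg (μ := ν) (s := B \ F)
  have e3 := abs_le.1 (hclosed F hF)
  exact abs_le.2 ⟨by linarith [e3.1], by linarith [e3.2]⟩

end ChatTV

/-- Chatterjee's total variation bound: for `Y = g(V)` with `V` a standard Gaussian vector,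
`g` smooth with subexponential growth of `g` and all its derivatives, `E[g(V)] = 0`,
`E[g(V)²] = 1`, and the law of `Y` absolutely continuous, one has, with `Z ∼ N(0,1)`,
`|P(Y ∈ B) − P(Z ∈ B)| ≤ 2 (E[(S(V) − 1)²])^{1/2}` for every Borel set `B ⊆ ℝ`. -/
theorem chatterjee_total_variation_bound
    {Ω : Type*} [MeasurableSpace Ω] (P : Measure Ω) [IsProbabilityMeasure P]
    {n : ℕ} (V : Ω → (Fin n → ℝ)) (hV : Measurable V)
    (hlaw : P.map V = Measure.pi (fun _ : Fin n => gaussianReal 0 1))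
    (g : (Fin n → ℝ) → ℝ) (hg : ContDiff ℝ (⊤ : ℕ∞) g)
    (hgrowth : ∀ k : ℕ, ∀ ε > (0 : ℝ), ∃ c : ℝ, ∀ x,
      ‖iteratedFDeriv ℝ k g x‖ ≤ c * Real.exp (ε * ‖x‖))
    (hmean : ∫ ω, g (V ω) ∂P = 0)
    (hvar : ∫ ω, (g (V ω)) ^ 2 ∂P = 1)
    (habs : P.map (fun ω => g (V ω)) ≪ (volume : Measure ℝ)) :
    ∀ B : Set ℝ, MeasurableSet B →
      |(P {ω | g (V ω) ∈ B}).toReal - ((gaussianReal 0 1) B).toReal|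
        ≤ 2 * Real.sqrt (∫ ω, (chatterjeeS P V g (V ω) - 1) ^ 2 ∂P) := by
  intro B hB
  have hg2 : ContDiff ℝ 2 g := contDiff_infty.1 hg 2
  obtain ⟨c0, h0⟩ := hgrowth 0 1 one_pos
  obtain ⟨c1, h1⟩ := hgrowth 1 1 one_pos
  obtain ⟨c2, h2⟩ := hgrowth 2 1 one_pos
  set C := max c0 (max c1 c2) with hC
  have l0 : c0 ≤ C := le_max_left _ _
  have l1 : c1 ≤ C := (le_max_left _ _).trans (le_max_right _ _)
  have l2 : c2 ≤ C := (le_max_right _ _).trans (le_max_right _ _)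
  have g0 : ∀ x, |g x| ≤ C * exp ‖x‖ := fun x => by
    have := h0 x
    rw [norm_iteratedFDeriv_zero, one_mul] at this
    exact this.trans (mul_le_mul_of_nonneg_right l0 (exp_pos _).le)
  have g1 : ∀ x, ‖fderiv ℝ g x‖ ≤ C * exp ‖x‖ := fun x => by
    have := h1 x
    rw [norm_iteratedFDeriv_one, one_mul] at this
    exact this.trans (mul_le_mul_of_nonneg_right l1 (exp_pos _).le)
  have g2 : ∀ x, ‖fderiv ℝ (fderiv ℝ g) x‖ ≤ C * exp ‖x‖ := fun x => by
    have := h2 x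
    rw [← norm_iteratedFDeriv_fderiv (n := 1), norm_iteratedFDeriv_one, one_mul] at this
    exact this.trans (mul_le_mul_of_nonneg_right l2 (exp_pos _).le)
  have gc := hg2.continuous
  have gm := gc.measurable
  have tr : ∀ F : (Fin n → ℝ) → ℝ, Measurable F → ∫ ω, F (V ω) ∂P = ∫ v, F v ∂(ChatTV.gam n) := by
    intro F hF
    rw [ChatTV.gam, ← hlaw, integral_map hV.aemeasurable hF.aestronglyMeasurable]
  have hS : ∀ v, chatterjeeS P V g v = ChatTV.S1 g v := by
    intro v
    unfold chatterjeeS ChatTV.S1 ChatTV.G1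
    congr 1
    funext t
    congr 1
    refine tr (fun w => ∑ i, fderiv ℝ g v (Pi.single i 1) *
      fderiv ℝ g (√t • v + √(1 - t) • w) (Pi.single i 1)) ?_
    have c := hg2.continuous_fderiv two_ne_zero
    exact Continuous.measurable (by fun_prop)
  have Sm := (ChatTV.S1_sm g hg2).measurable
  simp_rw [hS]
  rw [tr (fun v => (ChatTV.S1 g v - 1) ^ 2) ((Sm.sub_const 1).pow_const 2)]
  have hY : Measurable (fun ω => g (V ω)) := gm.comp hV
  have := Measure.isProbabilityMeasure_map (μ := P) hY.aemeasurable
  have hm : ∫ v, g v ∂(ChatTV.gam n) = 0 := by rw [← tr g gm]; exact hmean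
  have main := ChatTV.borel_bound (P.map (fun ω => g (V ω))) (gaussianReal 0 1) _
    (fun h hc h0 h1 => by
      rw [integral_map hY.aemeasurable hc.aestronglyMeasurable,
        tr (fun v => h (g v)) (hc.measurable.comp gm)]
      exact ChatTV.cont_bound g hg2 C g0 g1 g2 hm h hc h0 h1) B hB
  rw [Measure.real, Measure.real, Measure.map_apply hY hB] at main
  exact main
end

section
/- Let −∞ ≤ a < 0 < b ≤ +∞ and let τ : ℝ → ℝ be a continuous nonnegative function such that τ(x) > 0 if, and only if, x ∈ (a,b), and such that ∫₀^b (y/τ(y)) dy = +∞ and ∫_a^0 (y/τ(y)) dy = −∞. Then there exists a unique (up to Lebesgue-null sets) probability density p on ℝ whose support coincides with (a,b) and such that ∫ y p(y) dy = 0 and τ(x) = (∫_x^{+∞} y p(y) dy)/p(x) for every x ∈ (a,b); explicitly, p(x) = C^{-1} exp(−∫₀^x (y/τ(y)) dy)/τ(x) for x ∈ (a,b) and p(x) = 0 otherwise, where C = ∫_a^b exp(−∫₀^x (y/τ(y)) dy)/τ(x) dx (with the convention ∫₀^x = −∫_x^0 for x < 0). -/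
open MeasureTheory Real Set
open Filter Topology

lemma aux_ii (τ : ℝ → ℝ) (hτc : Continuous τ) (S : Set ℝ) (hS : S.OrdConnected)
    (hpos : ∀ x ∈ S, 0 < τ x) {u v : ℝ} (hu : u ∈ S) (hv : v ∈ S) :
    IntervalIntegrable (fun y => y / τ y) volume u v := by
  apply ContinuousOn.intervalIntegrable
  intro y hy
  exact (continuousAt_id.div hτc.continuousAt (hpos y (hS.uIcc_subset hu hv hy)).ne').continuousWithinAt

lemma aux_deriv (τ : ℝ → ℝ) (hτc : Continuous τ) (S : Set ℝ) (hS : S.OrdConnected)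
    (h0 : (0:ℝ) ∈ S) (hpos : ∀ x ∈ S, 0 < τ x) {x : ℝ} (hx : x ∈ S) :
    HasDerivAt (fun x => exp (-∫ y in (0:ℝ)..x, y / τ y))
      (-(x * (exp (-∫ y in (0:ℝ)..x, y / τ y) / τ x))) x := by
  have hm : Measurable (fun y => y / τ y) := measurable_id.div hτc.measurable
  have := (intervalIntegral.integral_hasDerivAt_right (aux_ii τ hτc S hS hpos h0 hx)
    (hm.stronglyMeasurable.stronglyMeasurableAtFilter)
    (continuousAt_id.div hτc.continuousAt (hpos x hx).ne')).neg.exp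
  refine (this.congr_deriv ?_)
  change exp (-∫ y in (0:ℝ)..x, y / τ y) * -(x / τ x) = _
  ring

lemma aux_cont (τ : ℝ → ℝ) (hτc : Continuous τ) (S : Set ℝ) (hS : S.OrdConnected)
    (h0 : (0:ℝ) ∈ S) (hpos : ∀ x ∈ S, 0 < τ x) :
    ContinuousOn (fun x => exp (-∫ y in (0:ℝ)..x, y / τ y) / τ x) S := by
  intro x hx
  exact ((aux_deriv τ hτc S hS h0 hpos hx).continuousAt.div hτc.continuousAt
    (hpos x hx).ne').continuousWithinAt

lemma aux_ii2 (τ : ℝ → ℝ) (hτc : Continuous τ) (S : Set ℝ) (hS : S.OrdConnected)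
    (h0 : (0:ℝ) ∈ S) (hpos : ∀ x ∈ S, 0 < τ x) {u v : ℝ} (hu : u ∈ S) (hv : v ∈ S) :
    IntervalIntegrable (fun x => x * (exp (-∫ y in (0:ℝ)..x, y / τ y) / τ x)) volume u v := by
  apply ContinuousOn.intervalIntegrable
  exact continuousOn_id.mul ((aux_cont τ hτc S hS h0 hpos).mono (hS.uIcc_subset hu hv))

lemma aux_ftc (τ : ℝ → ℝ) (hτc : Continuous τ) (S : Set ℝ) (hS : S.OrdConnected)
    (h0 : (0:ℝ) ∈ S) (hpos : ∀ x ∈ S, 0 < τ x) {u v : ℝ} (hu : u ∈ S) (hv : v ∈ S) :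
    ∫ x in u..v, x * (exp (-∫ y in (0:ℝ)..x, y / τ y) / τ x)
      = exp (-∫ y in (0:ℝ)..u, y / τ y) - exp (-∫ y in (0:ℝ)..v, y / τ y) := by
  have := intervalIntegral.integral_eq_sub_of_hasDerivAt
    (fun x hx => aux_deriv τ hτc S hS h0 hpos (hS.uIcc_subset hu hv hx))
    (aux_ii2 τ hτc S hS h0 hpos hu hv).neg
  rw [intervalIntegral.integral_neg] at this
  linarith

lemma aux_side (b : EReal) (hb : 0 < b) (τ : ℝ → ℝ) (hτc : Continuous τ)
    (hpos : ∀ x : ℝ, 0 ≤ x → (x : EReal) < b → 0 < τ x)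
    (hdiv : ∫⁻ y in {y : ℝ | 0 < y ∧ (y : EReal) < b}, ENNReal.ofReal (y / τ y) = ⊤) :
    IntegrableOn (fun x => x * (exp (-∫ y in (0:ℝ)..x, y / τ y) / τ x))
      {y : ℝ | 0 < y ∧ (y : EReal) < b} ∧
    ∫ x in {y : ℝ | 0 < y ∧ (y : EReal) < b},
      x * (exp (-∫ y in (0:ℝ)..x, y / τ y) / τ x) = 1 := by
  set T : Set ℝ := {y : ℝ | 0 < y ∧ (y : EReal) < b} with hT
  have hTm : MeasurableSet T :=
    measurableSet_Ioi.inter (measurable_coe_real_ereal measurableSet_Iio)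
  let S : Set ℝ := {y : ℝ | 0 ≤ y ∧ (y : EReal) < b}
  have hS : S.OrdConnected := ⟨fun x hx y hy z hz =>
    ⟨hx.1.trans hz.1, lt_of_le_of_lt (EReal.coe_le_coe_iff.2 hz.2) hy.2⟩⟩
  have h0 : (0:ℝ) ∈ S := ⟨le_rfl, by simpa using hb⟩
  have hSpos : ∀ x ∈ S, 0 < τ x := fun x hx => hpos x hx.1 hx.2
  obtain ⟨s, -, hs, hlim⟩ := exists_seq_strictMono_tendsto' hb
  let c : ℕ → ℝ := fun n => (s n).toReal
  have hc : ∀ n, ((c n : ℝ) : EReal) = s n := fun n =>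
    EReal.coe_toReal ((hs n).2.trans_le le_top).ne (bot_le.trans_lt (hs n).1).ne'
  have hc0 : ∀ n, 0 < c n := fun n => by
    have := (hs n).1; rw [← hc n] at this; exact_mod_cast this
  have hcS : ∀ n, c n ∈ S := fun n => ⟨(hc0 n).le, by rw [hc n]; exact (hs n).2⟩
  have hcov : AECover (volume.restrict T) atTop (fun n => Iic (c n)) := by
    refine ⟨?_, fun n => measurableSet_Iic⟩
    filter_upwards [ae_restrict_mem hTm] with x hx
    filter_upwards [hlim.eventually (lt_mem_nhds hx.2)] with n hn
    rw [← hc n] at hn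
    exact (EReal.coe_lt_coe_iff.1 hn).le
  have hres : ∀ n, (volume.restrict T).restrict (Iic (c n)) = volume.restrict (Ioc 0 (c n)) := by
    intro n
    rw [Measure.restrict_restrict measurableSet_Iic]
    congr 1
    ext y
    constructor
    · rintro ⟨h1, h2⟩; exact ⟨h2.1, h1⟩
    · rintro ⟨h1, h2⟩
      exact ⟨h2, h1, lt_of_le_of_lt (EReal.coe_le_coe_iff.2 h2) (hcS n).2⟩
  have hm : Measurable (fun y => y / τ y) := measurable_id.div hτc.measurable
  have hIocS : ∀ n, ∀ y ∈ Ioc 0 (c n), y ∈ S := fun n y hy => hS.out h0 (hcS n) ⟨hy.1.le, hy.2⟩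
  have hF : Tendsto (fun n => ENNReal.ofReal (∫ y in (0:ℝ)..c n, y / τ y)) atTop (𝓝 ⊤) := by
    have := hcov.lintegral_tendsto_of_countably_generated (f := fun y => ENNReal.ofReal (y / τ y))
      hm.ennreal_ofReal.aemeasurable
    rw [hdiv] at this
    refine this.congr fun n => ?_
    rw [hres, intervalIntegral.integral_of_le (hc0 n).le, ofReal_integral_eq_lintegral_ofReal]
    · exact (aux_ii τ hτc S hS hSpos h0 (hcS n)).1
    · filter_upwards [ae_restrict_mem measurableSet_Ioc] with y hy
      exact div_nonneg hy.1.le (hSpos y (hIocS n y hy)).le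
  have hF' : Tendsto (fun n => ∫ y in (0:ℝ)..c n, y / τ y) atTop atTop :=
    ENNReal.tendsto_ofReal_nhds_top.1 hF
  have hI : Tendsto (fun n => ∫ x in Iic (c n), x * (exp (-∫ y in (0:ℝ)..x, y / τ y) / τ x)
      ∂(volume.restrict T)) atTop (𝓝 1) := by
    have h1 : Tendsto (fun n => 1 - exp (-∫ y in (0:ℝ)..c n, y / τ y)) atTop (𝓝 (1 - 0)) :=
      tendsto_const_nhds.sub (Real.tendsto_exp_neg_atTop_nhds_zero.comp hF')
    rw [sub_zero] at h1
    refine h1.congr fun n => ?_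
    rw [hres, ← intervalIntegral.integral_of_le (hc0 n).le, aux_ftc τ hτc S hS h0 hSpos h0 (hcS n)]
    simp
  have hnn : ∀ᵐ x ∂(volume.restrict T), 0 ≤ x * (exp (-∫ y in (0:ℝ)..x, y / τ y) / τ x) := by
    filter_upwards [ae_restrict_mem hTm] with y hy
    exact mul_nonneg hy.1.le (div_nonneg (exp_pos _).le (hpos y hy.1.le hy.2).le)
  have hint : IntegrableOn (fun x => x * (exp (-∫ y in (0:ℝ)..x, y / τ y) / τ x)) T := by
    refine hcov.integrable_of_integral_tendsto_of_nonneg_ae 1 (fun n => ?_) hnn hI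
    rw [IntegrableOn, hres]
    exact (aux_ii2 τ hτc S hS h0 hSpos h0 (hcS n)).1
  exact ⟨hint, hcov.integral_eq_of_tendsto 1 hint hI⟩

lemma aux_side_neg (a : EReal) (ha : a < 0) (τ : ℝ → ℝ) (hτc : Continuous τ)
    (hpos : ∀ x : ℝ, x ≤ 0 → a < (x : EReal) → 0 < τ x)
    (hdiv : ∫⁻ y in {y : ℝ | a < (y : EReal) ∧ y < 0}, ENNReal.ofReal (-y / τ y) = ⊤) :
    IntegrableOn (fun x => x * (exp (-∫ y in (0:ℝ)..x, y / τ y) / τ x))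
      {y : ℝ | a < (y : EReal) ∧ y < 0} ∧
    ∫ x in {y : ℝ | a < (y : EReal) ∧ y < 0},
      x * (exp (-∫ y in (0:ℝ)..x, y / τ y) / τ x) = -1 := by
  set T : Set ℝ := {y : ℝ | a < (y : EReal) ∧ y < 0} with hT
  have hTm : MeasurableSet T :=
    (measurable_coe_real_ereal measurableSet_Ioi).inter measurableSet_Iio
  have hpre : {y : ℝ | 0 < y ∧ (y : EReal) < -a} = (fun y : ℝ => -y) ⁻¹' T := by
    ext y
    simp only [hT, mem_ofPred_eq, mem_preimage, EReal.coe_neg, neg_lt_zero]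
    rw [EReal.lt_neg_comm, and_comm]
  have hmp : MeasurePreserving (fun y : ℝ => -y) volume volume :=
    Measure.measurePreserving_neg volume
  have hme : MeasurableEmbedding (fun y : ℝ => -y) :=
    (Homeomorph.neg ℝ).isClosedEmbedding.measurableEmbedding
  have hm : Measurable (fun y => ENNReal.ofReal (-y / τ y)) :=
    (measurable_neg.div hτc.measurable).ennreal_ofReal
  have hb : 0 < -a := by rw [EReal.lt_neg_comm]; simpa using ha
  have h1 := aux_side (-a) hb (fun x => τ (-x)) (hτc.comp continuous_neg)
    (fun x hx hxa => hpos (-x) (by linarith) (by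
      rw [EReal.coe_neg]; rwa [EReal.lt_neg_comm] at hxa)) (by
      rw [hpre, ← hdiv, ← hmp.setLIntegral_comp_preimage hTm hm]
      simp)
  have hE : ∀ x : ℝ, ∫ y in (0:ℝ)..x, y / τ (-y) = ∫ y in (0:ℝ)..(-x), y / τ y := by
    intro x
    have := intervalIntegral.integral_comp_neg (a := 0) (b := x) (fun y => -y / τ y)
    simp only [neg_neg, neg_zero] at this
    rw [this, intervalIntegral.integral_symm, ← intervalIntegral.integral_neg]
    congr 1
    ext y
    ring
  rw [hpre] at h1
  simp only [hE] at h1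
  obtain ⟨h1, h2⟩ := h1
  have e1 := hmp.integrableOn_comp_preimage hme (s := T)
    (f := fun x => -(x * (exp (-∫ y in (0:ℝ)..x, y / τ y) / τ x)))
  have e2 := hmp.setIntegral_preimage_emb hme
    (fun x => -(x * (exp (-∫ y in (0:ℝ)..x, y / τ y) / τ x))) T
  simp only [Function.comp_def, neg_mul, neg_neg] at e1 e2
  rw [h2, integral_neg] at e2
  refine ⟨?_, by linarith⟩
  simpa using (e1.1 h1).neg

/-- Stein's characterization of densities by the function `τ`: given `−∞ ≤ a < 0 < b ≤ +∞` and
a continuous nonnegative `τ` with `τ > 0` exactly on `(a,b)`, satisfying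
`∫₀^b y/τ(y) dy = +∞` and `∫_a^0 y/τ(y) dy = −∞`, there is a unique (up to null sets)
probability density `p` with support `(a,b)`, zero mean, and
`τ(x) = (∫_x^∞ y p(y) dy)/p(x)` on `(a,b)`; it is given by the explicit formula
`p(x) = C⁻¹ exp(−∫₀^x y/τ(y) dy)/τ(x)` on `(a,b)`. -/
theorem stein_density_characterization
    (a b : EReal) (ha : a < 0) (hb : 0 < b) (τ : ℝ → ℝ)
    (hτc : Continuous τ) (hτ0 : ∀ x, 0 ≤ τ x)
    (hτpos : ∀ x : ℝ, 0 < τ x ↔ (a < (x : EReal) ∧ (x : EReal) < b))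
    (hdiv_pos : ∫⁻ y in {y : ℝ | 0 < y ∧ (y : EReal) < b},
      ENNReal.ofReal (y / τ y) = ⊤)
    (hdiv_neg : ∫⁻ y in {y : ℝ | a < (y : EReal) ∧ y < 0},
      ENNReal.ofReal (-y / τ y) = ⊤) :
    ∃ p : ℝ → ℝ,
      (∀ x : ℝ, p x =
        if a < (x : EReal) ∧ (x : EReal) < b then
          (Real.exp (-∫ y in (0 : ℝ)..x, y / τ y) / τ x) /
            (∫ z in {z : ℝ | a < (z : EReal) ∧ (z : EReal) < b},
              Real.exp (-∫ y in (0 : ℝ)..z, y / τ y) / τ z)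
        else 0) ∧
      (∀ x : ℝ, 0 < p x ↔ (a < (x : EReal) ∧ (x : EReal) < b)) ∧
      (∫ x, p x) = 1 ∧
      Integrable (fun y => y * p y) volume ∧
      (∫ y, y * p y) = 0 ∧
      (∀ x : ℝ, a < (x : EReal) → (x : EReal) < b →
        τ x = (∫ y in Set.Ioi x, y * p y) / p x) ∧
      (∀ q : ℝ → ℝ, Measurable q → (∀ x, 0 ≤ q x) →
        (∀ x : ℝ, 0 < q x ↔ (a < (x : EReal) ∧ (x : EReal) < b)) →
        (∫ x, q x) = 1 →
        Integrable (fun y => y * q y) volume →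
        (∫ y, y * q y) = 0 →
        (∀ x : ℝ, a < (x : EReal) → (x : EReal) < b →
          τ x = (∫ y in Set.Ioi x, y * q y) / q x) →
        q =ᵐ[volume] p) := by
  set S : Set ℝ := {z : ℝ | a < (z : EReal) ∧ (z : EReal) < b} with hSdef
  have hS : S.OrdConnected := ⟨fun x hx y hy z hz =>
    ⟨lt_of_lt_of_le hx.1 (EReal.coe_le_coe_iff.2 hz.1),
      lt_of_le_of_lt (EReal.coe_le_coe_iff.2 hz.2) hy.2⟩⟩
  have h0 : (0:ℝ) ∈ S := ⟨by simpa using ha, by simpa using hb⟩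
  have hSpos : ∀ x ∈ S, 0 < τ x := fun x hx => (hτpos x).2 hx
  have hSz : ∀ x, x ∉ S → τ x = 0 := fun x hx =>
    le_antisymm (not_lt.1 fun h => hx ((hτpos x).1 h)) (hτ0 x)
  have hSo : IsOpen S := by
    have : S = τ ⁻¹' Ioi 0 := by ext x; exact (hτpos x).symm
    rw [this]; exact isOpen_Ioi.preimage hτc
  set E : ℝ → ℝ := fun x => exp (-∫ y in (0:ℝ)..x, y / τ y) with hE
  have hEpos : ∀ x, 0 < E x := fun x => exp_pos _
  have hE0 : E 0 = 1 := by simp [hE]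
  set r : ℝ → ℝ := fun x => E x / τ x with hr
  have hrz : ∀ x, x ∉ S → r x = 0 := fun x hx => by simp [hr, hSz x hx]
  have hrpos : ∀ x ∈ S, 0 < r x := fun x hx => div_pos (hEpos x) (hSpos x hx)
  have hrnn : ∀ x, 0 ≤ r x := fun x => div_nonneg (hEpos x).le (hτ0 x)
  have hrc : ContinuousOn r S := aux_cont τ hτc S hS h0 hSpos
  have hrm : AEStronglyMeasurable r volume := by
    have h := (hrc.aestronglyMeasurable (μ := volume) hSo.measurableSet)
    have h2 := (aestronglyMeasurable_indicator_iff hSo.measurableSet).2 h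
    have h3 : S.indicator r = r := indicator_eq_self.2 fun x hx => by
      by_contra h; exact hx (hrz x h)
    rwa [h3] at h2
  have hftc : ∀ x ∈ S, ∫ y in x..0, y * r y = E x - E 0 := fun x hx =>
    aux_ftc τ hτc S hS h0 hSpos hx h0
  obtain ⟨hiP, hvP⟩ := aux_side b hb τ hτc (fun x hx hxb => (hτpos x).2
    ⟨ha.trans_le (by exact_mod_cast hx), hxb⟩) hdiv_pos
  obtain ⟨hiN, hvN⟩ := aux_side_neg a ha τ hτc (fun x hx hxb => (hτpos x).2
    ⟨hxb, lt_of_le_of_lt (by exact_mod_cast hx) hb⟩) hdiv_neg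
  change IntegrableOn (fun x => x * r x) _ at hiP
  change IntegrableOn (fun x => x * r x) _ at hiN
  change ∫ x in _, x * r x = 1 at hvP
  change ∫ x in _, x * r x = -1 at hvN
  have hzP : ∀ x ∈ Ioi (0:ℝ) \ {y : ℝ | 0 < y ∧ (y : EReal) < b}, x * r x = 0 := by
    rintro x ⟨hx, hx'⟩
    rw [hrz x (fun h => hx' ⟨hx, h.2⟩), mul_zero]
  have hzN : ∀ x ∈ Iic (0:ℝ) \ {y : ℝ | a < (y : EReal) ∧ y < 0}, x * r x = 0 := by
    rintro x ⟨hx, hx'⟩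
    rcases eq_or_lt_of_le (show x ≤ 0 from hx) with h | h
    · rw [h, zero_mul]
    · rw [hrz x (fun h' => hx' ⟨h'.1, h⟩), mul_zero]
  have hiP' : IntegrableOn (fun x => x * r x) (Ioi 0) :=
    hiP.of_forall_sdiff_eq_zero measurableSet_Ioi hzP
  have hiN' : IntegrableOn (fun x => x * r x) (Iic 0) :=
    hiN.of_forall_sdiff_eq_zero measurableSet_Iic hzN
  have hvP' : ∫ x in Ioi 0, x * r x = 1 := by
    rw [← hvP]
    exact setIntegral_eq_of_subset_of_forall_sdiff_eq_zero measurableSet_Ioi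
      (fun x hx => hx.1) hzP
  have hvN' : ∫ x in Iic 0, x * r x = -1 := by
    rw [← hvN]
    exact setIntegral_eq_of_subset_of_forall_sdiff_eq_zero measurableSet_Iic
      (fun x hx => hx.2.le) hzN
  have hi : Integrable (fun x => x * r x) volume := by
    rw [← integrableOn_univ, ← Iic_union_Ioi (a := (0:ℝ))]
    exact hiN'.union hiP'
  have hv : ∫ x, x * r x = 0 := by
    have := integral_add_compl (measurableSet_Iic (a := (0:ℝ))) hi
    rw [compl_Iic, hvN', hvP'] at this
    linarith
  have htail : ∀ x ∈ S, ∫ y in Ioi x, y * r y = E x := by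
    intro x hx
    have := intervalIntegral.integral_Ioi_sub_Ioi' (a := x) (b := 0)
      hi.integrableOn hi.integrableOn
    rw [hvP', hftc x hx, hE0] at this
    linarith
  obtain ⟨δ, hδ, hδS⟩ := Metric.isOpen_iff.1 hSo 0 h0
  have hIcc : Icc (-(δ/2)) (δ/2) ⊆ S := fun x hx => hδS (by
    rw [Metric.mem_ball, Real.dist_eq, sub_zero, abs_lt]
    constructor <;> linarith [hx.1, hx.2])
  have hri : Integrable r volume := by
    have hA : Integrable ((Icc (-(δ/2)) (δ/2)).indicator r) volume :=
      ((hrc.mono hIcc).integrableOn_compact isCompact_Icc).integrable_indicator measurableSet_Icc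
    refine (hA.add (hi.norm.const_mul (2/δ))).mono' hrm (Filter.Eventually.of_forall fun x => ?_)
    simp only [Pi.add_apply, norm_mul, Real.norm_eq_abs, abs_of_nonneg (hrnn x)]
    by_cases hx : x ∈ Icc (-(δ/2)) (δ/2)
    · rw [indicator_of_mem hx]
      have : 0 ≤ 2/δ * (|x| * r x) := by have := hrnn x; positivity
      linarith
    · rw [indicator_of_notMem hx, zero_add, ← mul_assoc]
      have h1 : δ/2 < |x| := by
        by_contra h
        exact hx (abs_le.1 (not_lt.1 h))
      have h2 : 1 ≤ 2/δ * |x| := by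
        rw [div_mul_eq_mul_div, le_div_iff₀ hδ]; linarith
      nlinarith [hrnn x]
  have hCeq : ∫ z in S, r z = ∫ z, r z :=
    setIntegral_eq_integral_of_forall_compl_eq_zero fun x hx => hrz x hx
  have hCpos : 0 < ∫ z in S, r z := by
    rw [hCeq, integral_pos_iff_support_of_nonneg hrnn hri]
    have : Function.support r = S := by
      ext x
      constructor
      · intro hx; by_contra h; exact hx (hrz x h)
      · intro hx; exact (hrpos x hx).ne'
    rw [this]
    exact hSo.measure_pos volume ⟨0, h0⟩
  set C : ℝ := ∫ z in S, r z with hC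
  have hp1 : ∀ x, (0 < r x / C ↔ (a < (x : EReal) ∧ (x : EReal) < b)) := by
    intro x
    constructor
    · intro h; by_contra h'
      rw [hrz x h'] at h; simp at h
    · intro h; exact div_pos (hrpos x h) hCpos
  have hmulC : ∀ x, x * (r x / C) = x * r x / C := fun x => by ring
  refine ⟨fun x => r x / C, ?_, hp1, ?_, ?_, ?_, ?_, ?_⟩
  · intro x
    split_ifs with h
    · rfl
    · simp [hrz x h]
  · rw [integral_div, ← hCeq, div_self hCpos.ne']
  · simp only [hmulC]; exact hi.div_const C
  · simp only [hmulC]; rw [integral_div, hv, zero_div]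
  · intro x hxa hxb
    simp only [hmulC]
    rw [integral_div, htail x ⟨hxa, hxb⟩]
    have h1 := (hEpos x).ne'
    have h2 := (hSpos x ⟨hxa, hxb⟩).ne'
    have h3 := hCpos.ne'
    simp only [hr]
    field_simp
  · intro q hqm hq0 hqpos hq1 hqi hqz hqτ
    set G : ℝ → ℝ := fun x => ∫ y in Ioi x, y * q y with hG
    have hGq : ∀ x ∈ S, G x = τ x * q x := by
      intro x hx
      have := (hqpos x).2 hx
      rw [hqτ x hx.1 hx.2, div_mul_cancel₀ _ this.ne']
    have hGint : ∀ x, G x = G 0 - ∫ y in (0:ℝ)..x, y * q y := by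
      intro x
      have := intervalIntegral.integral_Ioi_sub_Ioi' (a := 0) (b := x)
        hqi.integrableOn hqi.integrableOn
      simp only [hG]; linarith
    have hGc : Continuous G := by
      have : G = fun x => G 0 - ∫ y in (0:ℝ)..x, y * q y := funext hGint
      rw [this]
      exact continuous_const.sub (intervalIntegral.continuous_primitive
        (fun u v => hqi.intervalIntegrable) 0)
    have hqc : ∀ x ∈ S, ContinuousAt q x := by
      intro x hx
      have h1 : ContinuousAt (fun x => G x / τ x) x :=
        hGc.continuousAt.div hτc.continuousAt (hSpos x hx).ne'
      refine h1.congr ?_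
      filter_upwards [hSo.mem_nhds hx] with y hy
      rw [hGq y hy, mul_div_cancel_left₀ _ (hSpos y hy).ne']
    have hGd : ∀ x ∈ S, HasDerivAt G (-(x * q x)) x := by
      intro x hx
      have : G = fun x => G 0 - ∫ y in (0:ℝ)..x, y * q y := funext hGint
      rw [this]
      exact (intervalIntegral.integral_hasDerivAt_right (hqi.intervalIntegrable)
        ((measurable_id.mul hqm).stronglyMeasurable.stronglyMeasurableAtFilter)
        (continuousAt_id.mul (hqc x hx))).const_sub (G 0)
    have hquot : ∀ x ∈ S, HasDerivAt (fun x => G x / E x) 0 x := by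
      intro x hx
      have := (hGd x hx).div (aux_deriv τ hτc S hS h0 hSpos hx) (hEpos x).ne'
      refine this.congr_deriv ?_
      rw [div_eq_zero_iff]
      left
      change -(x * q x) * E x - G x * (-(x * (E x / τ x))) = 0
      rw [hGq x hx]
      have := (hSpos x hx).ne'
      field_simp
      ring
    have hGE : ∀ x ∈ S, G x = G 0 * E x := by
      intro x hx
      have h1 : G x / E x = G 0 / E 0 := by
        refine hSo.is_const_of_deriv_eq_zero (f := fun x => G x / E x) hS.isPreconnected
          (fun y hy => (hquot y hy).differentiableAt.differentiableWithinAt)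
          (fun y hy => (hquot y hy).deriv) hx h0
      rw [hE0, div_one, div_eq_iff (hEpos x).ne'] at h1
      exact h1
    have hqr : ∀ x, q x = G 0 * r x := by
      intro x
      by_cases hx : x ∈ S
      · have h1 := hGq x hx
        rw [hGE x hx] at h1
        have := (hSpos x hx).ne'
        simp only [hr]
        field_simp
        linarith
      · rw [hrz x hx, mul_zero]
        exact le_antisymm (not_lt.1 fun h => hx ((hqpos x).1 h)) (hq0 x)
    have hG0 : G 0 * C = 1 := by
      rw [← hq1, hCeq, ← integral_const_mul]
      simp only [hqr]
    refine Filter.Eventually.of_forall fun x => ?_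
    show q x = r x / C
    rw [hqr x, eq_div_iff hCpos.ne']
    linear_combination r x * hG0
end
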